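/- The two-sided ideal I_f of H_n generated by f decomposes as I_f = ⊕_{(α,Z) ∈ Π_n^+} X^α f_Z H^fn_n; equivalently, {X^α f_Z : (α,Z) ∈ Π_n^+} is a basis of I_f as a free right H^fn_n-module. -/

import Mathlib

set_option maxHeartbeats 1000000

namespace HC

/-- Generators of the affine Hecke–Clifford superalgebra `H_n`. -/
inductive Gen (n : ℕ) : Type
  | X : Fin n → Gen n
  | Xinv : Fin n → Gen n
  | C : Fin n → Gen n
  | T : Fin (n - 1) → Gen n

/-- The node `i` of `Fin n`, for `i : Fin (n-1)` (1-based: the node `i`). -/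
def lo {n : ℕ} (i : Fin (n - 1)) : Fin n :=
  ⟨i.val, by have := i.isLt; omega⟩

/-- The node `i+1` of `Fin n`, for `i : Fin (n-1)`. -/
def hi {n : ℕ} (i : Fin (n - 1)) : Fin n :=
  ⟨i.val + 1, by have := i.isLt; omega⟩

variable (F : Type) [Field F]

/-- The free algebra on the generators. -/
abbrev FA (n : ℕ) : Type := FreeAlgebra F (Gen n)

noncomputable def fx {n : ℕ} (i : Fin n) : FA F n := FreeAlgebra.ι F (Gen.X i)
noncomputable def fxinv {n : ℕ} (i : Fin n) : FA F n := FreeAlgebra.ι F (Gen.Xinv i)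
noncomputable def fc {n : ℕ} (i : Fin n) : FA F n := FreeAlgebra.ι F (Gen.C i)
noncomputable def ft {n : ℕ} (i : Fin (n - 1)) : FA F n := FreeAlgebra.ι F (Gen.T i)

/-- The defining relations of the affine Hecke–Clifford superalgebra, with parameter
`q` and `ξ = q - q⁻¹`. -/
inductive Rel (q : F) (n : ℕ) : FA F n → FA F n → Prop
  | XXinv (i : Fin n) : Rel q n (fx F i * fxinv F i) 1
  | XinvX (i : Fin n) : Rel q n (fxinv F i * fx F i) 1
  | XX (i j : Fin n) : Rel q n (fx F i * fx F j) (fx F j * fx F i)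
  | XiXi (i j : Fin n) : Rel q n (fxinv F i * fxinv F j) (fxinv F j * fxinv F i)
  | XXi (i j : Fin n) (h : i ≠ j) : Rel q n (fx F i * fxinv F j) (fxinv F j * fx F i)
  | CC (i : Fin n) : Rel q n (fc F i * fc F i) 1
  | Canti (i j : Fin n) (h : i ≠ j) : Rel q n (fc F i * fc F j) (-(fc F j * fc F i))
  | CX (i : Fin n) : Rel q n (fc F i * fx F i) (fxinv F i * fc F i)
  | CXi (i : Fin n) : Rel q n (fc F i * fxinv F i) (fx F i * fc F i)
  | CXo (i j : Fin n) (h : i ≠ j) : Rel q n (fc F i * fx F j) (fx F j * fc F i)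
  | CXio (i j : Fin n) (h : i ≠ j) : Rel q n (fc F i * fxinv F j) (fxinv F j * fc F i)
  | Tquad (i : Fin (n - 1)) : Rel q n (ft F i * ft F i) ((q - q⁻¹) • ft F i + 1)
  | Tbraid (i j : Fin (n - 1)) (h : (j : ℕ) = (i : ℕ) + 1) :
      Rel q n (ft F i * ft F j * ft F i) (ft F j * ft F i * ft F j)
  | TTfar (i j : Fin (n - 1)) (h : (i : ℕ) + 1 < (j : ℕ)) :
      Rel q n (ft F i * ft F j) (ft F j * ft F i)
  | TC (i : Fin (n - 1)) : Rel q n (ft F i * fc F (lo i)) (fc F (hi i) * ft F i)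
  | TCo (i : Fin (n - 1)) (j : Fin n) (h1 : j ≠ lo i) (h2 : j ≠ hi i) :
      Rel q n (ft F i * fc F j) (fc F j * ft F i)
  | TXo (i : Fin (n - 1)) (j : Fin n) (h1 : j ≠ lo i) (h2 : j ≠ hi i) :
      Rel q n (ft F i * fx F j) (fx F j * ft F i)
  | TXio (i : Fin (n - 1)) (j : Fin n) (h1 : j ≠ lo i) (h2 : j ≠ hi i) :
      Rel q n (ft F i * fxinv F j) (fxinv F j * ft F i)
  | cross (i : Fin (n - 1)) :
      Rel q n ((ft F i + (q - q⁻¹) • (fc F (lo i) * fc F (hi i))) * fx F (lo i) * ft F i)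
        (fx F (hi i))

/-- The affine Hecke–Clifford superalgebra `H_n` over `F` with parameter `q`. -/
abbrev H (q : F) (n : ℕ) : Type := RingQuot (Rel F q n)

noncomputable def X (q : F) {n : ℕ} (i : Fin n) : H F q n :=
  RingQuot.mkAlgHom F (Rel F q n) (fx F i)

noncomputable def Xinv (q : F) {n : ℕ} (i : Fin n) : H F q n :=
  RingQuot.mkAlgHom F (Rel F q n) (fxinv F i)

noncomputable def C (q : F) {n : ℕ} (i : Fin n) : H F q n :=
  RingQuot.mkAlgHom F (Rel F q n) (fc F i)

noncomputable def T (q : F) {n : ℕ} (i : Fin (n - 1)) : H F q n :=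
  RingQuot.mkAlgHom F (Rel F q n) (ft F i)

/-- `q` is either a primitive root of unity of odd order (including `q = 1`)
or not a root of unity at all (and `q ≠ 0`). -/
def GoodParam (q : F) : Prop :=
  q ≠ 0 ∧ ((∃ m : ℕ, Odd m ∧ IsPrimitiveRoot q m) ∨ ∀ m : ℕ, 0 < m → q ^ m ≠ 1)

/-- `X_i^a` for an integer exponent `a ∈ ℤ`. -/
noncomputable def XZ (q : F) {n : ℕ} (i : Fin n) (a : ℤ) : H F q n :=
  if 0 ≤ a then X F q i ^ a.toNat else Xinv F q i ^ (-a).toNat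

/-- The monomial `X^α = X_1^{α_1} ⋯ X_n^{α_n}` for `α ∈ ℤ^n`. -/
noncomputable def Xmon (q : F) {n : ℕ} (α : Fin n → ℤ) : H F q n :=
  ((List.finRange n).map fun i => XZ F q i (α i)).prod

/-- The monomial `C^β = C_1^{β_1} ⋯ C_n^{β_n}` for `β ∈ {0,1}^n`. -/
noncomputable def Cmon (q : F) {n : ℕ} (β : Fin n → Bool) : H F q n :=
  ((List.finRange n).map fun i => if β i then C F q i else 1).prod

/-- The basic transposition `s_i = (i, i+1)` of `S_n`. -/
def s {n : ℕ} (i : Fin (n - 1)) : Equiv.Perm (Fin n) := Equiv.swap (lo i) (hi i)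

/-- The Coxeter length (number of inversions) of a permutation of `Fin n`. -/
def len {n : ℕ} (w : Equiv.Perm (Fin n)) : ℕ :=
  ((Finset.univ : Finset (Fin n × Fin n)).filter fun p => p.1 < p.2 ∧ w p.2 < w p.1).card

/-- `Tw` is the family of standard basis elements `T_w`, `w ∈ S_n`: it satisfies
`T_1 = 1`, `T_{s_i} = T_i`, and `T_{s_i w} = T_i T_w` whenever `ℓ(s_i w) = ℓ(w) + 1`.
These conditions determine the family uniquely. -/
def IsTFam (q : F) {n : ℕ} (Tw : Equiv.Perm (Fin n) → H F q n) : Prop :=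
  Tw 1 = 1 ∧ (∀ i : Fin (n - 1), Tw (s i) = T F q i) ∧
    ∀ (i : Fin (n - 1)) (w : Equiv.Perm (Fin n)),
      len (s i * w) = len w + 1 → Tw (s i * w) = T F q i * Tw w

/-- `h` is the quantum characteristic of `q`:  the smallest positive integer with
`q^{1-h} + q^{3-h} + ⋯ + q^{h-1} = 0`. -/
def qcharEq (q : F) (h : ℕ) : Prop :=
  0 < h ∧ (∑ k ∈ Finset.range h, q ^ (1 - (h : ℤ) + 2 * (k : ℤ))) = 0 ∧
    ∀ h' : ℕ, 0 < h' → h' < h →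
      (∑ k ∈ Finset.range h', q ^ (1 - (h' : ℤ) + 2 * (k : ℤ))) ≠ 0

/-- `i ∈ I = {0, 1, …, ℓ}` where `ℓ = (h-1)/2` (no condition if the quantum
characteristic is infinite). -/
def memI (q : F) (i : ℕ) : Prop := ∀ h : ℕ, qcharEq F q h → 2 * i + 1 ≤ h

/-- `q(i) = 2(q^{2i+1} + q^{-2i-1})/(q + q⁻¹)`. -/
noncomputable def qres (q : F) (i : ℕ) : F :=
  2 * (q ^ (2 * i + 1) + q⁻¹ ^ (2 * i + 1)) / (q + q⁻¹)

/-- Index of the block containing position `k` (0-based), for a composition given as a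
list of parts. -/
def blk : List ℕ → ℕ → ℕ
  | [], _ => 0
  | a :: rest, k => if k < a then 0 else blk rest (k - a) + 1

/-- Membership in the Young subgroup `S_μ ⊆ S_n`. -/
def InYoung {n : ℕ} (μ : List ℕ) (w : Equiv.Perm (Fin n)) : Prop :=
  ∀ k : Fin n, blk μ (w k).val = blk μ k.val

/-- `μ` is a composition of `n`. -/
def IsComposition (μ : List ℕ) (n : ℕ) : Prop := (∀ a ∈ μ, 0 < a) ∧ μ.sum = n

/-- The parabolic subalgebra generated by all `X_i^{±1}`, `C_i`, and the `T_j` with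
`j` in a set `J` of admissible indices. -/
def parabolicJ (q : F) {n : ℕ} (J : Set (Fin (n - 1))) : Subalgebra F (H F q n) :=
  Algebra.adjoin F
    ((Set.range fun i : Fin n => X F q i) ∪ (Set.range fun i : Fin n => Xinv F q i) ∪
      (Set.range fun i : Fin n => C F q i) ∪ {h | ∃ j ∈ J, h = T F q j})

/-- The parabolic subalgebra `H_μ` for a composition `μ`. -/
def parabolicC (q : F) {n : ℕ} (μ : List ℕ) : Subalgebra F (H F q n) :=
  parabolicJ F q {j | InYoung μ (s j)}

/-- The classical parabolic subalgebra `H^cl_μ`, generated by the `T_j` with `s_j ∈ S_μ`. -/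
def clparC (q : F) {n : ℕ} (μ : List ℕ) : Subalgebra F (H F q n) :=
  Algebra.adjoin F {h | ∃ j : Fin (n - 1), InYoung μ (s j) ∧ h = T F q j}

/-- The finite Hecke–Clifford subalgebra `H^fn_n`, generated by all `C_i` and `T_j`. -/
def Hfin (q : F) (n : ℕ) : Subalgebra F (H F q n) :=
  Algebra.adjoin F
    ((Set.range fun i : Fin n => C F q i) ∪ {h | ∃ j : Fin (n - 1), h = T F q j})

/-- `x` is a minimal length `(S_μ, S_ν)`-double coset representative. -/
def IsMinDC {n : ℕ} (μ ν : List ℕ) (x : Equiv.Perm (Fin n)) : Prop :=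
  ∀ u v : Equiv.Perm (Fin n), InYoung μ u → InYoung ν v → len x ≤ len (u * x * v)

/-- `w ∈ S_μ x S_ν`. -/
def InDC {n : ℕ} (μ ν : List ℕ) (x w : Equiv.Perm (Fin n)) : Prop :=
  ∃ u v : Equiv.Perm (Fin n), InYoung μ u ∧ InYoung ν v ∧ w = u * x * v

/-- A covering step in the Bruhat order: multiplication by a reflection increasing length. -/
def BruhatStep {n : ℕ} (v w : Equiv.Perm (Fin n)) : Prop :=
  ∃ a b : Fin n, a ≠ b ∧ w = Equiv.swap a b * v ∧ len v < len w

/-- The Bruhat order on `S_n`. -/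
def BruhatLE {n : ℕ} : Equiv.Perm (Fin n) → Equiv.Perm (Fin n) → Prop :=
  Relation.ReflTransGen BruhatStep

/-- The space of `A`-equivariant linear maps between two representations of the
`F`-algebra `A`. -/
def eqvHoms {A : Type} [Ring A] [Algebra F A] {M N : Type}
    [AddCommGroup M] [Module F M] [AddCommGroup N] [Module F N]
    (ρM : A →ₐ[F] Module.End F M) (ρN : A →ₐ[F] Module.End F N) :
    Submodule F (M →ₗ[F] N) where
  carrier := {f | ∀ (x : A) (m : M), f (ρM x m) = ρN x (f m)}
  add_mem' := by
    intro f g hf hg x m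
    simp only [LinearMap.add_apply, hf x m, hg x m, map_add]
  zero_mem' := by
    intro x m
    simp only [LinearMap.zero_apply, map_zero]
  smul_mem' := by
    intro c f hf x m
    simp only [LinearMap.smul_apply, hf x m, map_smul]

/-- `(E, ρE, ι)` is the module induced along the algebra morphism `φ : B →ₐ A` from
the `B`-representation `(M, ρ)`, i.e. `E = A ⊗_B M`, characterized by its universal
property. -/
def IsInducedAlong {A B : Type} [Ring A] [Ring B] [Algebra F A] [Algebra F B]
    (φ : B →ₐ[F] A) {M : Type} [AddCommGroup M] [Module F M]
    (ρ : B →ₐ[F] Module.End F M) {E : Type} [AddCommGroup E] [Module F E]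
    (ρE : A →ₐ[F] Module.End F E) (ι : M →ₗ[F] E) : Prop :=
  (∀ (b : B) (m : M), ι (ρ b m) = ρE (φ b) (ι m)) ∧
    ∀ (P : Type) [AddCommGroup P] [Module F P],
      ∀ (ρP : A →ₐ[F] Module.End F P) (f : M →ₗ[F] P),
        (∀ (b : B) (m : M), f (ρ b m) = ρP (φ b) (f m)) →
        ∃! g : E →ₗ[F] P,
          (∀ (x : A) (e : E), g (ρE x e) = ρP x (g e)) ∧ ∀ m : M, g (ι m) = f m

/-- `δ` is the grading automorphism of the superalgebra `H_n`
(identity on even generators, `-1` on the odd generators `C_i`). -/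
def IsGradingAut (q : F) {n : ℕ} (δ : H F q n →ₐ[F] H F q n) : Prop :=
  (∀ i : Fin n, δ (X F q i) = X F q i) ∧ (∀ i : Fin n, δ (Xinv F q i) = Xinv F q i) ∧
    (∀ i : Fin n, δ (C F q i) = -C F q i) ∧ ∀ i : Fin (n - 1), δ (T F q i) = T F q i

/-- `τ` is the antiautomorphism of `H_n` with `τ(T_i) = T_i + ξ C_i C_{i+1}`,
`τ(C_j) = C_j`, `τ(X_j) = X_j`. -/
def IsTauAntiAut (q : F) {n : ℕ} (τ : H F q n →ₗ[F] H F q n) : Prop :=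
  Function.Bijective τ ∧ (∀ a b : H F q n, τ (a * b) = τ b * τ a) ∧ τ 1 = 1 ∧
    (∀ i : Fin (n - 1),
      τ (T F q i) = T F q i + (q - q⁻¹) • (C F q (lo i) * C F q (hi i))) ∧
    (∀ j : Fin n, τ (C F q j) = C F q j) ∧ (∀ j : Fin n, τ (X F q j) = X F q j) ∧
    ∀ j : Fin n, τ (Xinv F q j) = Xinv F q j

/-- `ρ'` is the representation of the subalgebra `B` obtained from the
`H_ν`-representation `ρν` by twisting with the isomorphism `φ_{x⁻¹}`
(determined by `X_i ↦ X_{x⁻¹ i}`, `C_i ↦ C_{x⁻¹ i}`, `T_w ↦ T_{x⁻¹ w x}`). -/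
def IsTwistedRep (q : F) {n : ℕ} (ν : List ℕ) (x : Equiv.Perm (Fin n))
    (B : Subalgebra F (H F q n)) {M : Type} [AddCommGroup M] [Module F M]
    (ρν : ↥(parabolicC F q (n := n) ν) →ₐ[F] Module.End F M)
    (ρ' : ↥B →ₐ[F] Module.End F M) : Prop :=
  (∀ (i : Fin n) (a : ↥B) (b : ↥(parabolicC F q (n := n) ν)),
      (a : H F q n) = X F q i → (b : H F q n) = X F q (x⁻¹ i) → ρ' a = ρν b) ∧
  (∀ (i : Fin n) (a : ↥B) (b : ↥(parabolicC F q (n := n) ν)),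
      (a : H F q n) = Xinv F q i → (b : H F q n) = Xinv F q (x⁻¹ i) → ρ' a = ρν b) ∧
  (∀ (i : Fin n) (a : ↥B) (b : ↥(parabolicC F q (n := n) ν)),
      (a : H F q n) = C F q i → (b : H F q n) = C F q (x⁻¹ i) → ρ' a = ρν b) ∧
  ∀ (j j' : Fin (n - 1)) (a : ↥B) (b : ↥(parabolicC F q (n := n) ν)),
      lo j' = x⁻¹ (lo j) → (a : H F q n) = T F q j → (b : H F q n) = T F q j' → ρ' a = ρν b

/-- The element `f = a_d X_1^d + ⋯ + a_1 X_1 + a_0` of `H_n`. -/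
noncomputable def felem (q : F) (n d : ℕ) (aa : ℕ → F) : H F q n :=
  if h : 0 < n then ∑ i ∈ Finset.range (d + 1), aa i • X F q (⟨0, h⟩ : Fin n) ^ i else 0

/-- The conditions on the coefficients of `f`: degree `d ≥ 1`, monic, and
`a_i = a_0 a_{d-i}`. -/
def GoodPoly (d : ℕ) (aa : ℕ → F) : Prop :=
  1 ≤ d ∧ aa d = 1 ∧ (∀ i ≤ d, aa i = aa 0 * aa (d - i)) ∧ ∀ i : ℕ, d < i → aa i = 0

/-- The relation generating the two-sided ideal `I_f` of `H_n`. -/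
inductive CycRel (q : F) (n d : ℕ) (aa : ℕ → F) : H F q n → H F q n → Prop
  | rel : CycRel q n d aa (felem F q n d aa) 0

/-- The cyclotomic Hecke–Clifford superalgebra `H_n^f = H_n / I_f`. -/
abbrev Hf (q : F) (n d : ℕ) (aa : ℕ → F) : Type := RingQuot (CycRel F q n d aa)

/-- The canonical quotient map `H_n → H_n^f`. -/
noncomputable def cyc (q : F) (n d : ℕ) (aa : ℕ → F) : H F q n →ₐ[F] Hf F q n d aa :=
  RingQuot.mkAlgHom F (CycRel F q n d aa)

noncomputable def Xf (q : F) (n d : ℕ) (aa : ℕ → F) (i : Fin n) : Hf F q n d aa :=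
  cyc F q n d aa (X F q i)
noncomputable def Xinvf (q : F) (n d : ℕ) (aa : ℕ → F) (i : Fin n) : Hf F q n d aa :=
  cyc F q n d aa (Xinv F q i)
noncomputable def Cf (q : F) (n d : ℕ) (aa : ℕ → F) (i : Fin n) : Hf F q n d aa :=
  cyc F q n d aa (C F q i)
noncomputable def Tf (q : F) (n d : ℕ) (aa : ℕ → F) (i : Fin (n - 1)) : Hf F q n d aa :=
  cyc F q n d aa (T F q i)

/-- `e` is the canonical embedding `H_k^f → H_N^f` (shifting all indices by `sh`;
for `sh = 0` this is the standard identification of `H_k^f` with a subalgebra of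
`H_N^f`). -/
def IsCycEmb (q : F) (k N d : ℕ) (aa : ℕ → F) (sh : ℕ)
    (e : Hf F q k d aa →ₐ[F] Hf F q N d aa) : Prop :=
  (∀ (i : Fin k) (i' : Fin N), (i' : ℕ) = sh + (i : ℕ) →
      e (Xf F q k d aa i) = Xf F q N d aa i') ∧
  (∀ (i : Fin k) (i' : Fin N), (i' : ℕ) = sh + (i : ℕ) →
      e (Xinvf F q k d aa i) = Xinvf F q N d aa i') ∧
  (∀ (i : Fin k) (i' : Fin N), (i' : ℕ) = sh + (i : ℕ) →
      e (Cf F q k d aa i) = Cf F q N d aa i') ∧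
  ∀ (j : Fin (k - 1)) (j' : Fin (N - 1)), (j' : ℕ) = sh + (j : ℕ) →
      e (Tf F q k d aa j) = Tf F q N d aa j'

/-- `δ` is the grading automorphism of the superalgebra `H_n^f`. -/
def IsCycGrading (q : F) (n d : ℕ) (aa : ℕ → F)
    (δ : Hf F q n d aa →ₐ[F] Hf F q n d aa) : Prop :=
  (∀ i : Fin n, δ (Xf F q n d aa i) = Xf F q n d aa i) ∧
  (∀ i : Fin n, δ (Xinvf F q n d aa i) = Xinvf F q n d aa i) ∧
  (∀ i : Fin n, δ (Cf F q n d aa i) = -Cf F q n d aa i) ∧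
  ∀ j : Fin (n - 1), δ (Tf F q n d aa j) = Tf F q n d aa j

/-- The elements `f_1 = f`, `f_{i+1} = (T_i + ξ C_i C_{i+1}) f_i T_i` of `H_n`
(0-based indexing: `fseq k = f_{k+1}`). -/
noncomputable def fseq (q : F) (n d : ℕ) (aa : ℕ → F) : ℕ → H F q n
  | 0 => felem F q n d aa
  | k + 1 =>
    if h : k < n - 1 then
      (T F q (⟨k, h⟩ : Fin (n - 1)) +
          (q - q⁻¹) • (C F q (lo (⟨k, h⟩ : Fin (n - 1))) *
            C F q (hi (⟨k, h⟩ : Fin (n - 1))))) *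
        fseq q n d aa k * T F q (⟨k, h⟩ : Fin (n - 1))
    else 0

/-- `f_Z = f_{z_1} ⋯ f_{z_u}` for `Z = {z_1 < ⋯ < z_u} ⊆ {1,…,n}` (0-based). -/
noncomputable def fZ (q : F) (n d : ℕ) (aa : ℕ → F) (Z : Finset (Fin n)) : H F q n :=
  ((Z.sort (· ≤ ·)).map fun z => fseq F q n d aa (z : ℕ)).prod

/-- The two-sided ideal `I_f` of `H_n` generated by `f` (the `F`-span of all
`u · f · v`). -/
def Ifideal (F : Type) [Field F] (q : F) (n d : ℕ) (aa : ℕ → F) :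
    Submodule F (H F q n) :=
  Submodule.span F {h | ∃ u v : H F q n, h = u * felem F q n d aa * v}

/-- The index set `Π_n^+`: pairs `(α, Z) ∈ Π_n` with `Z ≠ ∅`. -/
def PiIdxPlus (n d : ℕ) : Type :=
  {p : (Fin n → ℤ) × Finset (Fin n) //
    (∀ i : Fin n, i ∉ p.2 → 0 ≤ p.1 i ∧ p.1 i < d) ∧ p.2 ≠ ∅}

/-!
The action of `H_n` on the module `F[X^{±1}] ⊗ V` induced from an `H^fn_n`-module `V` shows that the
`X^α` are free over `H^fn_n` in `H_n`. In it the operator `T_i` is determined by its restriction to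
`1 ⊗ V` and the cross relation, and each remaining relation of `H_n` holds because its defect
intertwines the `X_j` up to inversion and permutation and vanishes on `1 ⊗ V`.

Moving powers of `X_i` through `T_i + ξ C_i C_{i+1}` gives
`f_i = X_i^d + a_0 u_i + (terms X_i^a p b with 0 < a < d)`, where `u_i` is a unit of `H^fn_i`, `p` a
Laurent polynomial in `X_1, …, X_{i-1}` and `b ∈ H^fn_i`. The ideal `I_f` is spanned by the
`p f_i b` with `p` a Laurent polynomial and `b ∈ H^fn_n`. As both extreme coefficients of `f_i` are
invertible, the exponents of `X_i` can be reduced from both sides to the window `[0, d)` at the cost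
of multiples of `f_i`, which proves spanning by induction on the number of strands.

For independence, the monomial of `X^α f_Z` whose exponents are farthest from the window (compared
colexicographically) has exponent `α_i + d` at those `i ∈ Z` with `α_i ≥ 0` and `α_i` elsewhere.
Distinct `(α, Z) ∈ Π_n` have distinct leading exponents, and the leading coefficients are units.
-/

section RankTwo

variable {R A : Type*} [CommRing R] [Ring A] [Algebra R A]

theorem mul_mul_of_mul_eq {a b c : A} (h : a * b = c) (z : A) : a * (b * z) = c * z := by
  rw [← mul_assoc, h]

theorem commute_mul_of_mul_eq_neg {a b c : A} (hb : a * b = -(b * a)) (hc : a * c = -(c * a)) :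
    Commute a (b * c) := by
  rw [Commute, SemiconjBy, ← mul_assoc, hb, neg_mul, mul_assoc, hc, mul_neg, neg_neg, mul_assoc]

theorem semiconjBy_commutator {S T X Y Z : A} (hS : S * X = Y * S + Z) (hX : Commute T X)
    (hY : Commute T Y) (hZ : Commute T Z) : SemiconjBy (S * T - T * S) X Y := by
  rw [SemiconjBy, sub_mul, mul_assoc, hX.eq, ← mul_assoc, hS, mul_assoc, hS, mul_add, add_mul,
    mul_mul_of_mul_eq hY, hZ.eq, mul_sub, mul_assoc, mul_assoc, add_sub_add_right_eq_sub]

theorem commute_lo_defect {X Y : Aˣ} {C D Z : A} (hX : Commute Z X) (hY : Commute Z Y)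
    (hCD : Commute Z (C * D)) (ξ : R) : Commute Z (-(ξ • (Y + ↑X⁻¹ * (C * D)))) :=
  ((hY.add_right (hX.units_inv_right.mul_right hCD)).smul_right ξ).neg_right

theorem commute_hi_defect {Y : Aˣ} {C D Z : A} (hY : Commute Z Y) (hCD : Commute Z (C * D))
    (ξ : R) : Commute Z (ξ • (Y - ↑Y⁻¹ * (C * D))) :=
  (hY.sub_right (hY.units_inv_right.mul_right hCD)).smul_right ξ

/-- The compatibility of the defects `a = T X - Y T` and `b = T Y - X T` prescribed by the cross
relation with `X Y = Y X`. -/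
theorem defect_compat {X Y : Aˣ} {C D : A} (xy : Commute (X : A) Y) (cx : SemiconjBy C X ↑X⁻¹)
    (cy : Commute C Y) (dx : Commute D X) (dy : SemiconjBy D Y ↑Y⁻¹) (ξ : R) :
    Y * (ξ • (Y - ↑Y⁻¹ * (C * D))) + -(ξ • (Y + ↑X⁻¹ * (C * D))) * Y =
      X * -(ξ • (Y + ↑X⁻¹ * (C * D))) + ξ • (Y - ↑Y⁻¹ * (C * D)) * X := by
  simp only [neg_mul, mul_neg, smul_mul_assoc, sub_mul, add_mul, mul_assoc, mul_smul_comm,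
    mul_sub, mul_add, Units.mul_inv_cancel_left, dx.eq, dy.eq, mul_mul_of_mul_eq cx,
    mul_mul_of_mul_eq cy.units_inv_right,
    mul_mul_of_mul_eq xy.units_inv_left.units_inv_right, xy.eq]
  module

theorem mul_sub_eq_one_of_quadratic {t : A} {ξ : R} (ht : t * t = ξ • t + 1) :
    t * (t - ξ • 1) = 1 := by
  rw [mul_sub, ht, mul_smul_comm, mul_one, add_sub_cancel_left]

theorem sub_mul_eq_one_of_quadratic {t : A} {ξ : R} (ht : t * t = ξ • t + 1) :
    (t - ξ • 1) * t = 1 := by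
  rw [sub_mul, ht, smul_mul_assoc, one_mul, add_sub_cancel_left]

theorem isUnit_of_quadratic {t : A} {ξ : R} (ht : t * t = ξ • t + 1) : IsUnit t :=
  ⟨⟨t, _, mul_sub_eq_one_of_quadratic ht, sub_mul_eq_one_of_quadratic ht⟩, rfl⟩

theorem mul_eq_of_quadratic {S C D : A} {ξ : R} (hS : S * S = ξ • S + 1)
    (hSC : SemiconjBy S C D) : S * D = C * S + ξ • (D - C) := by
  have hSD : S * (D * S) = ξ • (D * S) + C := by
    rw [← hSC.eq, ← mul_assoc, hS, add_mul, one_mul, smul_mul_assoc]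
  have hinv := mul_sub_eq_one_of_quadratic hS
  calc S * D = S * (D * S) * (S - ξ • 1) := by rw [mul_assoc, mul_assoc, hinv, mul_one]
    _ = ξ • (D * (S * (S - ξ • 1))) + C * (S - ξ • 1) := by
      rw [hSD, add_mul, smul_mul_assoc, mul_assoc]
    _ = C * S + ξ • (D - C) := by
      rw [hinv, mul_one, mul_sub, mul_smul_comm, mul_one]
      module

/-- The relations between `X = X_i`, `Y = X_{i+1}`, `C = C_i`, `D = C_{i+1}` and `T = T_i` that
do not involve products of `T` with `T`, `C` or `D`; they are what the construction of the
induced module starts from. The last two are the cross relation, solved for `T X` and `T Y`. -/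
structure CrossRel (ξ : R) (X Y : Aˣ) (C D T : A) : Prop where
  cc : C * C = 1
  dd : D * D = 1
  dc : D * C = -(C * D)
  cx : SemiconjBy C X ↑X⁻¹
  cy : Commute C Y
  dx : Commute D X
  dy : SemiconjBy D Y ↑Y⁻¹
  tx : T * X = Y * T - ξ • (Y + ↑X⁻¹ * (C * D))
  ty : T * Y = X * T + ξ • (Y - ↑Y⁻¹ * (C * D))

namespace CrossRel

variable {ξ : R} {X Y : Aˣ} {C D T : A} (h : CrossRel ξ X Y C D T)
include h

theorem c_mul_xinv : C * ↑X⁻¹ = X * C := h.cx.units_inv_right.eq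
theorem d_mul_yinv : D * ↑Y⁻¹ = Y * D := h.dy.units_inv_right.eq

theorem t_mul_xinv : T * ↑X⁻¹ = ↑Y⁻¹ * T + ξ • (↑X⁻¹ : A) + ξ • (↑Y⁻¹ * (C * D)) := by
  rw [Units.mul_inv_eq_iff_eq_mul, ← Units.mul_right_inj Y, ← mul_assoc]
  simp only [mul_add, add_mul, mul_smul_comm, smul_mul_assoc, mul_assoc, Units.inv_mul,
    Units.mul_inv_cancel_left, mul_one, h.tx, h.dx.eq, mul_mul_of_mul_eq h.cx]
  module

theorem t_mul_yinv : T * ↑Y⁻¹ = ↑X⁻¹ * T - ξ • (↑X⁻¹ : A) + ξ • (↑X⁻¹ * (C * D)) := by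
  rw [Units.mul_inv_eq_iff_eq_mul, ← Units.mul_right_inj X, ← mul_assoc]
  simp only [mul_add, add_mul, mul_smul_comm, smul_mul_assoc, mul_assoc,
    Units.mul_inv_cancel_left, h.ty, h.dy.eq, mul_sub, sub_mul,
    mul_mul_of_mul_eq h.cy.units_inv_right]
  module

theorem c_mul_d_mul_c : C * (D * C) = -D := by
  rw [h.dc, mul_neg, mul_mul_of_mul_eq h.cc, one_mul]

theorem d_mul_c_mul_d : D * (C * D) = -C := by
  rw [← mul_assoc, h.dc, neg_mul, mul_assoc, h.dd, mul_one]

theorem semiconjBy_tc_x : SemiconjBy (T * C - D * T) (X : A) ↑Y⁻¹ := by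
  rw [SemiconjBy]
  simp only [sub_mul, mul_sub, mul_assoc, h.cx.eq, mul_mul_of_mul_eq h.t_mul_xinv, h.tx, add_mul,
    smul_add, mul_add, mul_smul_comm, smul_mul_assoc, h.c_mul_d_mul_c, h.d_mul_c_mul_d, mul_neg,
    mul_mul_of_mul_eq h.dy, h.dy.eq, mul_mul_of_mul_eq h.dx.units_inv_right]
  module

theorem semiconjBy_tc_y : SemiconjBy (T * C - D * T) (Y : A) X := by
  rw [SemiconjBy]
  simp only [sub_mul, mul_sub, mul_assoc, h.cy.eq, mul_mul_of_mul_eq h.ty, h.ty, add_mul, mul_add,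
    mul_smul_comm, smul_mul_assoc, h.c_mul_d_mul_c, h.d_mul_c_mul_d, mul_neg,
    mul_mul_of_mul_eq h.dx, h.dy.eq, mul_mul_of_mul_eq h.d_mul_yinv]
  module

theorem semiconjBy_td_x : SemiconjBy (T * D - C * T - ξ • (D - C)) (X : A) Y := by
  rw [SemiconjBy]
  simp only [sub_mul, mul_sub, mul_assoc, h.dx.eq, mul_mul_of_mul_eq h.tx, h.tx,
    smul_add, add_mul, mul_add, mul_smul_comm, smul_mul_assoc, h.dd, mul_one, h.cx.eq, h.cy.eq,
    mul_mul_of_mul_eq h.cy, mul_mul_of_mul_eq h.c_mul_xinv, mul_mul_of_mul_eq h.cc, one_mul,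
    smul_sub]
  module

theorem semiconjBy_td_y : SemiconjBy (T * D - C * T - ξ • (D - C)) (Y : A) ↑X⁻¹ := by
  rw [SemiconjBy]
  simp only [sub_mul, mul_sub, mul_assoc, h.dy.eq, mul_mul_of_mul_eq h.t_mul_yinv, h.ty, add_mul,
    mul_add, mul_smul_comm, smul_mul_assoc, h.dd, mul_one, h.cy.eq, mul_mul_of_mul_eq h.cx,
    mul_mul_of_mul_eq h.cy.units_inv_right, mul_mul_of_mul_eq h.cc, one_mul, smul_sub]
  module

theorem commute_tquad_x (tc : SemiconjBy T C D) (td : T * D = C * T + ξ • (D - C)) :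
    Commute (T * T - ξ • T - 1) (X : A) := by
  rw [Commute, SemiconjBy]
  simp only [sub_mul, mul_sub, mul_assoc, h.tx, h.ty, add_mul, mul_add, mul_mul_of_mul_eq h.ty,
    mul_smul_comm, smul_mul_assoc, mul_one, one_mul, smul_sub, mul_mul_of_mul_eq h.t_mul_xinv,
    mul_mul_of_mul_eq tc, td, h.dd, h.dc, mul_neg, mul_mul_of_mul_eq h.dc, neg_mul, h.cc]
  module

theorem commute_tquad_y (tc : SemiconjBy T C D) (td : T * D = C * T + ξ • (D - C)) :
    Commute (T * T - ξ • T - 1) (Y : A) := by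
  rw [Commute, SemiconjBy]
  simp only [sub_mul, mul_sub, mul_assoc, h.ty, add_mul, mul_add, mul_mul_of_mul_eq h.tx,
    mul_smul_comm, smul_mul_assoc, mul_one, one_mul, smul_sub, mul_mul_of_mul_eq h.t_mul_yinv,
    mul_mul_of_mul_eq tc, td, h.dd, h.dc, mul_neg, mul_mul_of_mul_eq h.dc, neg_mul, h.cc]
  module

theorem cross (tquad : T * T = ξ • T + 1) : (T + ξ • (C * D)) * X * T = Y := by
  simp only [add_mul, smul_mul_assoc, mul_assoc, mul_mul_of_mul_eq h.tx, sub_mul, tquad,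
    mul_mul_of_mul_eq h.dx, mul_mul_of_mul_eq h.cx, mul_add, mul_one, mul_smul_comm]
  module

end CrossRel

end RankTwo

section RankThree

variable {R A : Type*} [CommRing R] [Ring A] [Algebra R A]

/-- The relations between two neighbouring nodes, except the braid relation: here
`X, Y, Z` and `C, D, E` are three consecutive `X`'s and `C`'s, and `S, T` two consecutive `T`'s. -/
structure NeighbourRel (ξ : R) (X Y Z : Aˣ) (C D E S T : A) : Prop where
  left : CrossRel ξ X Y C D S
  right : CrossRel ξ Y Z D E T
  sz : Commute S Z
  tx : Commute T X
  ec : E * C = -(C * E)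
  se : Commute S E
  tc : Commute T C
  sc : SemiconjBy S C D
  sd : S * D = C * S + ξ • (D - C)
  td : SemiconjBy T D E
  te : T * E = D * T + ξ • (E - D)
  ss : S * S = ξ • S + 1
  tt : T * T = ξ • T + 1

theorem NeighbourRel.semiconjBy_braid {ξ : R} {X Y Z : Aˣ} {C D E S T : A}
    (h : NeighbourRel ξ X Y Z C D E S T) :
    SemiconjBy (S * T * S - T * S * T) (X : A) Z ∧
    SemiconjBy (S * T * S - T * S * T) (Y : A) Y ∧
    SemiconjBy (S * T * S - T * S * T) (Z : A) X := by
  refine ⟨?_, ?_, ?_⟩ <;> rw [SemiconjBy] <;>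
  simp only [mul_assoc, sub_mul, mul_sub, add_mul, mul_add, smul_sub, smul_add, mul_smul_comm,
    smul_mul_assoc, mul_neg, neg_mul, smul_neg, mul_one, one_mul,
    h.tx.eq, mul_mul_of_mul_eq h.tx, h.sz.eq, mul_mul_of_mul_eq h.sz,
    mul_mul_of_mul_eq h.tx.units_inv_right, mul_mul_of_mul_eq h.sz.units_inv_right,
    h.left.tx, h.left.ty, h.right.tx, h.right.ty, mul_mul_of_mul_eq h.left.tx,
    mul_mul_of_mul_eq h.left.ty, mul_mul_of_mul_eq h.right.tx, mul_mul_of_mul_eq h.right.ty,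
    mul_mul_of_mul_eq h.left.t_mul_xinv, mul_mul_of_mul_eq h.left.t_mul_yinv,
    mul_mul_of_mul_eq h.right.t_mul_xinv, mul_mul_of_mul_eq h.right.t_mul_yinv,
    h.sd, h.se.eq, h.td.eq, h.te, mul_mul_of_mul_eq h.sc,
    mul_mul_of_mul_eq h.sd, mul_mul_of_mul_eq h.se, mul_mul_of_mul_eq h.tc,
    mul_mul_of_mul_eq h.td, mul_mul_of_mul_eq h.te, h.ss, h.tt,
    h.left.cc, h.left.dd, h.right.dd, mul_mul_of_mul_eq h.left.cc,
    mul_mul_of_mul_eq h.left.dd, mul_mul_of_mul_eq h.right.dd, h.left.dc, h.right.dc,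
    mul_mul_of_mul_eq h.left.dc, mul_mul_of_mul_eq h.right.dc, mul_mul_of_mul_eq h.ec] <;>
  module

end RankThree

/-! ### Laurent polynomials with coefficients in a module -/

section Induced

variable {ι : Type*} [DecidableEq ι] {R V W : Type*} [CommRing R] [AddCommGroup V] [Module R V]
  [AddCommGroup W] [Module R W]

/-- The module `R[X_i^{±1} : i ∈ ι] ⊗ V` of Laurent polynomials with coefficients in `V`;
`Finsupp.single α v` is `X^α ⊗ v`. -/
abbrev Laurent (ι V : Type*) [AddCommGroup V] : Type _ := (ι → ℤ) →₀ V

/-- Multiplication by `X_j` on Laurent polynomials. -/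
noncomputable def opX (R : Type*) {V : Type*} [CommRing R] [AddCommGroup V] [Module R V] (j : ι) :
    (Module.End R (Laurent ι V))ˣ :=
  LinearMap.GeneralLinearGroup.ofLinearEquiv (Finsupp.domLCongr (Equiv.addLeft (Pi.single j 1)))

@[simp] theorem opX_single (j : ι) (α : ι → ℤ) (v : V) :
    (opX R j).val (Finsupp.single α v : Laurent ι V) = Finsupp.single (Pi.single j 1 + α) v :=
  Finsupp.equivMapDomain_single _ _ _

@[simp] theorem opX_inv_single (j : ι) (α : ι → ℤ) (v : V) :
    (opX R j)⁻¹.val (Finsupp.single α v : Laurent ι V) = Finsupp.single (-Pi.single j 1 + α) v :=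
  Finsupp.equivMapDomain_single _ _ _

theorem opX_commute (j k : ι) :
    Commute (opX R j : (Module.End R (Laurent ι V))ˣ) (opX R k) := by
  refine Units.ext (Finsupp.lhom_ext fun α v => ?_)
  simp [add_left_comm]

theorem int_pi_induction [Finite ι] {P : (ι → ℤ) → Prop} (zero : P 0)
    (add : ∀ α j, P α → P (Pi.single j 1 + α)) (sub : ∀ α j, P α → P (-Pi.single j 1 + α))
    (α : ι → ℤ) : P α := by
  have := Fintype.ofFinite ι
  have add_single (j : ι) (a : ℤ) (β : ι → ℤ) (hβ : P β) : P (Pi.single j a + β) := by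
    induction a with
    | zero => simpa using hβ
    | succ i ih => rw [add_comm (i : ℤ), Pi.single_add, add_assoc]; exact add _ _ ih
    | pred i ih =>
      rw [sub_eq_neg_add, Pi.single_add, Pi.single_neg, add_assoc]; exact sub _ _ ih
  rw [← Finset.univ_sum_single α]
  induction (Finset.univ : Finset ι) using Finset.induction_on with
  | empty => simpa using zero
  | insert j s hj ih => rw [Finset.sum_insert hj]; exact add_single _ _ _ ih

theorem Laurent.hom_ext [Finite ι] {φ ψ : Laurent ι V →ₗ[R] W} (U : ι → (Module.End R W)ˣ)
    (hφ : ∀ j, φ ∘ₗ (opX R j).val = (U j).val ∘ₗ φ) (hψ : ∀ j, ψ ∘ₗ (opX R j).val = (U j).val ∘ₗ ψ)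
    (h0 : ∀ v, φ (.single 0 v) = ψ (.single 0 v)) : φ = ψ := by
  have mul (j : ι) {x : Laurent ι V} (hx : φ x = ψ x) :
      φ ((opX R j).val x) = ψ ((opX R j).val x) := by
    rw [← LinearMap.comp_apply, hφ, ← LinearMap.comp_apply ψ, hψ, LinearMap.comp_apply, hx,
      LinearMap.comp_apply]
  have div (j : ι) {x : Laurent ι V} (hx : φ ((opX R j).val x) = ψ ((opX R j).val x)) :
      φ x = ψ x := by
    rw [← LinearMap.comp_apply, hφ, ← LinearMap.comp_apply ψ, hψ] at hx
    exact ((Module.End.isUnit_iff _).1 (U j).isUnit).injective hx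
  refine Finsupp.lhom_ext fun α => ?_
  induction α using int_pi_induction with
  | zero => exact h0
  | add α j ih => exact fun v => opX_single (R := R) j α v ▸ mul j (ih v)
  | sub α j ih =>
    exact fun v => div j (by rw [opX_single, add_neg_cancel_left]; exact ih v)

theorem exists_monoidHom_ofAdd_single {G : Type*} [Group G] [Finite ι] (U : ι → G)
    (hU : Pairwise fun j k => Commute (U j) (U k)) :
    ∃ E : Multiplicative (ι → ℤ) →* G, ∀ j, E (.ofAdd (Pi.single j 1)) = U j := by
  have := Fintype.ofFinite ι
  have hcomm : Pairwise fun j k => ∀ x y : Multiplicative ℤ,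
      Commute (zpowersHom G (U j) x) (zpowersHom G (U k) y) := fun j k hjk x y => by
    simpa only [zpowersHom_apply] using (hU hjk).zpow_zpow _ _
  let E : (ι → Multiplicative ℤ) →* G :=
    MonoidHom.noncommPiCoprod (fun j => zpowersHom G (U j)) hcomm
  have hE (j : ι) : E (Pi.mulSingle j (.ofAdd 1)) = U j := by
    rw [MonoidHom.noncommPiCoprod_mulSingle]
    simp
  exact ⟨E, hE⟩

theorem Laurent.exists_lift [Finite ι] (U : ι → (Module.End R W)ˣ)
    (hU : Pairwise fun j k => Commute (U j) (U k)) (g : V →ₗ[R] W) :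
    ∃ φ : Laurent ι V →ₗ[R] W,
      (∀ v, φ (.single 0 v) = g v) ∧ ∀ j, φ ∘ₗ (opX R j).val = (U j).val ∘ₗ φ := by
  obtain ⟨E, hE⟩ := exists_monoidHom_ofAdd_single U hU
  refine ⟨Finsupp.lsum R fun α => (E (.ofAdd α)).val ∘ₗ g, fun v => ?_, fun j => ?_⟩
  · rw [Finsupp.lsum_single, ofAdd_zero, map_one]
    rfl
  · refine Finsupp.lhom_ext fun α v => ?_
    simp only [LinearMap.comp_apply, opX_single, Finsupp.lsum_single, ofAdd_add, map_mul, hE]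
    rfl

/-- The automorphism `(a, b) ↦ (U a, W b + D a)` of `V × V`. -/
def skewUnit (U W : (Module.End R V)ˣ) (D : Module.End R V) : (Module.End R (V × V))ˣ :=
  LinearMap.GeneralLinearGroup.ofLinearEquiv <|
    LinearEquiv.skewProd (LinearMap.GeneralLinearGroup.toLinearEquiv U)
      (LinearMap.GeneralLinearGroup.toLinearEquiv W) D

@[simp] theorem skewUnit_apply (U W : (Module.End R V)ˣ) (D : Module.End R V) (p : V × V) :
    (skewUnit U W D).val p = (U.val p.1, W.val p.2 + D p.1) := rfl

theorem skewUnit_commute {U W U' W' : (Module.End R V)ˣ} {D D' : Module.End R V}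
    (hU : Commute U U') (hW : Commute W W')
    (hD : W.val * D' + D * U'.val = W'.val * D + D' * U.val) :
    Commute (skewUnit U W D) (skewUnit U' W' D') := by
  refine Units.ext (LinearMap.ext fun p => ?_)
  have hU := LinearMap.congr_fun (Units.ext_iff.1 hU.eq) p.1
  have hW := LinearMap.congr_fun (Units.ext_iff.1 hW.eq) p.2
  have hD := LinearMap.congr_fun hD p.1
  simp only [Units.val_mul, Module.End.mul_apply, LinearMap.add_apply] at hU hW hD
  simp [hU, hW, add_assoc, hD]

/-- The operators `T` sought here are the second components of the maps into pairs of Laurent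
polynomials whose first component is the identity. -/
theorem Laurent.exists_twisted_extension [Finite ι] (σ : ι → ι)
    (D : ι → Module.End R (Laurent ι V))
    (hD : Pairwise fun j k => (opX R (σ j)).val * D k + D j * (opX R k).val =
      (opX R (σ k)).val * D j + D k * (opX R j).val) (t : V →ₗ[R] V) :
    ∃ T : Module.End R (Laurent ι V), (∀ v, T (.single 0 v) = .single 0 (t v)) ∧
      ∀ j, T * (opX R j).val = (opX R (σ j)).val * T + D j := by
  obtain ⟨φ, φ_zero, hφ⟩ := exists_lift (fun j => skewUnit (opX R j) (opX R (σ j)) (D j))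
    (fun j k hjk => skewUnit_commute (opX_commute _ _) (opX_commute _ _) (hD hjk))
    ((Finsupp.lsingle 0).prod (Finsupp.lsingle 0 ∘ₗ t))
  have hφ (j : ι) (x : Laurent ι V) : φ ((opX R j).val x) =
      ((opX R j).val (φ x).1, (opX R (σ j)).val (φ x).2 + D j (φ x).1) :=
    LinearMap.congr_fun (hφ j) x
  have fst_eq : LinearMap.fst R _ _ ∘ₗ φ = LinearMap.id :=
    hom_ext (opX R) (fun j => LinearMap.ext fun x => congrArg Prod.fst (hφ j x)) (fun _ => rfl)
      fun v => congrArg Prod.fst (φ_zero v)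
  refine ⟨LinearMap.snd R _ _ ∘ₗ φ, fun v => congrArg Prod.snd (φ_zero v), fun j => ?_⟩
  refine LinearMap.ext fun x => (congrArg Prod.snd (hφ j x)).trans ?_
  rw [show (φ x).1 = x from LinearMap.congr_fun fst_eq x]
  rfl

end Induced

/-! ### The module induced from a representation of the finite subalgebra -/

section Representation

variable {R : Type*} [CommRing R] {n : ℕ}

/-- The relations of the finite Hecke–Clifford superalgebra `H^fn_n`. -/
structure FinRel {A : Type*} [Ring A] [Algebra R A] (ξ : R) (c : Fin n → A)
    (t : Fin (n - 1) → A) : Prop where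
  cc : ∀ i, c i * c i = 1
  anti : ∀ {i j}, i ≠ j → c i * c j = -(c j * c i)
  quad : ∀ i, t i * t i = ξ • t i + 1
  braid : ∀ {i j : Fin (n - 1)}, (j : ℕ) = (i : ℕ) + 1 → t i * t j * t i = t j * t i * t j
  far : ∀ {i j : Fin (n - 1)}, (i : ℕ) + 1 < (j : ℕ) → Commute (t i) (t j)
  tc : ∀ i, SemiconjBy (t i) (c (lo i)) (c (hi i))
  tc_of_ne : ∀ {i j}, j ≠ lo i → j ≠ hi i → Commute (t i) (c j)

theorem FinRel.map {A B : Type*} [Ring A] [Algebra R A] [Ring B] [Algebra R B] {ξ : R}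
    {c : Fin n → A} {t : Fin (n - 1) → A} (h : FinRel ξ c t) (φ : A →ₐ[R] B) :
    FinRel ξ (φ ∘ c) (φ ∘ t) where
  cc i := by simp [← map_mul, h.cc]
  anti hij := by simp [← map_mul, h.anti hij]
  quad i := by simp [← map_mul, h.quad]
  braid hij := by simp [← map_mul, h.braid hij]
  far hij := (h.far hij).map φ
  tc i := (h.tc i).map φ
  tc_of_ne h1 h2 := (h.tc_of_ne h1 h2).map φ

theorem lo_ne_hi (i : Fin (n - 1)) : lo i ≠ hi i := fun h => by
  simpa [lo, hi] using congrArg Fin.val h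

variable {V : Type*} [AddCommGroup V] [Module R V] {ξ : R} {c : Fin n → Module.End R V}
  {t : Fin (n - 1) → Module.End R V}

/-- The action of `C_j` on the induced module: `C_j (X^α ⊗ v) = X^{s(α)} ⊗ c_j v`, where `s`
changes the sign of `α_j`. -/
noncomputable def opC (c : Fin n → Module.End R V) (j : Fin n) :
    Module.End R (Laurent (Fin n) V) :=
  Finsupp.lsum R fun α => Finsupp.lsingle (Function.update α j (-α j)) ∘ₗ c j

@[simp] theorem opC_single (j : Fin n) (α : Fin n → ℤ) (v : V) :
    opC c j (.single α v) = .single (Function.update α j (-α j)) (c j v) := by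
  rw [opC, Finsupp.lsum_single]
  rfl

theorem opC_mul_self (hr : FinRel ξ c t) (j : Fin n) : opC c j * opC c j = 1 := by
  refine Finsupp.lhom_ext fun α v => ?_
  have h : c j (c j v) = v := LinearMap.congr_fun (hr.cc j) v
  simp [h]

theorem opC_mul_opC (hr : FinRel ξ c t) {i j : Fin n} (hij : i ≠ j) :
    opC c i * opC c j = -(opC c j * opC c i) := by
  refine Finsupp.lhom_ext fun α v => ?_
  have h : c i (c j v) = -c j (c i v) := LinearMap.congr_fun (hr.anti hij) v
  simp [h, hij, hij.symm, Function.update_comm hij]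

theorem opC_semiconjBy_opX (j : Fin n) :
    SemiconjBy (opC c j) (opX R j).val (opX R j)⁻¹.val := by
  refine Finsupp.lhom_ext fun α v => ?_
  simp only [Module.End.mul_apply, opC_single, opX_single, opX_inv_single]
  congr 1
  ext k
  by_cases hk : k = j
  · subst hk
    simp [add_comm]
  · simp [hk]

theorem opC_commute_opX {i j : Fin n} (h : i ≠ j) : Commute (opC c i) (opX R j).val := by
  refine Finsupp.lhom_ext fun α v => ?_
  simp only [Module.End.mul_apply, opC_single, opX_single]
  congr 1
  ext k
  by_cases hk : k = i
  · subst hk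
    simp [h]
  · simp [hk]

theorem opC_mul_opC_commute_opX {i j k : Fin n} (hi : i ≠ k) (hj : j ≠ k) :
    Commute (opX R k).val (opC c i * opC c j) :=
  ((opC_commute_opX hi).mul_left (opC_commute_opX hj)).symm

theorem opX_val_commute (i j : Fin n) :
    Commute (opX R i : (Module.End R (Laurent (Fin n) V))ˣ).val (opX R j).val :=
  (opX_commute i j).units_val

open Classical in
/-- The value of `T_i X_j - X_{s_i j} T_i` that the cross relation prescribes. -/
noncomputable def crossDefect (ξ : R) (c : Fin n → Module.End R V) (i : Fin (n - 1)) (j : Fin n) :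
    Module.End R (Laurent (Fin n) V) :=
  if j = lo i then
    -(ξ • ((opX R (hi i)).val + (opX R (lo i))⁻¹.val * (opC c (lo i) * opC c (hi i))))
  else if j = hi i then
    ξ • ((opX R (hi i)).val - (opX R (hi i))⁻¹.val * (opC c (lo i) * opC c (hi i)))
  else 0

theorem crossDefect_lo (i : Fin (n - 1)) : crossDefect ξ c i (lo i) =
    -(ξ • ((opX R (hi i)).val + (opX R (lo i))⁻¹.val * (opC c (lo i) * opC c (hi i)))) :=
  if_pos rfl

theorem crossDefect_hi (i : Fin (n - 1)) : crossDefect ξ c i (hi i) =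
    ξ • ((opX R (hi i)).val - (opX R (hi i))⁻¹.val * (opC c (lo i) * opC c (hi i))) :=
  (if_neg (lo_ne_hi i).symm).trans (if_pos rfl)

theorem crossDefect_of_ne {i : Fin (n - 1)} {j : Fin n} (hlo : j ≠ lo i) (hhi : j ≠ hi i) :
    crossDefect ξ c i j = 0 :=
  (if_neg hlo).trans (if_neg hhi)

theorem opX_commute_crossDefect {i : Fin (n - 1)} {j : Fin n} (hlo : j ≠ lo i) (hhi : j ≠ hi i)
    (k : Fin n) : Commute (opX R j).val (crossDefect ξ c i k) := by
  have hC : Commute (opX R j).val (opC c (lo i) * opC c (hi i)) :=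
    opC_mul_opC_commute_opX hlo.symm hhi.symm
  by_cases hk : k = lo i
  · rw [hk, crossDefect_lo]
    exact commute_lo_defect (opX_val_commute _ _) (opX_val_commute _ _) hC ξ
  by_cases hk' : k = hi i
  · rw [hk', crossDefect_hi]
    exact commute_hi_defect (opX_val_commute _ _) hC ξ
  rw [crossDefect_of_ne hk hk']
  exact Commute.zero_right _

theorem crossDefect_compat_lo_hi (i : Fin (n - 1)) :
    (opX R (hi i)).val * crossDefect ξ c i (hi i) + crossDefect ξ c i (lo i) * (opX R (hi i)).val =
      (opX R (lo i)).val * crossDefect ξ c i (lo i) +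
        crossDefect ξ c i (hi i) * (opX R (lo i)).val := by
  rw [crossDefect_lo, crossDefect_hi]
  exact defect_compat (opX_val_commute _ _) (opC_semiconjBy_opX _)
    (opC_commute_opX (lo_ne_hi i)) (opC_commute_opX (lo_ne_hi i).symm) (opC_semiconjBy_opX _) ξ

theorem crossDefect_compat (i : Fin (n - 1)) : Pairwise fun j k =>
    (opX R (Equiv.swap (lo i) (hi i) j)).val * crossDefect ξ c i k +
        crossDefect ξ c i j * (opX R k).val =
      (opX R (Equiv.swap (lo i) (hi i) k)).val * crossDefect ξ c i j +
        crossDefect ξ c i k * (opX R j).val := by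
  have compat_of_ne {j : Fin n} (hlo : j ≠ lo i) (hhi : j ≠ hi i) (k : Fin n) :
      (opX R (Equiv.swap (lo i) (hi i) j)).val * crossDefect ξ c i k +
          crossDefect ξ c i j * (opX R k).val =
        (opX R (Equiv.swap (lo i) (hi i) k)).val * crossDefect ξ c i j +
          crossDefect ξ c i k * (opX R j).val := by
    rw [Equiv.swap_apply_of_ne_of_ne hlo hhi, crossDefect_of_ne hlo hhi, zero_mul, mul_zero,
      add_zero, zero_add, (opX_commute_crossDefect hlo hhi k).eq]
  intro j k hjk
  by_cases hj : j ≠ lo i ∧ j ≠ hi i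
  · exact compat_of_ne hj.1 hj.2 k
  by_cases hk : k ≠ lo i ∧ k ≠ hi i
  · exact (compat_of_ne hk.1 hk.2 j).symm
  obtain ⟨rfl, rfl⟩ | ⟨rfl, rfl⟩ : j = lo i ∧ k = hi i ∨ j = hi i ∧ k = lo i := by grind
  · simpa using crossDefect_compat_lo_hi i
  · simpa using (crossDefect_compat_lo_hi i).symm

theorem exists_opT (ξ : R) (c : Fin n → Module.End R V) (t : Fin (n - 1) → Module.End R V)
    (i : Fin (n - 1)) :
    ∃ T : Module.End R (Laurent (Fin n) V), (∀ v, T (.single 0 v) = .single 0 (t i v)) ∧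
      ∀ j, T * (opX R j).val = (opX R (Equiv.swap (lo i) (hi i) j)).val * T + crossDefect ξ c i j :=
  Laurent.exists_twisted_extension _ _ (crossDefect_compat i) (t i)

/-- The action of `T_i` on the induced module: the operator that acts by `t_i` on `1 ⊗ V` and
satisfies the cross relation. -/
noncomputable def opT (ξ : R) (c : Fin n → Module.End R V) (t : Fin (n - 1) → Module.End R V)
    (i : Fin (n - 1)) : Module.End R (Laurent (Fin n) V) :=
  (exists_opT ξ c t i).choose

theorem opT_mul_opX (i : Fin (n - 1)) (j : Fin n) : opT ξ c t i * (opX R j).val =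
    (opX R (Equiv.swap (lo i) (hi i) j)).val * opT ξ c t i + crossDefect ξ c i j :=
  (exists_opT ξ c t i).choose_spec.2 j

theorem opT_commute_opX {i : Fin (n - 1)} {j : Fin n} (hlo : j ≠ lo i) (hhi : j ≠ hi i) :
    Commute (opT ξ c t i) (opX R j).val := by
  rw [Commute, SemiconjBy, opT_mul_opX, Equiv.swap_apply_of_ne_of_ne hlo hhi,
    crossDefect_of_ne hlo hhi, add_zero]

theorem opT_crossRel (hr : FinRel ξ c t) (i : Fin (n - 1)) :
    CrossRel ξ (opX R (lo i)) (opX R (hi i)) (opC c (lo i)) (opC c (hi i)) (opT ξ c t i) where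
  cc := opC_mul_self hr _
  dd := opC_mul_self hr _
  dc := opC_mul_opC hr (lo_ne_hi i).symm
  cx := opC_semiconjBy_opX _
  cy := opC_commute_opX (lo_ne_hi i)
  dx := opC_commute_opX (lo_ne_hi i).symm
  dy := opC_semiconjBy_opX _
  tx := by rw [opT_mul_opX, crossDefect_lo, Equiv.swap_apply_left, sub_eq_add_neg]
  ty := by rw [opT_mul_opX, crossDefect_hi, Equiv.swap_apply_right]

@[simp] theorem opT_single_zero (i : Fin (n - 1)) (v : V) :
    opT ξ c t i (.single 0 v) = .single 0 (t i v) :=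
  (exists_opT ξ c t i).choose_spec.1 v

theorem opC_single_zero (j : Fin n) (v : V) :
    opC c j (.single 0 v) = .single 0 (c j v) := by
  simp

theorem Laurent.end_ext {φ ψ : Module.End R (Laurent (Fin n) V)}
    (hX : ∀ j, ∃ U : (Module.End R (Laurent (Fin n) V))ˣ,
      SemiconjBy (φ - ψ) (opX R j).val U.val)
    (h0 : ∀ v, φ (.single 0 v) = ψ (.single 0 v)) : φ = ψ := by
  choose U hU using hX
  refine sub_eq_zero.1 (Laurent.hom_ext U hU (fun j => ?_) fun v => ?_)
  · rw [LinearMap.zero_comp, LinearMap.comp_zero]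
  · rw [LinearMap.sub_apply, h0, sub_self, LinearMap.zero_apply]

theorem forall_fin_of_lo_hi {P : Fin n → Prop} (i : Fin (n - 1)) (hlo : P (lo i)) (hhi : P (hi i))
    (hne : ∀ j, j ≠ lo i → j ≠ hi i → P j) (j : Fin n) : P j := by
  by_cases h : j = lo i
  · exact h ▸ hlo
  by_cases h' : j = hi i
  · exact h' ▸ hhi
  exact hne j h h'

theorem opT_semiconjBy_opC (hr : FinRel ξ c t) (i : Fin (n - 1)) :
    SemiconjBy (opT ξ c t i) (opC c (lo i)) (opC c (hi i)) := by
  have hrel := opT_crossRel hr i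
  refine Laurent.end_ext (forall_fin_of_lo_hi i ⟨_, hrel.semiconjBy_tc_x⟩ ⟨_, hrel.semiconjBy_tc_y⟩
    fun j hlo hhi => ⟨opX R j, ?_⟩) fun v => ?_
  · have hT := opT_commute_opX (ξ := ξ) (c := c) (t := t) hlo hhi
    exact (hT.mul_left (opC_commute_opX hlo.symm)).sub_left
      ((opC_commute_opX hhi.symm).mul_left hT)
  · have h : t i (c (lo i) v) = c (hi i) (t i v) := LinearMap.congr_fun (hr.tc i) v
    simp [h]

theorem opT_mul_opC_hi (hr : FinRel ξ c t) (i : Fin (n - 1)) :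
    opT ξ c t i * opC c (hi i) =
      opC c (lo i) * opT ξ c t i + ξ • (opC c (hi i) - opC c (lo i)) := by
  rw [← sub_eq_iff_eq_add']
  have hrel := opT_crossRel hr i
  refine Laurent.end_ext (forall_fin_of_lo_hi i ⟨_, hrel.semiconjBy_td_x⟩ ⟨_, hrel.semiconjBy_td_y⟩
    fun j hlo hhi => ⟨opX R j, ?_⟩) fun v => ?_
  · have hT := opT_commute_opX (ξ := ξ) (c := c) (t := t) hlo hhi
    have hC := opC_commute_opX (R := R) (c := c) hlo.symm
    have hD := opC_commute_opX (R := R) (c := c) hhi.symm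
    exact ((hT.mul_left hD).sub_left (hC.mul_left hT)).sub_left ((hD.sub_left hC).smul_left ξ)
  · have h := LinearMap.congr_fun (mul_eq_of_quadratic (hr.quad i) (hr.tc i)) v
    simp only [Module.End.mul_apply, LinearMap.add_apply] at h
    simp [h, ← Finsupp.single_sub]

theorem opT_mul_self (hr : FinRel ξ c t) (i : Fin (n - 1)) :
    opT ξ c t i * opT ξ c t i = ξ • opT ξ c t i + 1 := by
  rw [← sub_eq_iff_eq_add']
  have hrel := opT_crossRel hr i
  have tc := opT_semiconjBy_opC hr i
  have td := opT_mul_opC_hi hr i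
  refine Laurent.end_ext (forall_fin_of_lo_hi i ⟨opX R _, hrel.commute_tquad_x tc td⟩
    ⟨opX R _, hrel.commute_tquad_y tc td⟩ fun j hlo hhi => ⟨opX R j, ?_⟩) fun v => ?_
  · have hT := opT_commute_opX (ξ := ξ) (c := c) (t := t) hlo hhi
    exact ((hT.mul_left hT).sub_left (hT.smul_left ξ)).sub_left (Commute.one_left _)
  · have h : t i (t i v) = ξ • t i v + v := LinearMap.congr_fun (hr.quad i) v
    simp [h]

theorem opC_commute_crossDefect (hr : FinRel ξ c t) {i : Fin (n - 1)} {j : Fin n}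
    (hlo : j ≠ lo i) (hhi : j ≠ hi i) (k : Fin n) :
    Commute (opC c j) (crossDefect ξ c i k) := by
  have hCD : Commute (opC c j) (opC c (lo i) * opC c (hi i)) :=
    commute_mul_of_mul_eq_neg (opC_mul_opC hr hlo) (opC_mul_opC hr hhi)
  refine forall_fin_of_lo_hi (P := fun k => Commute (opC c j) (crossDefect ξ c i k)) i ?_ ?_
    (fun k hk hk' => ?_) k
  · rw [crossDefect_lo]
    exact commute_lo_defect (opC_commute_opX hlo) (opC_commute_opX hhi) hCD ξ
  · rw [crossDefect_hi]
    exact commute_hi_defect (opC_commute_opX hhi) hCD ξ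
  · rw [crossDefect_of_ne hk hk']
    exact Commute.zero_right _

theorem opT_commute_opC (hr : FinRel ξ c t) {i : Fin (n - 1)} {j : Fin n}
    (hlo : j ≠ lo i) (hhi : j ≠ hi i) : Commute (opT ξ c t i) (opC c j) := by
  refine Laurent.end_ext (fun k => ?_) fun v => ?_
  · by_cases hk : k = j
    · subst hk
      have hT := opT_commute_opX (ξ := ξ) (c := c) (t := t) hlo hhi
      have hC := opC_semiconjBy_opX (R := R) (c := c) k
      exact ⟨_, (SemiconjBy.mul_left hT.units_inv_right hC).sub_left (SemiconjBy.mul_left hC hT)⟩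
    · refine ⟨_, semiconjBy_commutator (opT_mul_opX i k) (opC_commute_opX (Ne.symm hk)) ?_
        (opC_commute_crossDefect hr hlo hhi k)⟩
      refine opC_commute_opX fun h => hk ?_
      grind
  · have h : t i (c j v) = c j (t i v) := LinearMap.congr_fun (hr.tc_of_ne hlo hhi) v
    simp [h]

theorem opT_commute_crossDefect (hr : FinRel ξ c t) {i j : Fin (n - 1)}
    (hll : lo i ≠ lo j) (hlh : lo i ≠ hi j) (hhl : hi i ≠ lo j) (hhh : hi i ≠ hi j) (k : Fin n) :
    Commute (opT ξ c t j) (crossDefect ξ c i k) := by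
  have hC := opT_commute_opC hr hll hlh
  have hD := opT_commute_opC hr hhl hhh
  have hX := opT_commute_opX (ξ := ξ) (c := c) (t := t) hll hlh
  have hY := opT_commute_opX (ξ := ξ) (c := c) (t := t) hhl hhh
  refine forall_fin_of_lo_hi (P := fun k => Commute (opT ξ c t j) (crossDefect ξ c i k)) i
    ?_ ?_ (fun k hk hk' => ?_) k
  · rw [crossDefect_lo]
    exact commute_lo_defect hX hY (hC.mul_right hD) ξ
  · rw [crossDefect_hi]
    exact commute_hi_defect hY (hC.mul_right hD) ξ
  · rw [crossDefect_of_ne hk hk']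
    exact Commute.zero_right _

theorem opT_commute_opT (hr : FinRel ξ c t) {i j : Fin (n - 1)} (hij : (i : ℕ) + 1 < j) :
    Commute (opT ξ c t i) (opT ξ c t j) := by
  have hll : lo i ≠ lo j := by grind [lo]
  have hlh : lo i ≠ hi j := by grind [lo, hi]
  have hhl : hi i ≠ lo j := by grind [lo, hi]
  have hhh : hi i ≠ hi j := by grind [hi]
  have commutator_of_ne {k : Fin n} (hlo : k ≠ lo j) (hhi : k ≠ hi j)
      (hσ : Equiv.swap (lo i) (hi i) k ≠ lo j ∧ Equiv.swap (lo i) (hi i) k ≠ hi j) :=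
    semiconjBy_commutator (opT_mul_opX (ξ := ξ) (c := c) (t := t) i k)
      (opT_commute_opX hlo hhi) (opT_commute_opX hσ.1 hσ.2)
      (opT_commute_crossDefect hr hll hlh hhl hhh k)
  have commutator_of_ne' {k : Fin n} (hlo : k ≠ lo i) (hhi : k ≠ hi i)
      (hσ : Equiv.swap (lo j) (hi j) k ≠ lo i ∧ Equiv.swap (lo j) (hi j) k ≠ hi i) :=
    neg_sub (opT ξ c t j * opT ξ c t i) _ ▸ (semiconjBy_commutator (opT_mul_opX j k)
      (opT_commute_opX hlo hhi) (opT_commute_opX hσ.1 hσ.2)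
      (opT_commute_crossDefect hr hll.symm hhl.symm hlh.symm hhh.symm k)).neg_left
  refine Laurent.end_ext (fun k => ?_) fun v => ?_
  · by_cases hk : k ≠ lo j ∧ k ≠ hi j
    · exact ⟨_, commutator_of_ne hk.1 hk.2 (by grind)⟩
    · exact ⟨_, commutator_of_ne' (by grind) (by grind) (by grind)⟩
  · have h : t i (t j v) = t j (t i v) := LinearMap.congr_fun (hr.far hij) v
    simp [h]

theorem opT_neighbourRel (hr : FinRel ξ c t) {i j : Fin (n - 1)} (hij : lo j = hi i) :
    NeighbourRel ξ (opX R (lo i)) (opX R (hi i)) (opX R (hi j)) (opC c (lo i)) (opC c (hi i))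
      (opC c (hi j)) (opT ξ c t i) (opT ξ c t j) := by
  have hll : lo i ≠ lo j := hij ▸ lo_ne_hi i
  have hlh : lo i ≠ hi j := by grind [lo, hi]
  have hhh : hi i ≠ hi j := hij ▸ lo_ne_hi j
  exact
  { left := opT_crossRel hr i
    right := hij ▸ opT_crossRel hr j
    sz := opT_commute_opX hlh.symm hhh.symm
    tx := opT_commute_opX hll hlh
    ec := opC_mul_opC hr hlh.symm
    se := opT_commute_opC hr hlh.symm hhh.symm
    tc := opT_commute_opC hr hll hlh
    sc := opT_semiconjBy_opC hr i
    sd := opT_mul_opC_hi hr i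
    td := hij ▸ opT_semiconjBy_opC hr j
    te := hij ▸ opT_mul_opC_hi hr j
    ss := opT_mul_self hr i
    tt := opT_mul_self hr j }

theorem opT_braid (hr : FinRel ξ c t) {i j : Fin (n - 1)} (hij : (j : ℕ) = i + 1) :
    opT ξ c t i * opT ξ c t j * opT ξ c t i = opT ξ c t j * opT ξ c t i * opT ξ c t j := by
  have hji : lo j = hi i := Fin.ext hij
  obtain ⟨hX, hY, hZ⟩ := (opT_neighbourRel hr hji).semiconjBy_braid
  refine Laurent.end_ext (forall_fin_of_lo_hi i ⟨_, hX⟩ ⟨_, hY⟩ fun k hlo hhi => ?_) fun v => ?_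
  · by_cases hk : k = hi j
    · exact hk ▸ ⟨_, hZ⟩
    have hS := opT_commute_opX (ξ := ξ) (c := c) (t := t) hlo hhi
    have hT := opT_commute_opX (ξ := ξ) (c := c) (t := t) (hji ▸ hhi) hk
    exact ⟨opX R k, ((hS.mul_left hT).mul_left hS).sub_left ((hT.mul_left hS).mul_left hT)⟩
  · have h : t i (t j (t i v)) = t j (t i (t j v)) := LinearMap.congr_fun (hr.braid hij) v
    simp [h]

end Representation

section InducedModule

variable {F : Type} [Field F] {q : F} {n : ℕ} {V : Type*} [AddCommGroup V] [Module F V]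
  {c : Fin n → Module.End F V} {t : Fin (n - 1) → Module.End F V}

/-- The action of the generators of `H_n` on the module induced from a representation of the
finite Hecke–Clifford superalgebra. -/
noncomputable def opGen (ξ : F) (c : Fin n → Module.End F V) (t : Fin (n - 1) → Module.End F V) :
    Gen n → Module.End F (Laurent (Fin n) V)
  | .X j => (opX F j).val
  | .Xinv j => (opX F j)⁻¹.val
  | .C j => opC c j
  | .T i => opT ξ c t i

theorem lift_opGen_eq_of_rel (hr : FinRel (q - q⁻¹) c t) ⦃a b : FA F n⦄ (hab : Rel F q n a b) :
    FreeAlgebra.lift F (opGen (q - q⁻¹) c t) a = FreeAlgebra.lift F (opGen (q - q⁻¹) c t) b := by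
  cases hab <;>
    simp only [map_mul, map_add, map_neg, map_smul, map_one, fx, fxinv, fc, ft,
      FreeAlgebra.lift_ι_apply, opGen]
  case XXinv => exact Units.mul_inv _
  case XinvX => exact Units.inv_mul _
  case XX => exact opX_val_commute _ _
  case XiXi => exact (opX_val_commute _ _).units_inv_left.units_inv_right
  case XXi => exact (opX_val_commute _ _).units_inv_right
  case CC => exact opC_mul_self hr _
  case Canti h => exact opC_mul_opC hr h
  case CX => exact opC_semiconjBy_opX _
  case CXi => exact (opC_semiconjBy_opX _).units_inv_right
  case CXo h => exact opC_commute_opX h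
  case CXio h => exact (opC_commute_opX h).units_inv_right
  case Tquad => exact opT_mul_self hr _
  case Tbraid h => exact opT_braid hr h
  case TTfar h => exact opT_commute_opT hr h
  case TC => exact opT_semiconjBy_opC hr _
  case TCo h1 h2 => exact opT_commute_opC hr h1 h2
  case TXo h1 h2 => exact opT_commute_opX h1 h2
  case TXio h1 h2 => exact (opT_commute_opX h1 h2).units_inv_right
  case cross => exact (opT_crossRel hr _).cross (opT_mul_self hr _)

/-- The `H_n`-module induced from a representation of the finite Hecke–Clifford superalgebra. -/
noncomputable def inducedRep (hr : FinRel (q - q⁻¹) c t) :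
    H F q n →ₐ[F] Module.End F (Laurent (Fin n) V) :=
  RingQuot.liftAlgHom F ⟨FreeAlgebra.lift F (opGen (q - q⁻¹) c t), lift_opGen_eq_of_rel hr⟩

theorem inducedRep_mk_ι (hr : FinRel (q - q⁻¹) c t) (g : Gen n) :
    inducedRep hr (RingQuot.mkAlgHom F (Rel F q n) (FreeAlgebra.ι F g)) =
      opGen (q - q⁻¹) c t g := by
  rw [inducedRep, RingQuot.liftAlgHom_mkAlgHom_apply, FreeAlgebra.lift_ι_apply]

theorem inducedRep_X (hr : FinRel (q - q⁻¹) c t) (j : Fin n) :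
    inducedRep hr (X F q j) = (opX F j).val :=
  inducedRep_mk_ι hr _

theorem inducedRep_Xinv (hr : FinRel (q - q⁻¹) c t) (j : Fin n) :
    inducedRep hr (Xinv F q j) = (opX F j)⁻¹.val :=
  inducedRep_mk_ι hr _

theorem inducedRep_C (hr : FinRel (q - q⁻¹) c t) (j : Fin n) :
    inducedRep hr (C F q j) = opC c j :=
  inducedRep_mk_ι hr _

theorem inducedRep_T (hr : FinRel (q - q⁻¹) c t) (i : Fin (n - 1)) :
    inducedRep hr (T F q i) = opT (q - q⁻¹) c t i :=
  inducedRep_mk_ι hr _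

theorem opX_pow_single (j : Fin n) (m : ℕ) (α : Fin n → ℤ) (v : V) :
    ((opX F j).val ^ m) (.single α v) = .single (Pi.single j (m : ℤ) + α) v := by
  induction m with
  | zero => simp
  | succ m ih =>
    rw [pow_succ', Module.End.mul_apply, ih, opX_single, ← add_assoc, ← Pi.single_add]
    push_cast
    rw [add_comm (1 : ℤ)]

theorem opX_inv_pow_single (j : Fin n) (m : ℕ) (α : Fin n → ℤ) (v : V) :
    ((opX F j)⁻¹.val ^ m) (.single α v) = .single (Pi.single j (-m : ℤ) + α) v := by
  induction m with
  | zero => simp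
  | succ m ih =>
    rw [pow_succ', Module.End.mul_apply, ih, opX_inv_single, ← add_assoc, ← Pi.single_neg,
      ← Pi.single_add]
    push_cast
    rw [neg_add_rev]

theorem inducedRep_XZ_single (hr : FinRel (q - q⁻¹) c t) (i : Fin n) (a : ℤ) (α : Fin n → ℤ)
    (v : V) : inducedRep hr (XZ F q i a) (.single α v) = .single (Pi.single i a + α) v := by
  rw [XZ]
  split_ifs with ha
  · rw [map_pow, inducedRep_X, opX_pow_single, Int.toNat_of_nonneg ha]
  · rw [map_pow, inducedRep_Xinv, opX_inv_pow_single, Int.toNat_of_nonneg (by omega), neg_neg]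

theorem inducedRep_Xmon_single (hr : FinRel (q - q⁻¹) c t) (γ : Fin n → ℤ) (v : V) :
    inducedRep hr (Xmon F q γ) (.single 0 v) = .single γ v := by
  have prod_single (l : List (Fin n)) :
      inducedRep hr (l.map fun i => XZ F q i (γ i)).prod (.single 0 v) =
        .single (l.map fun i => Pi.single i (γ i)).sum v := by
    induction l with
    | nil => simp
    | cons i l ih =>
      rw [List.map_cons, List.prod_cons, map_mul, Module.End.mul_apply, ih, inducedRep_XZ_single,
        List.map_cons, List.sum_cons]
  rw [Xmon, prod_single, ← List.ofFn_eq_map, List.sum_ofFn, Finset.univ_sum_single]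

end InducedModule

section Relations

variable {F : Type} [Field F] {q : F} {n : ℕ}

theorem X_mul_Xinv (i : Fin n) : X F q i * Xinv F q i = 1 := by
  simpa [X, Xinv] using RingQuot.mkAlgHom_rel F (Rel.XXinv (F := F) (q := q) i)

theorem Xinv_mul_X (i : Fin n) : Xinv F q i * X F q i = 1 := by
  simpa [X, Xinv] using RingQuot.mkAlgHom_rel F (Rel.XinvX (F := F) (q := q) i)

theorem X_commute_X (i j : Fin n) : Commute (X F q i) (X F q j) := by
  simpa [Commute, SemiconjBy, X] using RingQuot.mkAlgHom_rel F (Rel.XX (F := F) (q := q) i j)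

theorem C_mul_self (i : Fin n) : C F q i * C F q i = 1 := by
  simpa [C] using RingQuot.mkAlgHom_rel F (Rel.CC (F := F) (q := q) i)

theorem C_mul_C {i j : Fin n} (h : i ≠ j) : C F q i * C F q j = -(C F q j * C F q i) := by
  simpa [C] using RingQuot.mkAlgHom_rel F (Rel.Canti (F := F) (q := q) i j h)

theorem C_semiconjBy_X (i : Fin n) : SemiconjBy (C F q i) (X F q i) (Xinv F q i) := by
  simpa [SemiconjBy, C, X, Xinv] using RingQuot.mkAlgHom_rel F (Rel.CX (F := F) (q := q) i)

theorem C_commute_X {i j : Fin n} (h : i ≠ j) : Commute (C F q i) (X F q j) := by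
  simpa [Commute, SemiconjBy, C, X] using RingQuot.mkAlgHom_rel F (Rel.CXo (F := F) (q := q) i j h)

theorem T_mul_self (i : Fin (n - 1)) : T F q i * T F q i = (q - q⁻¹) • T F q i + 1 := by
  simpa [T] using RingQuot.mkAlgHom_rel F (Rel.Tquad (F := F) (q := q) i)

theorem T_braid {i j : Fin (n - 1)} (h : (j : ℕ) = (i : ℕ) + 1) :
    T F q i * T F q j * T F q i = T F q j * T F q i * T F q j := by
  simpa [T] using RingQuot.mkAlgHom_rel F (Rel.Tbraid (F := F) (q := q) i j h)

theorem T_commute_T {i j : Fin (n - 1)} (h : (i : ℕ) + 1 < (j : ℕ)) :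
    Commute (T F q i) (T F q j) := by
  simpa [Commute, SemiconjBy, T] using RingQuot.mkAlgHom_rel F (Rel.TTfar (F := F) (q := q) i j h)

theorem T_semiconjBy_C (i : Fin (n - 1)) :
    SemiconjBy (T F q i) (C F q (lo i)) (C F q (hi i)) := by
  simpa [SemiconjBy, T, C] using RingQuot.mkAlgHom_rel F (Rel.TC (F := F) (q := q) i)

theorem T_commute_C {i : Fin (n - 1)} {j : Fin n} (h1 : j ≠ lo i) (h2 : j ≠ hi i) :
    Commute (T F q i) (C F q j) := by
  simpa [Commute, SemiconjBy, T, C] using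
    RingQuot.mkAlgHom_rel F (Rel.TCo (F := F) (q := q) i j h1 h2)

theorem T_commute_X {i : Fin (n - 1)} {j : Fin n} (h1 : j ≠ lo i) (h2 : j ≠ hi i) :
    Commute (T F q i) (X F q j) := by
  simpa [Commute, SemiconjBy, T, X] using
    RingQuot.mkAlgHom_rel F (Rel.TXo (F := F) (q := q) i j h1 h2)

theorem T_cross (i : Fin (n - 1)) :
    (T F q i + (q - q⁻¹) • (C F q (lo i) * C F q (hi i))) * X F q (lo i) * T F q i =
      X F q (hi i) := by
  simpa [T, C, X] using RingQuot.mkAlgHom_rel F (Rel.cross (F := F) (q := q) i)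

theorem finRel (F : Type) [Field F] (q : F) (n : ℕ) :
    FinRel (q - q⁻¹) (C F q (n := n)) (T F q) :=
  ⟨C_mul_self, C_mul_C, T_mul_self, T_braid, T_commute_T, T_semiconjBy_C, T_commute_C⟩

end Relations

section PBW

variable (F : Type) [Field F] (q : F) (n : ℕ)

/-- The module induced from the left regular action of `H^fn_n` on `H_n`. -/
noncomputable def regularInducedRep :
    H F q n →ₐ[F] Module.End F (Laurent (Fin n) (H F q n)) :=
  inducedRep ((finRel F q n).map (Algebra.lmul F (H F q n)))

variable {F q n}

theorem regularInducedRep_Hfin_single {b : H F q n} (hb : b ∈ Hfin F q n) (v : H F q n) :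
    regularInducedRep F q n b (.single 0 v) = .single 0 (b * v) := by
  induction hb using Algebra.adjoin_induction generalizing v with
  | mem x hx =>
    rcases hx with ⟨i, rfl⟩ | ⟨i, rfl⟩
    · exact (LinearMap.congr_fun (inducedRep_C _ i) _).trans (opC_single_zero i v)
    · exact (LinearMap.congr_fun (inducedRep_T _ i) _).trans (opT_single_zero i v)
  | algebraMap r =>
    rw [AlgHom.commutes, ← Algebra.smul_def, Module.algebraMap_end_apply, Finsupp.smul_single]
  | add x y _ _ ihx ihy => rw [map_add, LinearMap.add_apply, ihx, ihy, add_mul, Finsupp.single_add]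
  | mul x y _ _ ihx ihy => rw [map_mul, Module.End.mul_apply, ihy, ihx, mul_assoc]

variable (F q n) in
/-- The linear map `X^γ b ↦ X^γ ⊗ b` (for `b ∈ H^fn_n`): it reads off the coefficients of an element
of `H_n` in the basis `X^γ` over `H^fn_n`. -/
noncomputable def coeffMap : H F q n →ₗ[F] Laurent (Fin n) (H F q n) :=
  LinearMap.applyₗ (.single 0 1) ∘ₗ (regularInducedRep F q n).toLinearMap

theorem coeffMap_Xmon_mul (γ : Fin n → ℤ) {b : H F q n} (hb : b ∈ Hfin F q n) :
    coeffMap F q n (Xmon F q γ * b) = .single γ b := by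
  change regularInducedRep F q n (Xmon F q γ * b) (.single 0 1) = _
  rw [map_mul, Module.End.mul_apply, regularInducedRep_Hfin_single hb, mul_one]
  exact inducedRep_Xmon_single _ γ b

end PBW

/-! ### The elements `f_k` -/

section HeckeCliffordRelations

variable {F A : Type*} [CommRing F] [Ring A] [Algebra F A]

/-- The defining relations of `H_n`, for families indexed by `ℕ` so that one can induct on the
number of nodes. A relation carries no bound when it also holds for the elements placed outside
the range, namely `x i = 1`, `C i = 0` and `T i = 0`. -/
structure HeckeCliffordRel (ξ : F) (n : ℕ) (x : ℕ → Aˣ) (C T : ℕ → A) : Prop where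
  x_commute : ∀ i j, Commute (x i : A) (x j)
  C_sq : ∀ {i}, i < n → C i * C i = 1
  C_anti : ∀ {i j}, i ≠ j → C i * C j = -(C j * C i)
  C_x : ∀ i, SemiconjBy (C i) (x i) ↑(x i)⁻¹
  C_commute_x : ∀ {i j}, i ≠ j → Commute (C i) (x j)
  T_sq : ∀ {i}, i + 1 < n → T i * T i = ξ • T i + 1
  braid : ∀ i, T i * T (i + 1) * T i = T (i + 1) * T i * T (i + 1)
  T_commute_T : ∀ {i j}, i + 1 < j → Commute (T i) (T j)
  T_C : ∀ i, SemiconjBy (T i) (C i) (C (i + 1))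
  T_commute_C : ∀ {i j}, j ≠ i → j ≠ i + 1 → Commute (T i) (C j)
  T_commute_x : ∀ {i j}, j ≠ i → j ≠ i + 1 → Commute (T i) (x j)
  cross : ∀ {i}, i + 1 < n → (T i + ξ • (C i * C (i + 1))) * x i * T i = x (i + 1)

/-- The element `T_i' = T_i + ξ C_i C_{i+1}` that occurs in the cross relation and in the
recursion for the `f_i`. -/
def twistT (ξ : F) (C T : ℕ → A) (i : ℕ) : A := T i + ξ • (C i * C (i + 1))

/-- The elements `f_i` obtained from `f = f_0` by `f_{i+1} = T_i' f_i T_i`, indexed from `0`. -/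
def fSeq (ξ : F) (C T : ℕ → A) (f : A) : ℕ → A
  | 0 => f
  | k + 1 => twistT ξ C T k * fSeq ξ C T f k * T k

theorem mixed_braid {ξ : F} {C D E S T : A} (dc : D * C = -(C * D)) (ed : E * D = -(D * E))
    (ec : E * C = -(C * E)) (dd : D * D = 1) (se : Commute S E) (tc : Commute T C)
    (sc : SemiconjBy S C D) (td : SemiconjBy T D E) (ss : S * S = ξ • S + 1)
    (tt : T * T = ξ • T + 1) (braid : S * T * S = T * S * T) :
    S * ((T + ξ • (D * E)) * (S + ξ • (C * D))) = (T + ξ • (D * E)) * (S + ξ • (C * D)) * T := by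
  have sd := mul_eq_of_quadratic ss sc
  rw [mul_assoc, mul_assoc] at braid
  simp only [mul_assoc, sub_mul, add_mul, mul_add, smul_sub, smul_add, mul_smul_comm,
    smul_mul_assoc, mul_neg, neg_mul, smul_neg, mul_one, one_mul, se.eq, td.eq, ss, tt,
    mul_mul_of_mul_eq sc, mul_mul_of_mul_eq sd, mul_mul_of_mul_eq se, mul_mul_of_mul_eq tc,
    mul_mul_of_mul_eq dd, mul_mul_of_mul_eq dc, mul_mul_of_mul_eq ec,
    ed, braid]
  module

namespace HeckeCliffordRel

variable {ξ : F} {n : ℕ} {x : ℕ → Aˣ} {C T : ℕ → A} {i j k : ℕ} {f : A}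
  (h : HeckeCliffordRel ξ n x C T)
include h

theorem C_succ_anti (i : ℕ) : C (i + 1) * C i = -(C i * C (i + 1)) :=
  h.C_anti (Nat.succ_ne_self i)

theorem T_mul_C_succ (hi : i + 1 < n) :
    T i * C (i + 1) = C i * T i + ξ • (C (i + 1) - C i) :=
  mul_eq_of_quadratic (h.T_sq hi) (h.T_C i)

theorem T_mul_CC (hi : i + 1 < n) : T i * (C i * C (i + 1)) =
    -(C i * C (i + 1) * T i) + ξ • 1 + ξ • (C i * C (i + 1)) := by
  rw [← mul_assoc, h.T_C, mul_assoc, h.T_mul_C_succ hi, mul_add, ← mul_assoc, h.C_succ_anti,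
    mul_smul_comm, mul_sub, h.C_sq hi, h.C_succ_anti, neg_mul]
  module

theorem CC_sq (hi : i + 1 < n) : C i * C (i + 1) * (C i * C (i + 1)) = -1 := by
  rw [mul_assoc, mul_mul_of_mul_eq (h.C_succ_anti i), neg_mul, mul_neg, mul_assoc, h.C_sq hi,
    mul_one, h.C_sq (by omega)]

theorem twistT_sq (hi : i + 1 < n) :
    twistT ξ C T i * twistT ξ C T i = ξ • twistT ξ C T i + 1 := by
  simp only [twistT, add_mul, mul_add, smul_mul_assoc, mul_smul_comm, h.T_sq hi, h.T_mul_CC hi,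
    h.CC_sq hi]
  module

theorem crossRel (hi : i + 1 < n) : CrossRel ξ (x i) (x (i + 1)) (C i) (C (i + 1)) (T i) where
  cc := h.C_sq (by omega)
  dd := h.C_sq hi
  dc := h.C_succ_anti i
  cx := h.C_x i
  cy := h.C_commute_x (Nat.succ_ne_self i).symm
  dx := h.C_commute_x (Nat.succ_ne_self i)
  dy := h.C_x _
  tx := by
    have e : (T i + ξ • (C i * C (i + 1))) * x i = x (i + 1) * (T i - ξ • 1) := by
      rw [← h.cross hi, mul_assoc _ (T i), mul_sub_eq_one_of_quadratic (h.T_sq hi), mul_one]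
    rw [add_mul, smul_mul_assoc, mul_assoc, (h.C_commute_x (Nat.succ_ne_self i)).eq, ← mul_assoc,
      (h.C_x i).eq, mul_assoc, mul_sub, mul_smul_comm, mul_one] at e
    rw [eq_sub_iff_add_eq, smul_add, ← add_assoc, add_right_comm, e, sub_add_cancel]
  ty := by
    have e : (T i + ξ • (C i * C (i + 1)) - ξ • 1) * x (i + 1) = x i * T i := by
      rw [← h.cross hi, mul_assoc _ _ (T i), ← mul_assoc]
      exact (congrArg (· * _) (sub_mul_eq_one_of_quadratic (h.twistT_sq hi))).trans (one_mul _)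
    rw [sub_mul, add_mul, smul_mul_assoc, mul_assoc, (h.C_x _).eq,
      mul_mul_of_mul_eq (h.C_commute_x (Nat.succ_ne_self i).symm).units_inv_right,
      mul_assoc, smul_mul_assoc, one_mul] at e
    rw [← e]
    module

theorem twistT_mul_x (hi : i + 1 < n) : twistT ξ C T i * x i = x (i + 1) * (T i - ξ • 1) := by
  rw [← h.cross hi, mul_assoc _ (T i), mul_sub_eq_one_of_quadratic (h.T_sq hi), mul_one, twistT]

theorem C_semiconjBy_twistT (hi : i + 1 < n) : SemiconjBy (twistT ξ C T i) (C (i + 1)) (C i) := by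
  simp only [SemiconjBy, twistT, add_mul, mul_add, smul_mul_assoc, mul_smul_comm, mul_assoc,
    h.T_mul_C_succ hi, h.C_sq hi, mul_mul_of_mul_eq (h.C_sq (show i < n by omega)), mul_one,
    one_mul]
  module

theorem C_succ_mul_twistT (hi : i + 1 < n) :
    C (i + 1) * twistT ξ C T i = twistT ξ C T i * C i + ξ • (C (i + 1) - C i) := by
  simp only [twistT, add_mul, mul_add, smul_mul_assoc, mul_smul_comm, mul_assoc, (h.T_C i).eq,
    h.C_succ_anti, mul_neg, mul_mul_of_mul_eq (h.C_succ_anti i),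
    mul_mul_of_mul_eq (h.C_sq (show i < n by omega)), mul_one, one_mul, h.C_sq hi, neg_mul]
  module

theorem CC_commute_C (h1 : j ≠ i) (h2 : j ≠ i + 1) : Commute (C j) (C i * C (i + 1)) :=
  commute_mul_of_mul_eq_neg (h.C_anti h1) (h.C_anti h2)

theorem C_commute_twistT (h1 : j ≠ i) (h2 : j ≠ i + 1) : Commute (C j) (twistT ξ C T i) :=
  (h.T_commute_C h1 h2).symm.add_right ((h.CC_commute_C h1 h2).smul_right ξ)

theorem T_commute_T_of_far (hij : i + 1 < j ∨ j + 1 < i) : Commute (T i) (T j) :=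
  hij.elim h.T_commute_T fun hji => (h.T_commute_T hji).symm

theorem T_commute_twistT (hij : i + 1 < j ∨ j + 1 < i) : Commute (T j) (twistT ξ C T i) :=
  (h.T_commute_T_of_far hij).symm.add_right (((h.T_commute_C (by omega) (by omega)).mul_right
    (h.T_commute_C (by omega) (by omega))).smul_right ξ)

theorem semiconjBy_twistT_mul_twistT (hi : i + 2 < n) :
    SemiconjBy (twistT ξ C T (i + 1) * twistT ξ C T i) (T (i + 1)) (T i) :=
  (mixed_braid (h.C_succ_anti i) (h.C_succ_anti (i + 1)) (h.C_anti (by omega))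
    (h.C_sq (by omega)) (h.T_commute_C (by omega) (by omega))
    (h.T_commute_C (by omega) (by omega)) (h.T_C i) (h.T_C (i + 1)) (h.T_sq (by omega))
    (h.T_sq hi) (h.braid i)).symm

theorem twistT_mul_fSeq (hi : i + 1 < n) :
    twistT ξ C T i * fSeq ξ C T f i = fSeq ξ C T f (i + 1) * (T i - ξ • 1) := by
  rw [fSeq, mul_assoc _ (T i), mul_sub_eq_one_of_quadratic (h.T_sq hi), mul_one]

theorem twistT_mul_fSeq_succ (hi : i + 1 < n) : twistT ξ C T i * fSeq ξ C T f (i + 1) =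
    ξ • fSeq ξ C T f (i + 1) + fSeq ξ C T f i * T i := by
  rw [fSeq, ← mul_assoc, ← mul_assoc, h.twistT_sq hi, add_mul, add_mul, smul_mul_assoc,
    smul_mul_assoc, one_mul]

theorem T_commute_fSeq_of_lt (hfT : ∀ j, 0 < j → Commute (T j) f) (hj : k < j) :
    Commute (T j) (fSeq ξ C T f k) := by
  induction k with
  | zero => exact hfT j hj
  | succ k ih =>
    exact ((h.T_commute_twistT (Or.inl hj)).mul_right (ih (by omega))).mul_right
      (h.T_commute_T_of_far (Or.inr hj))

theorem T_commute_fSeq_of_gt (hfT : ∀ j, 0 < j → Commute (T j) f) (hk : k < n)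
    (hj : j + 1 < k) : Commute (T j) (fSeq ξ C T f k) := by
  induction k with
  | zero => omega
  | succ k ih =>
    rcases Nat.lt_succ_iff_lt_or_eq.1 hj with hj | rfl
    · exact ((h.T_commute_twistT (Or.inr hj)).mul_right (ih (by omega) hj)).mul_right
        (h.T_commute_T_of_far (Or.inl hj))
    · calc T j * (twistT ξ C T (j + 1) * (twistT ξ C T j * fSeq ξ C T f j * T j) * T (j + 1))
          = T j * (twistT ξ C T (j + 1) * twistT ξ C T j) * fSeq ξ C T f j * T j * T (j + 1) := by
            simp only [mul_assoc]
        _ = twistT ξ C T (j + 1) * twistT ξ C T j * (T (j + 1) * fSeq ξ C T f j) * T j *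
              T (j + 1) := by
            rw [← (h.semiconjBy_twistT_mul_twistT hk).eq]; simp only [mul_assoc]
        _ = twistT ξ C T (j + 1) * twistT ξ C T j * fSeq ξ C T f j *
              (T (j + 1) * T j * T (j + 1)) := by
            rw [(h.T_commute_fSeq_of_lt hfT (Nat.lt_succ_self j)).eq]; simp only [mul_assoc]
        _ = _ := by rw [← h.braid]; simp only [fSeq, mul_assoc]

theorem C_commute_fSeq_of_lt (hfC : ∀ j, 0 < j → Commute (C j) f) (hj : k < j) :
    Commute (C j) (fSeq ξ C T f k) := by
  induction k with
  | zero => exact hfC j hj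
  | succ k ih =>
    exact ((h.C_commute_twistT (by omega) (by omega)).mul_right (ih (by omega))).mul_right
      (h.T_commute_C (by omega) (by omega)).symm

theorem C_commute_fSeq_of_gt (hfC : ∀ j, 0 < j → Commute (C j) f) (hk : k < n)
    (hj : j < k) : Commute (C j) (fSeq ξ C T f k) := by
  induction k with
  | zero => omega
  | succ k ih =>
    rcases Nat.lt_succ_iff_lt_or_eq.1 hj with hj | rfl
    · exact ((h.C_commute_twistT (by omega) (by omega)).mul_right (ih (by omega) hj)).mul_right
        (h.T_commute_C (by omega) (by omega)).symm
    · rw [Commute, SemiconjBy, fSeq, ← mul_assoc, ← mul_assoc, ← (h.C_semiconjBy_twistT hk).eq,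
        mul_assoc (twistT ξ C T j), (h.C_commute_fSeq_of_lt hfC (Nat.lt_succ_self j)).eq,
        ← mul_assoc, mul_assoc _ (C (j + 1)), ← (h.T_C j).eq, ← mul_assoc]

end HeckeCliffordRel

end HeckeCliffordRelations

section Subalgebras

variable {F A : Type*} [CommRing F] [Ring A] [Algebra F A] {ξ : F} {n : ℕ} {x : ℕ → Aˣ}
  {C T : ℕ → A} {i j k l : ℕ}

/-- The subalgebra of Laurent polynomials in the `x_i` with `i < k`. -/
def polyAlg (F : Type*) [CommRing F] [Algebra F A] (x : ℕ → Aˣ) (k : ℕ) : Subalgebra F A :=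
  Algebra.adjoin F {a | ∃ i < k, a = x i ∨ a = ↑(x i)⁻¹}

/-- The finite Hecke–Clifford subalgebra, generated by the `C_i` with `i < k` and the `T_i` with
`i + 1 < k`. -/
def finAlg (F : Type*) [CommRing F] [Algebra F A] (C T : ℕ → A) (k : ℕ) : Subalgebra F A :=
  Algebra.adjoin F ({a | ∃ i < k, a = C i} ∪ {a | ∃ i, i + 1 < k ∧ a = T i})

theorem C_mem_finAlg (hi : i < k) : C i ∈ finAlg F C T k :=
  Algebra.subset_adjoin (Or.inl ⟨i, hi, rfl⟩)

theorem T_mem_finAlg (hi : i + 1 < k) : T i ∈ finAlg F C T k :=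
  Algebra.subset_adjoin (Or.inr ⟨i, hi, rfl⟩)

theorem CC_mem_finAlg (hi : i + 1 < k) : C i * C (i + 1) ∈ finAlg F C T k :=
  mul_mem (C_mem_finAlg (by omega)) (C_mem_finAlg hi)

theorem twistT_mem_finAlg (hi : i + 1 < k) : twistT ξ C T i ∈ finAlg F C T k :=
  add_mem (T_mem_finAlg hi) (Subalgebra.smul_mem _ (CC_mem_finAlg hi) ξ)

theorem T_sub_mem_finAlg (hi : i + 1 < k) (r : F) : T i - r • 1 ∈ finAlg F C T k :=
  sub_mem (T_mem_finAlg hi) (Subalgebra.smul_mem _ (one_mem _) r)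

theorem finAlg_mono : Monotone (finAlg F C T) := fun _ _ hkl =>
  Algebra.adjoin_mono (Set.union_subset_union (fun _ ⟨i, hi, e⟩ => ⟨i, hi.trans_le hkl, e⟩)
    (fun _ ⟨i, hi, e⟩ => ⟨i, hi.trans_le hkl, e⟩))

theorem polyAlg_mono : Monotone (polyAlg F x) := fun _ _ hkl =>
  Algebra.adjoin_mono fun _ ⟨i, hi, e⟩ => ⟨i, hi.trans_le hkl, e⟩

theorem x_mem_polyAlg (hi : i < k) : (x i : A) ∈ polyAlg F x k :=
  Algebra.subset_adjoin ⟨i, hi, Or.inl rfl⟩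

theorem x_inv_mem_polyAlg (hi : i < k) : (↑(x i)⁻¹ : A) ∈ polyAlg F x k :=
  Algebra.subset_adjoin ⟨i, hi, Or.inr rfl⟩

theorem x_zpow_mem_polyAlg (hi : i < k) (e : ℤ) : (↑(x i ^ e) : A) ∈ polyAlg F x k := by
  cases e with
  | ofNat m =>
    rw [Int.ofNat_eq_natCast, zpow_natCast, Units.val_pow_eq_pow_val]
    exact pow_mem (x_mem_polyAlg hi) m
  | negSucc m =>
    rw [zpow_negSucc, ← inv_pow, Units.val_pow_eq_pow_val]
    exact pow_mem (x_inv_mem_polyAlg hi) _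

theorem commute_of_mem_polyAlg {a p : A} (ha : ∀ i < k, Commute a (x i))
    (hp : p ∈ polyAlg F x k) : Commute a p := by
  refine Algebra.commute_of_mem_adjoin_of_forall_mem_commute hp ?_
  rintro _ ⟨i, hi, rfl | rfl⟩
  · exact ha i hi
  · exact (ha i hi).units_inv_right

theorem commute_of_mem_finAlg {a b : A} (hC : ∀ i < k, Commute a (C i))
    (hT : ∀ i, i + 1 < k → Commute a (T i)) (hb : b ∈ finAlg F C T k) : Commute a b := by
  refine Algebra.commute_of_mem_adjoin_of_forall_mem_commute hb ?_
  rintro _ (⟨i, hi, rfl⟩ | ⟨i, hi, rfl⟩)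
  · exact hC i hi
  · exact hT i hi

/-- The span of the `x_k^a p b` with `0 < a < e`, where `p` is a Laurent polynomial in the previous
variables and `b` lies in the finite subalgebra on `k + 1` strands; the terms of `f_k` strictly
between the two extreme ones lie here. -/
def midSpan (F : Type*) [CommRing F] [Algebra F A] (x : ℕ → Aˣ) (C T : ℕ → A) (k e : ℕ) :
    Submodule F A :=
  Submodule.span F {y | ∃ a, 0 < a ∧ a < e ∧ ∃ p ∈ polyAlg F x k, ∃ b ∈ finAlg F C T (k + 1),
    y = (x k : A) ^ a * p * b}

theorem midSpan_mono : Monotone (midSpan F x C T k) := fun _ _ he =>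
  Submodule.span_mono fun _ ⟨a, h0, h1, r⟩ => ⟨a, h0, h1.trans_le he, r⟩

theorem pow_mul_mul_mem_midSpan {e a : ℕ} (h0 : 0 < a) (h1 : a < e) {p b : A}
    (hp : p ∈ polyAlg F x k) (hb : b ∈ finAlg F C T (k + 1)) :
    (x k : A) ^ a * p * b ∈ midSpan F x C T k e :=
  Submodule.subset_span ⟨a, h0, h1, p, hp, b, hb, rfl⟩

namespace HeckeCliffordRel

variable (h : HeckeCliffordRel ξ n x C T)
include h

theorem C_commute_of_mem_polyAlg (hj : k ≤ j) {p : A} (hp : p ∈ polyAlg F x k) :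
    Commute (C j) p :=
  commute_of_mem_polyAlg (fun _ _ => h.C_commute_x (by omega)) hp

theorem T_commute_of_mem_polyAlg (hj : k ≤ j) {p : A} (hp : p ∈ polyAlg F x k) :
    Commute (T j) p :=
  commute_of_mem_polyAlg (fun _ _ => h.T_commute_x (by omega) (by omega)) hp

theorem fSeq_commute_of_mem_finAlg {f b : A} (hfC : ∀ j, 0 < j → Commute (C j) f)
    (hfT : ∀ j, 0 < j → Commute (T j) f) (hk : k < n) (hb : b ∈ finAlg F C T k) :
    Commute (fSeq ξ C T f k) b :=
  commute_of_mem_finAlg (fun _ hi => (h.C_commute_fSeq_of_gt hfC hk hi).symm)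
    (fun _ hi => (h.T_commute_fSeq_of_gt hfT hk hi).symm) hb

theorem CC_semiconjBy_x (i : ℕ) : SemiconjBy (C i * C (i + 1)) (x i) ↑(x i)⁻¹ :=
  (h.C_x i).mul_left (h.C_commute_x (Nat.succ_ne_self i))

theorem twistT_mul_x_pow (hk : k + 1 < n) (e : ℕ) :
    twistT ξ C T k * (x k : A) ^ (e + 1) = (x (k + 1) : A) ^ (e + 1) * (T k - ξ • 1) -
      ξ • ∑ a ∈ Finset.range e, (x (k + 1) : A) ^ (a + 1) *
        ((↑(x k)⁻¹ : A) ^ (e - a) * (C k * C (k + 1)) + (x k : A) ^ (e - a)) := by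
  induction e with
  | zero => simpa using h.twistT_mul_x hk
  | succ e ih =>
    have hpeel : twistT ξ C T k * (x k : A) ^ (e + 1 + 1) =
        x (k + 1) * (twistT ξ C T k * (x k : A) ^ (e + 1)) - ξ • ((x (k + 1) : A) *
          ((↑(x k)⁻¹ : A) ^ (e + 1) * (C k * C (k + 1)) + (x k : A) ^ (e + 1))) := by
      rw [pow_succ' _ (e + 1), ← mul_assoc, h.twistT_mul_x hk,
        ← ((h.CC_semiconjBy_x k).pow_right _).eq, twistT]
      simp only [add_mul, mul_add, sub_mul, mul_sub, smul_mul_assoc, mul_smul_comm,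
        mul_assoc, mul_one]
      module
    rw [hpeel, ih, Finset.sum_range_succ']
    simp only [Nat.add_sub_add_right, mul_sub, mul_smul_comm, Finset.mul_sum, smul_add,
      ← mul_assoc, ← pow_succ', zero_add, pow_one, Nat.sub_zero]
    abel

theorem twistT_mul_mul_T_sub_mem_midSpan (hk : k + 1 < n) {p b : A} (hp : p ∈ polyAlg F x k)
    (hb : b ∈ finAlg F C T (k + 1)) (e : ℕ) :
    twistT ξ C T k * ((x k : A) ^ (e + 1) * p * b) * T k -
      (x (k + 1) : A) ^ (e + 1) * p * ((T k - ξ • 1) * b * T k) ∈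
      midSpan F x C T (k + 1) (e + 1) := by
  have hTp : Commute (T k - ξ • 1) p :=
    (h.T_commute_of_mem_polyAlg le_rfl hp).sub_left ((Commute.one_left p).smul_left ξ)
  have hCp : Commute (C k * C (k + 1)) p :=
    (h.C_commute_of_mem_polyAlg le_rfl hp).mul_left
      (h.C_commute_of_mem_polyAlg (Nat.le_succ k) hp)
  have hp' := polyAlg_mono (Nat.le_succ k) hp
  have hbT : b * T k ∈ finAlg F C T (k + 1 + 1) :=
    mul_mem (finAlg_mono (Nat.le_succ _) hb) (T_mem_finAlg (by omega))
  have hexpand : twistT ξ C T k * ((x k : A) ^ (e + 1) * p * b) * T k -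
      (x (k + 1) : A) ^ (e + 1) * p * ((T k - ξ • 1) * b * T k) =
      -(ξ • ∑ a ∈ Finset.range e,
        ((x (k + 1) : A) ^ (a + 1) * ((↑(x k)⁻¹ : A) ^ (e - a) * p) *
            (C k * C (k + 1) * (b * T k)) +
          (x (k + 1) : A) ^ (a + 1) * ((x k : A) ^ (e - a) * p) * (b * T k))) := by
    rw [mul_assoc _ p b, ← mul_assoc (twistT ξ C T k), h.twistT_mul_x_pow hk, sub_mul, sub_mul,
      mul_assoc _ (T k - ξ • 1), ← mul_assoc (T k - ξ • 1) p b, hTp.eq]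
    generalize C k * C (k + 1) = c at hCp
    simp only [mul_assoc, sub_sub_cancel_left, smul_mul_assoc, Finset.sum_mul, add_mul, mul_add,
      mul_mul_of_mul_eq hCp]
  rw [hexpand]
  refine neg_mem (Submodule.smul_mem _ _ (sum_mem fun a ha => ?_))
  have hae := Finset.mem_range.1 ha
  exact add_mem
    (pow_mul_mul_mem_midSpan a.succ_pos (by omega)
      (mul_mem (pow_mem (x_inv_mem_polyAlg k.lt_succ_self) _) hp')
      (mul_mem (CC_mem_finAlg (by omega)) hbT))
    (pow_mul_mul_mem_midSpan a.succ_pos (by omega)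
      (mul_mem (pow_mem (x_mem_polyAlg k.lt_succ_self) _) hp') hbT)

theorem twistT_mul_mul_T_mem_midSpan (hk : k + 1 < n) {e : ℕ} {y : A}
    (hy : y ∈ midSpan F x C T k e) : twistT ξ C T k * y * T k ∈ midSpan F x C T (k + 1) e := by
  suffices midSpan F x C T k e ≤
      (midSpan F x C T (k + 1) e).comap (LinearMap.mulLeftRight F (twistT ξ C T k, T k)) from
    this hy
  refine Submodule.span_le.2 ?_
  rintro _ ⟨_ | a, h0, h1, p, hp, b, hb, rfl⟩
  · exact absurd h0 (lt_irrefl 0)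
  rw [SetLike.mem_coe, Submodule.mem_comap, LinearMap.mulLeftRight_apply]
  rw [← sub_add_cancel (twistT ξ C T k * _ * T k) _]
  exact add_mem (midSpan_mono h1.le (h.twistT_mul_mul_T_sub_mem_midSpan hk hp hb a))
    (pow_mul_mul_mem_midSpan h0 h1 (polyAlg_mono (Nat.le_succ k) hp)
      (mul_mem (mul_mem (T_sub_mem_finAlg (by omega) ξ) (finAlg_mono (Nat.le_succ _) hb))
        (T_mem_finAlg (by omega))))

theorem exists_isUnit_fSeq_sub_mem_midSpan {d : ℕ} {f : A} {a₀ : F}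
    (hf : f - (x 0 : A) ^ (d + 1) - a₀ • 1 ∈ midSpan F x C T 0 (d + 1)) (hk : k < n) :
    ∃ u : finAlg F C T (k + 1), IsUnit u ∧
      fSeq ξ C T f k - (x k : A) ^ (d + 1) - a₀ • (u : A) ∈ midSpan F x C T k (d + 1) := by
  induction k with
  | zero => exact ⟨1, isUnit_one, hf⟩
  | succ k ih =>
    obtain ⟨u, hu, hm⟩ := ih (by omega)
    let t : finAlg F C T (k + 1 + 1) := ⟨T k, T_mem_finAlg (by omega)⟩
    let t' : finAlg F C T (k + 1 + 1) := ⟨twistT ξ C T k, twistT_mem_finAlg (by omega)⟩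
    have ht : IsUnit t := isUnit_of_quadratic (ξ := ξ) (Subtype.ext (h.T_sq hk))
    have ht' : IsUnit t' := isUnit_of_quadratic (ξ := ξ) (Subtype.ext (h.twistT_sq hk))
    refine ⟨t' * Subalgebra.inclusion (finAlg_mono (Nat.le_succ _)) u * t,
      (ht'.mul (hu.map _)).mul ht, ?_⟩
    have hlead := h.twistT_mul_mul_T_sub_mem_midSpan hk (one_mem (polyAlg F x k))
      (one_mem (finAlg F C T (k + 1))) d
    rw [mul_one, mul_one, mul_one, mul_one, sub_mul_eq_one_of_quadratic (h.T_sq hk),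
      mul_one] at hlead
    refine (congrArg (· ∈ midSpan F x C T (k + 1) (d + 1)) ?_).mp
      (add_mem hlead (h.twistT_mul_mul_T_mem_midSpan hk hm))
    simp only [fSeq, t, t', MulMemClass.coe_mul, Subalgebra.coe_inclusion, mul_sub, sub_mul,
      mul_smul_comm, smul_mul_assoc]
    abel

end HeckeCliffordRel

end Subalgebras

section Adjoin

variable {R A : Type*} [CommSemiring R] [Semiring A] [Algebra R A]

theorem mul_mem_of_mem_span {S : Set A} {N : Submodule R A} {a y : A} (hS : ∀ s ∈ S, a * s ∈ N)
    (hy : y ∈ Submodule.span R S) : a * y ∈ N :=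
  (Submodule.span_le (p := N.comap (LinearMap.mulLeft R a))).2 hS hy

theorem mul_mem_of_mem_span_right {S : Set A} {N : Submodule R A} {a y : A}
    (hS : ∀ s ∈ S, s * a ∈ N) (hy : y ∈ Submodule.span R S) : y * a ∈ N :=
  (Submodule.span_le (p := N.comap (LinearMap.mulRight R a))).2 hS hy

theorem mul_mem_of_mem_adjoin {S : Set A} {N : Submodule R A} {a : A}
    (hS : ∀ s ∈ S, ∀ y ∈ N, s * y ∈ N) (ha : a ∈ Algebra.adjoin R S) {y : A} (hy : y ∈ N) :
    a * y ∈ N := by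
  induction ha using Algebra.adjoin_induction generalizing y with
  | mem s hs => exact hS s hs y hy
  | algebraMap r => exact Algebra.smul_def r y ▸ N.smul_mem r hy
  | add a b _ _ iha ihb => exact add_mul a b y ▸ add_mem (iha hy) (ihb hy)
  | mul a b _ _ iha ihb => exact mul_assoc a b y ▸ iha (ihb hy)

theorem mul_mem_of_mem_adjoin_right {S : Set A} {N : Submodule R A} {a : A}
    (hS : ∀ s ∈ S, ∀ y ∈ N, y * s ∈ N) (ha : a ∈ Algebra.adjoin R S) {y : A} (hy : y ∈ N) :
    y * a ∈ N := by
  induction ha using Algebra.adjoin_induction generalizing y with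
  | mem s hs => exact hS s hs y hy
  | algebraMap r => exact Algebra.commutes r y ▸ Algebra.smul_def r y ▸ N.smul_mem r hy
  | add a b _ _ iha ihb => exact mul_add y a b ▸ add_mem (iha hy) (ihb hy)
  | mul a b _ _ iha ihb => exact mul_assoc y a b ▸ ihb (iha hy)

theorem exists_semiconjBy_of_mem_adjoin {S : Set A} {c : A}
    (hS : ∀ s ∈ S, ∃ s' ∈ Algebra.adjoin R S, SemiconjBy c s s') {p : A}
    (hp : p ∈ Algebra.adjoin R S) : ∃ p' ∈ Algebra.adjoin R S, SemiconjBy c p p' := by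
  induction hp using Algebra.adjoin_induction with
  | mem s hs => exact hS s hs
  | algebraMap r => exact ⟨_, algebraMap_mem _ r, (Algebra.commutes r c).symm⟩
  | add p r _ _ ihp ihr =>
    obtain ⟨p', hp', ep⟩ := ihp
    obtain ⟨r', hr', er⟩ := ihr
    exact ⟨_, add_mem hp' hr', ep.add_right er⟩
  | mul p r _ _ ihp ihr =>
    obtain ⟨p', hp', ep⟩ := ihp
    obtain ⟨r', hr', er⟩ := ihr
    exact ⟨_, mul_mem hp' hr', ep.mul_right er⟩

end Adjoin

section Products

variable {F A : Type*} [CommRing F] [Ring A] [Algebra F A] {ξ : F} {n : ℕ} {x : ℕ → Aˣ}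
  {C T : ℕ → A} {i j k l m m' : ℕ} {f : A}

/-- The span of the products of a Laurent polynomial and a finite Hecke–Clifford element, on `k`
strands. -/
def prodSpan (F : Type*) [CommRing F] [Algebra F A] (x : ℕ → Aˣ) (C T : ℕ → A) (k : ℕ) :
    Submodule F A :=
  (polyAlg F x k).toSubmodule * (finAlg F C T k).toSubmodule

/-- The span of the products `p f_l b` with `l < m`, where `p` is a Laurent polynomial and `b` a
finite Hecke–Clifford element on `k` strands. -/
def fSpan (ξ : F) (x : ℕ → Aˣ) (C T : ℕ → A) (f : A) (k m : ℕ) : Submodule F A :=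
  (polyAlg F x k).toSubmodule * Submodule.span F (fSeq ξ C T f '' Set.Iio m) *
    (finAlg F C T k).toSubmodule

/-- The span of the `p T_i'`, `p` and `p C_i C_{i+1}` with `p` a Laurent polynomial on `k` strands:
the terms that arise in moving a Laurent polynomial to the left across `T_i'`. -/
def twistSpan (ξ : F) (x : ℕ → Aˣ) (C T : ℕ → A) (k i : ℕ) : Submodule F A :=
  (polyAlg F x k).toSubmodule *
    Submodule.span F {twistT ξ C T i, 1, C i * C (i + 1)}

theorem poly_mul_mem_prodSpan {p y : A} (hp : p ∈ polyAlg F x k) (hy : y ∈ prodSpan F x C T k) :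
    p * y ∈ prodSpan F x C T k := by
  have := Submodule.mul_mem_mul (M := (polyAlg F x k).toSubmodule) hp hy
  rwa [prodSpan, ← mul_assoc, Subalgebra.isIdempotentElem_toSubmodule] at this

theorem mul_fin_mem_prodSpan {b y : A} (hb : b ∈ finAlg F C T k) (hy : y ∈ prodSpan F x C T k) :
    y * b ∈ prodSpan F x C T k := by
  have := Submodule.mul_mem_mul (N := (finAlg F C T k).toSubmodule) hy hb
  rwa [prodSpan, mul_assoc, Subalgebra.isIdempotentElem_toSubmodule] at this

theorem poly_mul_mem_fSpan {p y : A} (hp : p ∈ polyAlg F x k)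
    (hy : y ∈ fSpan ξ x C T f k m) : p * y ∈ fSpan ξ x C T f k m := by
  have := Submodule.mul_mem_mul (M := (polyAlg F x k).toSubmodule) hp hy
  rwa [fSpan, ← mul_assoc, ← mul_assoc, Subalgebra.isIdempotentElem_toSubmodule] at this

theorem mul_fin_mem_fSpan {b y : A} (hb : b ∈ finAlg F C T k)
    (hy : y ∈ fSpan ξ x C T f k m) : y * b ∈ fSpan ξ x C T f k m := by
  have := Submodule.mul_mem_mul (N := (finAlg F C T k).toSubmodule) hy hb
  rwa [fSpan, mul_assoc, Subalgebra.isIdempotentElem_toSubmodule] at this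

theorem fSpan_mono : Monotone (fSpan ξ x C T f k) := fun _ _ hm => by
  unfold fSpan
  gcongr

theorem mul_fSeq_mul_mem_fSpan (hl : l < m) {p b : A} (hp : p ∈ polyAlg F x k)
    (hb : b ∈ finAlg F C T k) : p * fSeq ξ C T f l * b ∈ fSpan ξ x C T f k m :=
  Submodule.mul_mem_mul (Submodule.mul_mem_mul hp (Submodule.subset_span ⟨l, hl, rfl⟩)) hb

theorem fSeq_mul_mem_fSpan (hl : l < m) {b : A} (hb : b ∈ finAlg F C T k) :
    fSeq ξ C T f l * b ∈ fSpan ξ x C T f k m :=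
  one_mul (fSeq ξ C T f l) ▸ mul_fSeq_mul_mem_fSpan hl (one_mem _) hb

theorem mul_mem_fSpan_of_mul_fSeq {c : A} {s : Set A}
    (hc : ∀ p ∈ polyAlg F x k, c * p ∈ (polyAlg F x k).toSubmodule * Submodule.span F s)
    (hs : ∀ a ∈ s, ∀ l < m, a * fSeq ξ C T f l ∈ fSpan ξ x C T f k m') {y : A}
    (hy : y ∈ fSpan ξ x C T f k m) : c * y ∈ fSpan ξ x C T f k m' := by
  have hcP : Submodule.span F {c} * (polyAlg F x k).toSubmodule ≤
      (polyAlg F x k).toSubmodule * Submodule.span F s :=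
    Submodule.mul_le.2 fun a ha p hp => by
      obtain ⟨r, rfl⟩ := Submodule.mem_span_singleton.1 ha
      exact smul_mul_assoc r c p ▸ Submodule.smul_mem _ r (hc p hp)
  have hsf : Submodule.span F s * Submodule.span F (fSeq ξ C T f '' Set.Iio m) ≤
      fSpan ξ x C T f k m' := by
    rw [Submodule.span_mul_span, Submodule.span_le]
    rintro _ ⟨a, ha, _, ⟨l, hl, rfl⟩, rfl⟩
    exact hs a ha l hl
  have hle : Submodule.span F {c} * fSpan ξ x C T f k m ≤ fSpan ξ x C T f k m' := by
    calc Submodule.span F {c} * fSpan ξ x C T f k m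
        = Submodule.span F {c} * (polyAlg F x k).toSubmodule *
            Submodule.span F (fSeq ξ C T f '' Set.Iio m) * (finAlg F C T k).toSubmodule := by
          simp only [fSpan, mul_assoc]
      _ ≤ (polyAlg F x k).toSubmodule * Submodule.span F s *
            Submodule.span F (fSeq ξ C T f '' Set.Iio m) * (finAlg F C T k).toSubmodule := by
          gcongr
      _ = (polyAlg F x k).toSubmodule * (Submodule.span F s *
            Submodule.span F (fSeq ξ C T f '' Set.Iio m)) * (finAlg F C T k).toSubmodule := by
          rw [mul_assoc (polyAlg F x k).toSubmodule]
      _ ≤ (polyAlg F x k).toSubmodule * fSpan ξ x C T f k m' * (finAlg F C T k).toSubmodule := by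
          gcongr
      _ ≤ fSpan ξ x C T f k m' := Submodule.mul_le.2 fun y hy b hb => mul_fin_mem_fSpan hb
          (Submodule.mul_le.2 (fun p hp z hz => poly_mul_mem_fSpan hp hz) hy)
  exact hle (Submodule.mul_mem_mul (Submodule.mem_span_singleton_self c) hy)

theorem poly_mul_mem_twistSpan {p y : A} (hp : p ∈ polyAlg F x k)
    (hy : y ∈ twistSpan ξ x C T k i) : p * y ∈ twistSpan ξ x C T k i := by
  have := Submodule.mul_mem_mul (M := (polyAlg F x k).toSubmodule) hp hy
  rwa [twistSpan, ← mul_assoc, Subalgebra.isIdempotentElem_toSubmodule] at this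

theorem poly_mem_twistSpan {p : A} (hp : p ∈ polyAlg F x k) : p ∈ twistSpan ξ x C T k i :=
  mul_one p ▸ Submodule.mul_mem_mul (M := (polyAlg F x k).toSubmodule) hp
    (Submodule.subset_span (by simp))

theorem poly_mul_CC_mem_twistSpan {p : A} (hp : p ∈ polyAlg F x k) :
    p * (C i * C (i + 1)) ∈ twistSpan ξ x C T k i :=
  Submodule.mul_mem_mul hp (Submodule.subset_span (by simp))

theorem poly_mul_twistT_mem_twistSpan {p : A} (hp : p ∈ polyAlg F x k) :
    p * twistT ξ C T i ∈ twistSpan ξ x C T k i :=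
  Submodule.mul_mem_mul hp (Submodule.subset_span (by simp))

theorem poly_mul_T_mem_twistSpan {p : A} (hp : p ∈ polyAlg F x k) :
    p * T i ∈ twistSpan ξ x C T k i := by
  rw [← add_sub_cancel_right (p * T i) (ξ • (p * (C i * C (i + 1)))), ← mul_smul_comm, ← mul_add]
  exact sub_mem (poly_mul_twistT_mem_twistSpan hp)
    (mul_smul_comm ξ p _ ▸ Submodule.smul_mem _ ξ (poly_mul_CC_mem_twistSpan hp))

namespace HeckeCliffordRel

variable (h : HeckeCliffordRel ξ n x C T)
include h

theorem exists_C_semiconjBy_poly (j : ℕ) {p : A} (hp : p ∈ polyAlg F x k) :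
    ∃ p' ∈ polyAlg F x k, SemiconjBy (C j) p p' := by
  refine exists_semiconjBy_of_mem_adjoin ?_ hp
  rintro _ ⟨i, hi, hs⟩
  obtain rfl | hij := eq_or_ne j i
  · obtain rfl | rfl := hs
    · exact ⟨_, x_inv_mem_polyAlg hi, h.C_x j⟩
    · exact ⟨_, x_mem_polyAlg hi, inv_inv (x j) ▸ (h.C_x j).units_inv_right⟩
  · obtain rfl | rfl := hs
    · exact ⟨_, x_mem_polyAlg hi, h.C_commute_x hij⟩
    · exact ⟨_, x_inv_mem_polyAlg hi, (h.C_commute_x hij).units_inv_right⟩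

theorem exists_CC_semiconjBy_poly (i j : ℕ) {p : A} (hp : p ∈ polyAlg F x k) :
    ∃ p' ∈ polyAlg F x k, SemiconjBy (C i * C j) p p' := by
  obtain ⟨p', hp', hj⟩ := h.exists_C_semiconjBy_poly j hp
  obtain ⟨r, hr, hi⟩ := h.exists_C_semiconjBy_poly i hp'
  exact ⟨r, hr, hi.mul_left hj⟩

theorem T_mul_x_mem_twistSpan (hk : k ≤ n) (hi : i + 1 < k) (hj : j < k) {s : A}
    (hs : s = x j ∨ s = ↑(x j)⁻¹) : T i * s ∈ twistSpan ξ x C T k i := by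
  have hcr := h.crossRel (hi.trans_le hk)
  have hx {l : ℕ} (hl : l < k) := x_mem_polyAlg (F := F) (x := x) hl
  have hx' {l : ℕ} (hl : l < k) := x_inv_mem_polyAlg (F := F) (x := x) hl
  have hi' : i < k := by omega
  have smul_mem {y : A} (hy : y ∈ twistSpan ξ x C T k i) : ξ • y ∈ twistSpan ξ x C T k i :=
    Submodule.smul_mem _ ξ hy
  obtain rfl | hji := eq_or_ne j i
  · obtain rfl | rfl := hs
    · rw [hcr.tx]
      exact sub_mem (poly_mul_T_mem_twistSpan (hx hi)) (smul_mem
        (add_mem (poly_mem_twistSpan (hx hi)) (poly_mul_CC_mem_twistSpan (hx' hi'))))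
    · rw [hcr.t_mul_xinv]
      exact add_mem (add_mem (poly_mul_T_mem_twistSpan (hx' hi))
        (smul_mem (poly_mem_twistSpan (hx' hi')))) (smul_mem (poly_mul_CC_mem_twistSpan (hx' hi)))
  obtain rfl | hji' := eq_or_ne j (i + 1)
  · obtain rfl | rfl := hs
    · rw [hcr.ty]
      exact add_mem (poly_mul_T_mem_twistSpan (hx hi')) (smul_mem
        (sub_mem (poly_mem_twistSpan (hx hi)) (poly_mul_CC_mem_twistSpan (hx' hi))))
    · rw [hcr.t_mul_yinv]
      exact add_mem (sub_mem (poly_mul_T_mem_twistSpan (hx' hi'))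
        (smul_mem (poly_mem_twistSpan (hx' hi')))) (smul_mem (poly_mul_CC_mem_twistSpan (hx' hi')))
  have hc : Commute (T i) (x j : A) := h.T_commute_x hji hji'
  obtain rfl | rfl := hs
  · exact hc.eq ▸ poly_mul_T_mem_twistSpan (hx hj)
  · exact hc.units_inv_right.eq ▸ poly_mul_T_mem_twistSpan (hx' hj)

theorem mul_poly_mem_twistSpan (hk : k ≤ n) (hi : i + 1 < k) {p y : A} (hp : p ∈ polyAlg F x k)
    (hy : y ∈ twistSpan ξ x C T k i) : y * p ∈ twistSpan ξ x C T k i := by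
  refine mul_mem_of_mem_adjoin_right ?_ hp hy
  intro s hs y hy
  have hCC : C i * C (i + 1) * s ∈ twistSpan ξ x C T k i := by
    obtain ⟨s', hs', hc⟩ := h.exists_CC_semiconjBy_poly i (i + 1) (Algebra.subset_adjoin hs)
    exact hc.eq ▸ poly_mul_CC_mem_twistSpan hs'
  refine Submodule.mul_induction_on hy (fun p hp t ht => ?_)
    fun y z hy hz => add_mul y z s ▸ add_mem hy hz
  rw [mul_assoc]
  refine poly_mul_mem_twistSpan hp (mul_mem_of_mem_span_right ?_ ht)
  rintro _ (rfl | rfl | rfl)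
  · obtain ⟨j, hj, hs⟩ := hs
    rw [twistT, add_mul, smul_mul_assoc]
    exact add_mem (h.T_mul_x_mem_twistSpan hk hi hj hs) (Submodule.smul_mem _ ξ hCC)
  · exact (one_mul s).symm ▸ poly_mem_twistSpan (Algebra.subset_adjoin hs)
  · exact hCC

theorem twistT_mul_poly_mem_twistSpan (hk : k ≤ n) (hi : i + 1 < k) {p : A}
    (hp : p ∈ polyAlg F x k) : twistT ξ C T i * p ∈ twistSpan ξ x C T k i :=
  h.mul_poly_mem_twistSpan hk hi hp (one_mul (twistT ξ C T i) ▸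
    poly_mul_twistT_mem_twistSpan (one_mem _))

theorem fin_mul_mem_prodSpan (hk : k ≤ n) {b y : A} (hb : b ∈ finAlg F C T k)
    (hy : y ∈ prodSpan F x C T k) : b * y ∈ prodSpan F x C T k := by
  refine mul_mem_of_mem_adjoin ?_ hb hy
  intro s hs y hy
  refine Submodule.mul_induction_on hy (fun p hp b hb => ?_)
    fun y z hy hz => mul_add s y z ▸ add_mem hy hz
  rw [← mul_assoc]
  refine mul_fin_mem_prodSpan hb ?_
  obtain ⟨i, hi, rfl⟩ | ⟨i, hi, rfl⟩ := hs
  · obtain ⟨p', hp', hc⟩ := h.exists_C_semiconjBy_poly i hp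
    exact hc.eq ▸ Submodule.mul_mem_mul hp' (C_mem_finAlg hi)
  · have hle : twistSpan ξ x C T k i ≤ prodSpan F x C T k := by
      refine mul_le_mul' le_rfl (Submodule.span_le.2 ?_)
      rintro _ (rfl | rfl | rfl)
      exacts [twistT_mem_finAlg hi, one_mem (finAlg F C T k), CC_mem_finAlg hi]
    exact hle (h.mul_poly_mem_twistSpan hk hi hp
      (one_mul (T i) ▸ poly_mul_T_mem_twistSpan (one_mem _)))

section Ideal

variable (hfC : ∀ j, 0 < j → Commute (C j) f) (hfT : ∀ j, 0 < j → Commute (T j) f)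
  (hf0 : ∃ p ∈ polyAlg F x 1, C 0 * f = p * f * C 0)

theorem C_mul_mem_fSpan_of_mul_fSeq
    (hC : ∀ l < m, C j * fSeq ξ C T f l ∈ fSpan ξ x C T f k m') {y : A}
    (hy : y ∈ fSpan ξ x C T f k m) : C j * y ∈ fSpan ξ x C T f k m' := by
  refine mul_mem_fSpan_of_mul_fSeq (s := {C j}) (fun p hp => ?_) (by simpa using hC) hy
  obtain ⟨p', hp', hc⟩ := h.exists_C_semiconjBy_poly j hp
  exact hc.eq ▸ Submodule.mul_mem_mul hp' (Submodule.mem_span_singleton_self _)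

theorem twistT_mul_mem_fSpan_of_mul_fSeq (hk : k ≤ n) (hi : i + 1 < k) (hmm : m ≤ m')
    (hC : ∀ j < k, ∀ l < m, C j * fSeq ξ C T f l ∈ fSpan ξ x C T f k m)
    (hT : ∀ l < m, twistT ξ C T i * fSeq ξ C T f l ∈ fSpan ξ x C T f k m') {y : A}
    (hy : y ∈ fSpan ξ x C T f k m) : twistT ξ C T i * y ∈ fSpan ξ x C T f k m' := by
  refine mul_mem_fSpan_of_mul_fSeq (fun p hp => h.twistT_mul_poly_mem_twistSpan hk hi hp) ?_ hy
  rintro _ (rfl | rfl | rfl) l hl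
  · exact hT l hl
  · exact mul_one (1 * fSeq ξ C T f l) ▸
      mul_fSeq_mul_mem_fSpan (hl.trans_le hmm) (one_mem _) (one_mem _)
  · rw [mul_assoc]
    exact fSpan_mono hmm (h.C_mul_mem_fSpan_of_mul_fSeq (hC i (by omega)) (hC _ hi l hl))

include hfC hfT

theorem twistT_mul_fSeq_of_lt (hj : l < j) :
    twistT ξ C T j * fSeq ξ C T f l = fSeq ξ C T f l * twistT ξ C T j :=
  ((h.T_commute_fSeq_of_lt hfT hj).add_left (((h.C_commute_fSeq_of_lt hfC hj).mul_left
    (h.C_commute_fSeq_of_lt hfC (by omega))).smul_left ξ)).eq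

theorem twistT_mul_fSeq_mem_fSpan (hk : k ≤ n) (hl : l < k) (hj : j + 1 < k) :
    twistT ξ C T j * fSeq ξ C T f l ∈ fSpan ξ x C T f k k := by
  obtain hjl | hjl := lt_or_ge l j
  · rw [h.twistT_mul_fSeq_of_lt hfC hfT hjl]
    exact fSeq_mul_mem_fSpan hl (twistT_mem_finAlg hj)
  obtain rfl | hjl := hjl.eq_or_lt
  · rw [h.twistT_mul_fSeq (by omega)]
    exact fSeq_mul_mem_fSpan hj (T_sub_mem_finAlg hj ξ)
  obtain rfl | hjl := (Nat.succ_le_of_lt hjl).eq_or_lt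
  · rw [h.twistT_mul_fSeq_succ (by omega), ← mul_one (fSeq ξ C T f (j + 1))]
    exact add_mem (Submodule.smul_mem _ _ (fSeq_mul_mem_fSpan hj (one_mem _)))
      (fSeq_mul_mem_fSpan (by omega) (T_mem_finAlg hj))
  · rw [← (h.fSeq_commute_of_mem_finAlg hfC hfT (by omega) (twistT_mem_finAlg (ξ := ξ) hjl)).eq]
    exact fSeq_mul_mem_fSpan hl (twistT_mem_finAlg hj)

theorem C_succ_mul_fSeq_succ_mem_fSpan (hk : k ≤ n) (hi : i + 1 < k)
    (hC : ∀ j < k, ∀ l < i + 1, C j * fSeq ξ C T f l ∈ fSpan ξ x C T f k (i + 1)) :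
    C (i + 1) * fSeq ξ C T f (i + 1) ∈ fSpan ξ x C T f k (i + 2) := by
  have hCfT {j : ℕ} (hj : j < k) : C j * fSeq ξ C T f i * T i ∈ fSpan ξ x C T f k (i + 1) :=
    mul_fin_mem_fSpan (T_mem_finAlg hi) (hC j hj i i.lt_succ_self)
  have hTf : ∀ l < i + 1, twistT ξ C T i * fSeq ξ C T f l ∈ fSpan ξ x C T f k (i + 2) := by
    intro l hl
    obtain rfl | hli := (Nat.le_of_lt_succ hl).eq_or_lt
    · rw [h.twistT_mul_fSeq (by omega)]
      exact fSeq_mul_mem_fSpan (by omega) (T_sub_mem_finAlg hi ξ)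
    · rw [h.twistT_mul_fSeq_of_lt hfC hfT hli]
      exact fSeq_mul_mem_fSpan (by omega) (twistT_mem_finAlg hi)
  rw [fSeq, ← mul_assoc, ← mul_assoc, h.C_succ_mul_twistT (by omega), add_mul, add_mul,
    smul_mul_assoc, smul_mul_assoc, sub_mul, sub_mul, mul_assoc (twistT ξ C T i),
    mul_assoc (twistT ξ C T i)]
  exact add_mem (h.twistT_mul_mem_fSpan_of_mul_fSeq hk hi (Nat.le_succ _) hC hTf
    (hCfT (by omega))) (fSpan_mono (Nat.le_succ _)
    (Submodule.smul_mem _ ξ (sub_mem (hCfT hi) (hCfT (by omega)))))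

include hf0

theorem C_mul_fSeq_mem_fSpan (hk : k ≤ n) (hl : l < k) (hj : j < k) :
    C j * fSeq ξ C T f l ∈ fSpan ξ x C T f k (l + 1) := by
  induction l using Nat.strong_induction_on generalizing j with
  | _ l ih =>
  obtain hjl | rfl | hjl := lt_trichotomy j l
  · rw [(h.C_commute_fSeq_of_gt hfC (by omega) hjl).eq]
    exact fSeq_mul_mem_fSpan l.lt_succ_self (C_mem_finAlg hj)
  · obtain _ | i := j
    · obtain ⟨p, hp, e⟩ := hf0
      rw [fSeq, e]
      exact mul_fSeq_mul_mem_fSpan zero_lt_one (polyAlg_mono hj hp) (C_mem_finAlg hj)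
    · exact h.C_succ_mul_fSeq_succ_mem_fSpan hfC hfT hk hj
        fun j hj l hl => fSpan_mono hl (ih l hl (by omega) hj)
  · rw [(h.C_commute_fSeq_of_lt hfC hjl).eq]
    exact fSeq_mul_mem_fSpan l.lt_succ_self (C_mem_finAlg hj)

theorem C_mul_mem_fSpan (hk : k ≤ n) (hj : j < k) {y : A} (hy : y ∈ fSpan ξ x C T f k k) :
    C j * y ∈ fSpan ξ x C T f k k :=
  h.C_mul_mem_fSpan_of_mul_fSeq
    (fun _ hl => fSpan_mono hl (h.C_mul_fSeq_mem_fSpan hfC hfT hf0 hk hl hj)) hy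

theorem twistT_mul_mem_fSpan (hk : k ≤ n) (hj : j + 1 < k) {y : A}
    (hy : y ∈ fSpan ξ x C T f k k) : twistT ξ C T j * y ∈ fSpan ξ x C T f k k :=
  h.twistT_mul_mem_fSpan_of_mul_fSeq hk hj le_rfl
    (fun _ hj _ hl => fSpan_mono hl (h.C_mul_fSeq_mem_fSpan hfC hfT hf0 hk hl hj))
    (fun _ hl => h.twistT_mul_fSeq_mem_fSpan hfC hfT hk hl hj) hy

theorem fin_mul_mem_fSpan (hk : k ≤ n) {b y : A} (hb : b ∈ finAlg F C T k)
    (hy : y ∈ fSpan ξ x C T f k k) : b * y ∈ fSpan ξ x C T f k k := by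
  refine mul_mem_of_mem_adjoin ?_ hb hy
  rintro _ (⟨i, hi, rfl⟩ | ⟨i, hi, rfl⟩) y hy
  · exact h.C_mul_mem_fSpan hfC hfT hf0 hk hi hy
  · rw [← add_sub_cancel_right (T i * y) (ξ • (C i * (C (i + 1) * y))), ← mul_assoc (C i),
      ← smul_mul_assoc, ← add_mul]
    refine sub_mem (h.twistT_mul_mem_fSpan hfC hfT hf0 hk hi hy) ?_
    rw [smul_mul_assoc, mul_assoc]
    exact Submodule.smul_mem _ ξ (h.C_mul_mem_fSpan hfC hfT hf0 hk (by omega)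
      (h.C_mul_mem_fSpan hfC hfT hf0 hk hi hy))

variable (hfx : ∀ i, Commute f (x i))
include hfx

theorem fSeq_mul_mem_fSpan_of_mem_prodSpan (hk : k ≤ n) (hl : l < k) {y : A}
    (hy : y ∈ prodSpan F x C T k) : fSeq ξ C T f l * y ∈ fSpan ξ x C T f k k := by
  induction l generalizing y with
  | zero =>
    refine Submodule.mul_induction_on hy (fun p hp b hb => ?_)
      fun y z hy hz => mul_add (fSeq ξ C T f 0) y z ▸ add_mem hy hz
    rw [← mul_assoc, fSeq, (commute_of_mem_polyAlg (fun i _ => hfx i) hp).eq]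
    exact mul_fSeq_mul_mem_fSpan (l := 0) hl hp hb
  | succ l ih =>
    rw [fSeq, mul_assoc, mul_assoc]
    exact h.twistT_mul_mem_fSpan hfC hfT hf0 hk hl
      (ih (by omega) (h.fin_mul_mem_prodSpan hk (T_mem_finAlg hl) hy))

theorem mul_mul_mem_fSpan (hk : k ≤ n) (hk0 : 0 < k) {u v : A}
    (hu : u ∈ prodSpan F x C T k) (hv : v ∈ prodSpan F x C T k) :
    u * f * v ∈ fSpan ξ x C T f k k := by
  have hfv : f * v ∈ fSpan ξ x C T f k k :=
    h.fSeq_mul_mem_fSpan_of_mem_prodSpan hfC hfT hf0 hfx hk hk0 hv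
  rw [mul_assoc]
  refine Submodule.mul_induction_on hu (fun p hp b hb => ?_)
    fun y z hy hz => add_mul y z (f * v) ▸ add_mem hy hz
  rw [mul_assoc]
  exact poly_mul_mem_fSpan hp (h.fin_mul_mem_fSpan hfC hfT hf0 hk hb hfv)

end Ideal

end HeckeCliffordRel

end Products

/-! ### Spanning -/

section Spanning

variable {F A : Type*} [CommRing F] [Ring A] [Algebra F A] {ξ : F} {n : ℕ} {x : ℕ → Aˣ}
  {C T φ : ℕ → A} {d k l m : ℕ} {α β : ℕ → ℤ} {Y Z : Finset ℕ} {Q : Prop} {f : A}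

/-- The product `x_{k-1}^{α_{k-1}} ⋯ x_0^{α_0} φ_0^{[0 ∈ Z]} ⋯ φ_{k-1}^{[k-1 ∈ Z]}`, that is, the
element `X^α f_Z` on `k` strands when `φ_i = f_i`. -/
def vec (x : ℕ → Aˣ) (φ : ℕ → A) (α : ℕ → ℤ) (Z : Finset ℕ) : ℕ → A
  | 0 => 1
  | k + 1 => ↑(x k ^ α k) * vec x φ α Z k * if k ∈ Z then φ k else 1

theorem vec_congr (hα : ∀ i < k, α i = β i) (hZ : ∀ i < k, i ∈ Z ↔ i ∈ Y) :
    vec x φ α Z k = vec x φ β Y k := by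
  induction k with
  | zero => rfl
  | succ k ih =>
    rw [vec, vec, hα k k.lt_succ_self, ih (fun i hi => hα i (hi.trans k.lt_succ_self))
      fun i hi => hZ i (hi.trans k.lt_succ_self)]
    simp only [hZ k k.lt_succ_self]

theorem vec_succ_update (e : ℤ) (hZ : ∀ i < k, i ∈ Y ↔ i ∈ Z) :
    vec x φ (Function.update α k e) Y (k + 1) =
      ↑(x k ^ e) * vec x φ α Z k * if k ∈ Y then φ k else 1 := by
  rw [vec, Function.update_self, vec_congr (fun i hi => Function.update_of_ne hi.ne _ _) hZ]

/-- The span of the `x^α f_Z b` over the `(α, Z)` with `0 ≤ α_i < d` for `i ∉ Z` and the finite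
Hecke–Clifford elements `b`, on `k` strands; if `Q` holds, then `Z` is required to be nonempty. -/
def vecSpan (F : Type*) [CommRing F] [Algebra F A] (x : ℕ → Aˣ) (C T φ : ℕ → A) (d : ℕ) (Q : Prop)
    (k : ℕ) : Submodule F A :=
  Submodule.span F {y | ∃ α : ℕ → ℤ, ∃ Z : Finset ℕ,
    (∀ i < k, i ∉ Z → 0 ≤ α i ∧ α i < d) ∧ (Q → ∃ i < k, i ∈ Z) ∧
    ∃ b ∈ finAlg F C T k, y = vec x φ α Z k * b}

theorem vec_mul_mem_vecSpan (hα : ∀ i < k, i ∉ Z → 0 ≤ α i ∧ α i < d) (hZ : Q → ∃ i < k, i ∈ Z)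
    {b : A} (hb : b ∈ finAlg F C T k) : vec x φ α Z k * b ∈ vecSpan F x C T φ d Q k :=
  Submodule.subset_span ⟨α, Z, hα, hZ, b, hb, rfl⟩

theorem mul_fin_mem_vecSpan {b y : A} (hb : b ∈ finAlg F C T k)
    (hy : y ∈ vecSpan F x C T φ d Q k) : y * b ∈ vecSpan F x C T φ d Q k := by
  refine mul_mem_of_mem_span_right ?_ hy
  rintro _ ⟨α, Z, hα, hZ, b', hb', rfl⟩
  rw [mul_assoc]
  exact vec_mul_mem_vecSpan hα hZ (mul_mem hb' hb)

theorem zpow_mul_mem_vecSpan {e : ℤ} (he : 0 ≤ e) (hd : e < d) {y : A}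
    (hy : y ∈ vecSpan F x C T φ d Q k) :
    ↑(x k ^ e) * y ∈ vecSpan F x C T φ d Q (k + 1) := by
  refine mul_mem_of_mem_span ?_ hy
  rintro _ ⟨α, Z, hα, hZ, b, hb, rfl⟩
  have hv : vec x φ (Function.update α k e) (Z.erase k) (k + 1) = ↑(x k ^ e) * vec x φ α Z k := by
    rw [vec_succ_update (Z := Z) e fun i hi => by simp [hi.ne],
      if_neg (Finset.notMem_erase k Z), mul_one]
  rw [← mul_assoc, ← hv]
  refine vec_mul_mem_vecSpan (fun i hi hiZ => ?_) (fun hQ => ?_) (finAlg_mono k.le_succ hb)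
  · obtain rfl | hik := eq_or_ne i k
    · exact (Function.update_self i e α).symm ▸ ⟨he, hd⟩
    · rw [Function.update_of_ne hik]
      exact hα i (by omega) fun hz => hiZ (Finset.mem_erase.2 ⟨hik, hz⟩)
  · obtain ⟨i, hi, hz⟩ := hZ hQ
    exact ⟨i, by omega, Finset.mem_erase.2 ⟨hi.ne, hz⟩⟩

theorem zpow_mul_mul_mem_vecSpan {P : Prop} (hφ : ∀ b ∈ finAlg F C T k, Commute (φ k) b) (e : ℤ)
    {y : A} (hy : y ∈ vecSpan F x C T φ d P k) :
    ↑(x k ^ e) * y * φ k ∈ vecSpan F x C T φ d Q (k + 1) := by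
  rw [mul_assoc]
  refine (Submodule.span_le (p := (vecSpan F x C T φ d Q (k + 1)).comap
    (LinearMap.mulLeft F (↑(x k ^ e) : A) ∘ₗ LinearMap.mulRight F (φ k)))).2 ?_ hy
  rintro _ ⟨α, Z, hα, -, b, hb, rfl⟩
  have hv : vec x φ (Function.update α k e) (insert k Z) (k + 1) =
      ↑(x k ^ e) * vec x φ α Z k * φ k := by
    rw [vec_succ_update (Z := Z) e fun i hi => by simp [hi.ne],
      if_pos (Finset.mem_insert_self k Z)]
  change ↑(x k ^ e) * (vec x φ α Z k * b * φ k) ∈ vecSpan F x C T φ d Q (k + 1)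
  rw [mul_assoc _ b, ← (hφ b hb).eq, ← mul_assoc, ← mul_assoc, ← hv]
  refine vec_mul_mem_vecSpan (fun i hi hiZ => ?_)
    (fun _ => ⟨k, k.lt_succ_self, Finset.mem_insert_self k Z⟩) (finAlg_mono k.le_succ hb)
  rw [Finset.mem_insert, not_or] at hiZ
  rw [Function.update_of_ne hiZ.1]
  exact hα i (by omega) hiZ.2

section Reduction

variable {W J : Submodule F A} {g : A} {a₀ : F} {u : finAlg F C T (k + 1)}
  (hWx : ∀ y ∈ W, Commute y (x k)) (hWp : ∀ y ∈ W, ∀ p ∈ polyAlg F x k, y * p ∈ W)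
  (hJ : ∀ y ∈ J, ∀ b ∈ finAlg F C T (k + 1), y * b ∈ J)
  (hg : g - (x k : A) ^ d - a₀ • (u : A) ∈ midSpan F x C T k d)
  (hmul : ∀ y ∈ W, ∀ e : ℤ, ↑(x k ^ e) * y * g ∈ J)

include hWx in
theorem zpow_mul_mul_pow (e : ℤ) (a : ℕ) {y : A} (hy : y ∈ W) :
    ↑(x k ^ e) * y * (x k : A) ^ a = ↑(x k ^ (e + a)) * y := by
  rw [mul_assoc, ((hWx y hy).pow_right a).eq, ← mul_assoc, zpow_add, zpow_natCast, Units.val_mul,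
    Units.val_pow_eq_pow_val]

include hWx hWp hJ in
theorem zpow_mul_mul_mem_of_mem_midSpan {e : ℤ}
    (he : ∀ a : ℕ, 0 < a → a < d → ∀ y ∈ W, ↑(x k ^ (e + a)) * y ∈ J) {y m : A} (hy : y ∈ W)
    (hm : m ∈ midSpan F x C T k d) : ↑(x k ^ e) * y * m ∈ J := by
  refine mul_mem_of_mem_span ?_ hm
  rintro _ ⟨a, h0, h1, p, hp, b, hb, rfl⟩
  rw [← mul_assoc, ← mul_assoc, zpow_mul_mul_pow hWx e a hy, mul_assoc _ y]
  exact hJ _ (he a h0 h1 _ (hWp y hy p hp)) b hb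

include hg

include hWx hWp hJ in
theorem zpow_mul_mul_sub_sub_smul_mem {e : ℤ}
    (he : ∀ a : ℕ, 0 < a → a < d → ∀ y ∈ W, ↑(x k ^ (e + a)) * y ∈ J) {y : A} (hy : y ∈ W) :
    ↑(x k ^ e) * y * g - ↑(x k ^ (e + d)) * y - a₀ • (↑(x k ^ e) * y * u) ∈ J := by
  have hmid := zpow_mul_mul_mem_of_mem_midSpan hWx hWp hJ he hy hg
  rwa [mul_sub, mul_sub, zpow_mul_mul_pow hWx e d hy, mul_smul_comm] at hmid

include hWx hWp hJ hmul

theorem zpow_add_mul_add_smul_mem {e : ℤ}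
    (he : ∀ a : ℕ, 0 < a → a < d → ∀ y ∈ W, ↑(x k ^ (e + a)) * y ∈ J) {y : A} (hy : y ∈ W) :
    ↑(x k ^ (e + d)) * y + a₀ • (↑(x k ^ e) * y * u) ∈ J := by
  have hsub := zpow_mul_mul_sub_sub_smul_mem hWx hWp hJ hg he hy
  rw [sub_sub] at hsub
  exact (J.sub_mem_iff_right (hmul y hy e)).1 hsub

variable (hlow : ∀ y ∈ W, ∀ e : ℤ, 0 ≤ e → e < d → ↑(x k ^ e) * y ∈ J)
  (hd : 0 < d)
include hlow hd

theorem zpow_natCast_mul_mem (m : ℕ) {y : A} (hy : y ∈ W) : ↑(x k ^ (m : ℤ)) * y ∈ J := by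
  induction m using Nat.strong_induction_on generalizing y with
  | _ m ih =>
  obtain hmd | hmd := lt_or_ge m d
  · exact hlow y hy m (by omega) (by omega)
  obtain ⟨r, rfl⟩ := Nat.exists_eq_add_of_le' hmd
  have hr := zpow_add_mul_add_smul_mem hWx hWp hJ hg hmul (e := r)
    (fun a _ _ y hy => by exact_mod_cast ih (r + a) (by omega) hy) hy
  exact_mod_cast (J.add_mem_iff_left (J.smul_mem a₀ (hJ _ (ih r (by omega) hy) u u.2))).1 hr

variable (ha : IsUnit a₀) (hu : IsUnit u)
include ha hu

theorem zpow_neg_natCast_mul_mem (m : ℕ) {y : A} (hy : y ∈ W) :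
    ↑(x k ^ (-(m : ℤ))) * y ∈ J := by
  induction m using Nat.strong_induction_on generalizing y with
  | _ m ih =>
  have above (a : ℕ) (h0 : 0 < a) (y : A) (hy : y ∈ W) : ↑(x k ^ (-(m : ℤ) + a)) * y ∈ J := by
    obtain hma | hma := le_total m a
    · obtain ⟨r, rfl⟩ := Nat.exists_eq_add_of_le hma
      rw [Nat.cast_add, neg_add_cancel_left]
      exact zpow_natCast_mul_mem hWx hWp hJ hg hmul hlow hd r hy
    · rw [show -(m : ℤ) + a = -((m - a : ℕ) : ℤ) by omega]
      exact ih _ (by omega) hy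
  have hm := zpow_add_mul_add_smul_mem hWx hWp hJ hg hmul (fun a h0 _ => above a h0) hy
  obtain ⟨w, hw⟩ := hu.exists_right_inv
  have hmu := (J.smul_mem_iff' ha.unit).1 ((J.add_mem_iff_right (above d hd y hy)).1 hm)
  have hmem := hJ _ hmu w w.2
  rwa [mul_assoc, ← MulMemClass.coe_mul, hw, OneMemClass.coe_one, mul_one] at hmem

theorem zpow_mul_mem_of_reduction (e : ℤ) {y : A} (hy : y ∈ W) : ↑(x k ^ e) * y ∈ J := by
  obtain ⟨m, rfl | rfl⟩ := e.eq_nat_or_neg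
  · exact zpow_natCast_mul_mem hWx hWp hJ hg hmul hlow hd m hy
  · exact zpow_neg_natCast_mul_mem hWx hWp hJ hg hmul hlow hd ha hu m hy

end Reduction

theorem polyAlg_zero : polyAlg F x 0 = ⊥ := by
  simp [polyAlg]

theorem poly_mem_prodSpan {p : A} (hp : p ∈ polyAlg F x k) : p ∈ prodSpan F x C T k :=
  mul_one p ▸ Submodule.mul_mem_mul hp (one_mem (finAlg F C T k))

theorem mem_span_zpow_mul_of_mem_polyAlg_succ (hx : ∀ i < k, Commute (x k : A) (x i)) {p : A}
    (hp : p ∈ polyAlg F x (k + 1)) :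
    p ∈ Submodule.span F {y | ∃ e : ℤ, ∃ r ∈ polyAlg F x k, y = ↑(x k ^ e) * r} := by
  refine mul_one p ▸ mul_mem_of_mem_adjoin ?_ hp
    (Submodule.subset_span ⟨0, 1, one_mem _, by simp⟩)
  rintro s ⟨i, hi, hs⟩ y hy
  refine mul_mem_of_mem_span ?_ hy
  rintro _ ⟨e, r, hr, rfl⟩
  obtain hik | rfl := Nat.lt_succ_iff_lt_or_eq.1 hi
  · have hsk : s ∈ polyAlg F x k := Algebra.subset_adjoin ⟨i, hik, hs⟩
    have hse : Commute (↑(x k ^ e) : A) s :=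
      commute_of_mem_polyAlg (fun j hj => (hx j hj).units_zpow_left e) hsk
    exact Submodule.subset_span ⟨e, s * r, mul_mem hsk hr, by
      rw [← mul_assoc, ← hse.eq, mul_assoc]⟩
  · obtain rfl | rfl := hs
    · exact Submodule.subset_span ⟨1 + e, r, hr, by
        rw [zpow_one_add, Units.val_mul, mul_assoc]⟩
    · exact Submodule.subset_span ⟨-1 + e, r, hr, by
        rw [zpow_add, zpow_neg_one, Units.val_mul, mul_assoc]⟩

theorem fSpan_le {N : Submodule F A} (hN : ∀ l < m, ∀ p ∈ polyAlg F x k, ∀ b ∈ finAlg F C T k,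
    p * fSeq ξ C T f l * b ∈ N) : fSpan ξ x C T f k m ≤ N := by
  refine Submodule.mul_le.2 fun z hz b hb => Submodule.mul_induction_on hz (fun p hp s hs => ?_)
    fun y z hy hz => add_mul y z b ▸ add_mem hy hz
  refine (Submodule.span_le (p := N.comap (LinearMap.mulRight F b ∘ₗ LinearMap.mulLeft F p))).2
    ?_ hs
  rintro _ ⟨l, hl, rfl⟩
  exact hN l hl p hp b hb

namespace HeckeCliffordRel

variable (h : HeckeCliffordRel ξ n x C T)
include h

theorem x_commute_of_mem_finAlg {b : A} (hb : b ∈ finAlg F C T k) : Commute (x k : A) b :=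
  commute_of_mem_finAlg (fun _ hi => (h.C_commute_x hi.ne).symm)
    (fun _ hi => (h.T_commute_x (by omega) (by omega)).symm) hb

theorem x_commute_of_mem_polyAlg {p : A} (hp : p ∈ polyAlg F x k) : Commute (x k : A) p :=
  commute_of_mem_polyAlg (fun j _ => h.x_commute k j) hp

theorem commute_x_of_mem_prodSpan {y : A} (hy : y ∈ prodSpan F x C T k) : Commute y (x k) :=
  Submodule.mul_induction_on hy (fun _ hp _ hb =>
    ((h.x_commute_of_mem_polyAlg hp).mul_right (h.x_commute_of_mem_finAlg hb)).symm)
    fun _ _ => Commute.add_left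

theorem mul_poly_mem_prodSpan (hk : k ≤ n) {y p : A} (hy : y ∈ prodSpan F x C T k)
    (hp : p ∈ polyAlg F x k) : y * p ∈ prodSpan F x C T k := by
  refine Submodule.mul_induction_on hy (fun r hr b hb => ?_)
    fun y z hy hz => add_mul y z p ▸ add_mem hy hz
  rw [mul_assoc]
  exact poly_mul_mem_prodSpan hr (h.fin_mul_mem_prodSpan hk hb (poly_mem_prodSpan hp))

section FSpan

variable (hfx : ∀ i, Commute f (x i))

include hfx in
theorem x_commute_fSeq (hl : l < k) : Commute (x k : A) (fSeq ξ C T f l) := by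
  induction l with
  | zero => exact (hfx k).symm
  | succ l ih =>
    exact ((h.x_commute_of_mem_finAlg (twistT_mem_finAlg hl)).mul_right (ih (by omega))).mul_right
      (h.x_commute_of_mem_finAlg (T_mem_finAlg hl))

include hfx in
theorem commute_x_of_mem_fSpan {y : A} (hy : y ∈ fSpan ξ x C T f k k) : Commute y (x k) := by
  have hle : fSpan ξ x C T f k k ≤ (Subalgebra.centralizer F {(x k : A)}).toSubmodule := by
    refine fSpan_le fun l hl p hp b hb => (Subalgebra.mem_centralizer_iff F).2 ?_
    rintro _ rfl
    exact ((h.x_commute_of_mem_polyAlg hp).mul_right (h.x_commute_fSeq hfx hl)).mul_right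
      (h.x_commute_of_mem_finAlg hb)
  exact ((Subalgebra.mem_centralizer_iff F).1 (hle hy) _ rfl).symm

variable {a₀ : F} (hfC : ∀ j, 0 < j → Commute (C j) f) (hfT : ∀ j, 0 < j → Commute (T j) f)
  (hd : 0 < d) (ha : IsUnit a₀)
  (hexp : ∀ k < n, ∃ u : finAlg F C T (k + 1), IsUnit u ∧
    fSeq ξ C T f k - (x k : A) ^ d - a₀ • (u : A) ∈ midSpan F x C T k d)
  (hf0 : ∃ p ∈ polyAlg F x 1, C 0 * f = p * f * C 0)

include hfC hfT

include hfx hf0 in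
theorem mul_poly_mem_fSpan (hk : k ≤ n) {y p : A} (hy : y ∈ fSpan ξ x C T f k k)
    (hp : p ∈ polyAlg F x k) : y * p ∈ fSpan ξ x C T f k k := by
  refine fSpan_le (N := (fSpan ξ x C T f k k).comap (LinearMap.mulRight F p))
    (fun l hl r hr b hb => ?_) hy
  change r * fSeq ξ C T f l * b * p ∈ fSpan ξ x C T f k k
  rw [mul_assoc, mul_assoc]
  exact poly_mul_mem_fSpan hr (h.fSeq_mul_mem_fSpan_of_mem_prodSpan hfC hfT hf0 hfx hk hl
    (h.fin_mul_mem_prodSpan hk hb (poly_mem_prodSpan hp)))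

include hd ha hexp

theorem prodSpan_le_vecSpan (hk : k ≤ n) :
    prodSpan F x C T k ≤ vecSpan F x C T (fSeq ξ C T f) d False k := by
  induction k with
  | zero =>
    refine Submodule.mul_le.2 fun p hp b hb => mul_fin_mem_vecSpan hb ?_
    obtain ⟨r, rfl⟩ := Algebra.mem_bot.1 (polyAlg_zero (F := F) (x := x) ▸ hp)
    rw [Algebra.algebraMap_eq_smul_one, ← mul_one (1 : A)]
    exact Submodule.smul_mem _ r (vec_mul_mem_vecSpan (α := 0) (Z := ∅) (by simp) (by simp)
      (one_mem _))
  | succ k ih =>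
    obtain ⟨u, hu, hg⟩ := hexp k hk
    refine Submodule.mul_le.2 fun p hp b hb => mul_fin_mem_vecSpan hb ?_
    refine Submodule.span_le.2 ?_
      (mem_span_zpow_mul_of_mem_polyAlg_succ (fun i _ => h.x_commute k i) hp)
    rintro _ ⟨e, r, hr, rfl⟩
    exact zpow_mul_mem_of_reduction (W := prodSpan F x C T k)
      (fun y hy => h.commute_x_of_mem_prodSpan hy)
      (fun y hy p hp => h.mul_poly_mem_prodSpan (by omega) hy hp)
      (fun y hy b hb => mul_fin_mem_vecSpan hb hy) hg
      (fun y hy e => zpow_mul_mul_mem_vecSpan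
        (fun b hb => h.fSeq_commute_of_mem_finAlg hfC hfT (by omega) hb) e (ih (by omega) hy))
      (fun y hy e h0 h1 => zpow_mul_mem_vecSpan h0 h1 (ih (by omega) hy)) hd ha hu e
      (poly_mem_prodSpan hr)

include hf0 hfx

theorem fSpan_le_vecSpan (hk : k ≤ n) :
    fSpan ξ x C T f k k ≤ vecSpan F x C T (fSeq ξ C T f) d True k := by
  induction k with
  | zero => exact fSpan_le fun l hl => absurd hl l.not_lt_zero
  | succ k ih =>
    obtain ⟨u, hu, hg⟩ := hexp k hk
    have hcomm (b : A) (hb : b ∈ finAlg F C T k) : Commute (fSeq ξ C T f k) b :=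
      h.fSeq_commute_of_mem_finAlg hfC hfT (by omega) hb
    refine fSpan_le fun l hl p hp b hb => mul_fin_mem_vecSpan hb ?_
    refine mul_mem_of_mem_span_right ?_
      (mem_span_zpow_mul_of_mem_polyAlg_succ (fun i _ => h.x_commute k i) hp)
    rintro _ ⟨e, r, hr, rfl⟩
    obtain hlk | rfl := Nat.lt_succ_iff_lt_or_eq.1 hl
    · rw [mul_assoc]
      exact zpow_mul_mem_of_reduction (W := fSpan ξ x C T f k k)
        (fun y hy => h.commute_x_of_mem_fSpan hfx hy)
        (fun y hy p hp => h.mul_poly_mem_fSpan hfx hfC hfT hf0 (by omega) hy hp)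
        (fun y hy b hb => mul_fin_mem_vecSpan hb hy) hg
        (fun y hy e => zpow_mul_mul_mem_vecSpan hcomm e (ih (by omega) hy))
        (fun y hy e h0 h1 => zpow_mul_mem_vecSpan h0 h1 (ih (by omega) hy)) hd ha hu e
        (mul_one (r * fSeq ξ C T f l) ▸ mul_fSeq_mul_mem_fSpan hlk hr (one_mem _))
    · exact zpow_mul_mul_mem_vecSpan hcomm e
        (h.prodSpan_le_vecSpan hfC hfT hd ha hexp (by omega) (poly_mem_prodSpan hr))

end FSpan

end HeckeCliffordRel

end Spanning

/-! ### Leading terms -/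

section LeadingTerms

/-- The exponent of `x_i` in the leading monomial of `x^α f_Z`. -/
def lead (d : ℕ) (α : ℕ → ℤ) (Z : Finset ℕ) (i : ℕ) : ℤ :=
  if i ∈ Z ∧ 0 ≤ α i then α i + d else α i

/-- The size of an exponent relative to the window `[0, d)`: the exponents in the window have size
`0`, and the size grows with the distance from it. -/
def expSize (d : ℕ) (e : ℤ) : ℕ := if e < 0 then (-e).toNat else (e - d + 1).toNat

/-- The sizes of the first `k` exponents, to be compared colexicographically. -/
def colexSize (d k : ℕ) (γ : ℕ → ℤ) : Colex (Fin k → ℕ) := toColex fun i => expSize d (γ i)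

variable {d k : ℕ} {α β γ δ : ℕ → ℤ} {Y Z : Finset ℕ}

theorem eq_and_mem_iff_of_lead_eq {i : ℕ} (hα : i ∉ Z → 0 ≤ α i ∧ α i < d)
    (hβ : i ∉ Y → 0 ≤ β i ∧ β i < d) (he : lead d α Z i = lead d β Y i) :
    α i = β i ∧ (i ∈ Z ↔ i ∈ Y) := by
  unfold lead at he
  grind

theorem lead_of_nonneg {i : ℕ} (hi : i ∈ Z) (h0 : 0 ≤ α i) : lead d α Z i = α i + d :=
  if_pos ⟨hi, h0⟩

theorem lead_of_neg {i : ℕ} (h0 : α i < 0) : lead d α Z i = α i :=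
  if_neg fun h => h0.not_ge h.2

theorem lead_of_notMem {i : ℕ} (hi : i ∉ Z) : lead d α Z i = α i :=
  if_neg fun h => hi h.1

theorem expSize_add_lt_of_nonneg {e : ℤ} (he : 0 ≤ e) {a : ℕ} (ha : a < d) :
    expSize d (e + a) < expSize d (e + d) := by
  unfold expSize
  split_ifs <;> omega

theorem expSize_add_lt_of_neg {e : ℤ} (he : e < 0) {a : ℕ} (h0 : 0 < a) (ha : a ≤ d) :
    expSize d (e + a) < expSize d e := by
  unfold expSize
  split_ifs <;> omega

theorem colexSize_succ_lt (h : expSize d (δ k) < expSize d (γ k)) :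
    colexSize d (k + 1) δ < colexSize d (k + 1) γ :=
  ⟨Fin.last k, fun j hj => absurd (Fin.le_last j) hj.not_ge, h⟩

theorem colexSize_update_lt (h : colexSize d k δ < colexSize d k γ) :
    colexSize d (k + 1) (Function.update δ k (γ k)) < colexSize d (k + 1) γ := by
  obtain ⟨i, heq, hlt⟩ := h
  refine ⟨i.castSucc, fun j hj => ?_, ?_⟩
  · obtain ⟨j, rfl⟩ | rfl := j.eq_castSucc_or_eq_last
    · simpa [colexSize, Function.update_of_ne j.isLt.ne] using heq j hj
    · simp [colexSize]
  · simpa [colexSize, Function.update_of_ne i.isLt.ne] using hlt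

variable {F A : Type*} [CommRing F] [Ring A] [Algebra F A] {ξ : F} {n : ℕ} {x : ℕ → Aˣ}
  {C T : ℕ → A}

/-- The Laurent monomial `x^γ` on `k` strands. -/
def mon (x : ℕ → Aˣ) (γ : ℕ → ℤ) : ℕ → A
  | 0 => 1
  | k + 1 => ↑(x k ^ γ k) * mon x γ k

theorem mon_congr (hγ : ∀ i < k, γ i = δ i) : mon x γ k = mon x δ k := by
  induction k with
  | zero => rfl
  | succ k ih =>
    rw [mon, mon, hγ k k.lt_succ_self, ih fun i hi => hγ i (hi.trans k.lt_succ_self)]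

theorem mon_update (γ : ℕ → ℤ) (k : ℕ) (e : ℤ) :
    mon x (Function.update γ k e) (k + 1) = ↑(x k ^ e) * mon x γ k := by
  rw [mon, Function.update_self, mon_congr fun i hi => Function.update_of_ne hi.ne _ _]

theorem mon_mem_polyAlg (γ : ℕ → ℤ) (k : ℕ) : mon x γ k ∈ polyAlg F x k := by
  induction k with
  | zero => exact one_mem _
  | succ k ih => exact mul_mem (x_zpow_mem_polyAlg k.lt_succ_self _) (polyAlg_mono k.le_succ ih)

theorem mem_span_range_mon (hx : ∀ i j, Commute (x i : A) (x j)) {p : A}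
    (hp : p ∈ polyAlg F x k) : p ∈ Submodule.span F (Set.range fun γ => mon x γ k) := by
  induction k generalizing p with
  | zero =>
    obtain ⟨r, rfl⟩ := Algebra.mem_bot.1 (polyAlg_zero (F := F) (x := x) ▸ hp)
    rw [Algebra.algebraMap_eq_smul_one]
    exact Submodule.smul_mem _ r (Submodule.subset_span ⟨0, rfl⟩)
  | succ k ih =>
    refine Submodule.span_le.2 ?_ (mem_span_zpow_mul_of_mem_polyAlg_succ (fun i _ => hx k i) hp)
    rintro _ ⟨e, r, hr, rfl⟩
    refine mul_mem_of_mem_span ?_ (ih hr)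
    rintro _ ⟨γ, rfl⟩
    exact Submodule.subset_span ⟨Function.update γ k e, mon_update γ k e⟩

/-- The span of the `x^δ b` with `δ` smaller than `γ` and `b` a finite Hecke–Clifford element, on
`k` strands. -/
def lowSpan (F : Type*) [CommRing F] [Algebra F A] (x : ℕ → Aˣ) (C T : ℕ → A) (d : ℕ) (γ : ℕ → ℤ)
    (k : ℕ) : Submodule F A :=
  Submodule.span F {y | ∃ δ : ℕ → ℤ, colexSize d k δ < colexSize d k γ ∧
    ∃ b ∈ finAlg F C T k, y = mon x δ k * b}

theorem mul_fin_mem_lowSpan {b y : A} (hb : b ∈ finAlg F C T k)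
    (hy : y ∈ lowSpan F x C T d γ k) : y * b ∈ lowSpan F x C T d γ k := by
  refine mul_mem_of_mem_span_right ?_ hy
  rintro _ ⟨δ, hδ, b', hb', rfl⟩
  rw [mul_assoc]
  exact Submodule.subset_span ⟨δ, hδ, _, mul_mem hb' hb, rfl⟩

theorem lowSpan_le_prodSpan : lowSpan F x C T d γ k ≤ prodSpan F x C T k := by
  refine Submodule.span_le.2 ?_
  rintro _ ⟨δ, -, b, hb, rfl⟩
  exact Submodule.mul_mem_mul (mon_mem_polyAlg δ k) hb

theorem zpow_mul_mem_lowSpan {y : A} (hy : y ∈ lowSpan F x C T d γ k) :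
    ↑(x k ^ γ k) * y ∈ lowSpan F x C T d γ (k + 1) := by
  refine mul_mem_of_mem_span ?_ hy
  rintro _ ⟨δ, hδ, b, hb, rfl⟩
  rw [← mul_assoc, ← mon_update]
  exact Submodule.subset_span ⟨_, colexSize_update_lt hδ, b, finAlg_mono k.le_succ hb, rfl⟩

theorem zpow_mul_mem_lowSpan_of_lt (hx : ∀ i j, Commute (x i : A) (x j)) {e : ℤ}
    (he : expSize d e < expSize d (γ k)) {y : A} (hy : y ∈ prodSpan F x C T k) :
    ↑(x k ^ e) * y ∈ lowSpan F x C T d γ (k + 1) := by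
  refine Submodule.mul_induction_on hy (fun p hp b hb => ?_)
    fun y z hy hz => mul_add (↑(x k ^ e) : A) y z ▸ add_mem hy hz
  rw [← mul_assoc]
  refine mul_fin_mem_lowSpan (finAlg_mono k.le_succ hb) ?_
  refine mul_mem_of_mem_span ?_ (mem_span_range_mon hx hp)
  rintro _ ⟨δ, rfl⟩
  refine Submodule.subset_span ⟨Function.update δ k e, colexSize_succ_lt ?_, 1, one_mem _, ?_⟩
  · rwa [Function.update_self]
  · rw [mul_one, mon_update]

theorem zpow_mul_sub_mon_mul_mem_lowSpan {y u : A}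
    (hy : y - mon x γ k * u ∈ lowSpan F x C T d γ k) :
    ↑(x k ^ γ k) * y - mon x γ (k + 1) * u ∈ lowSpan F x C T d γ (k + 1) := by
  rw [mon, mul_assoc, ← mul_sub]
  exact zpow_mul_mem_lowSpan hy

theorem apply_eq_zero_of_mem_lowSpan {Ψ : A →ₗ[F] (Fin n → ℤ) →₀ A}
    (hΨ : ∀ δ : ℕ → ℤ, ∀ b ∈ finAlg F C T n, Ψ (mon x δ n * b) = .single (fun i => δ i) b)
    (hβγ : colexSize d n β ≤ colexSize d n γ) {y : A} (hy : y ∈ lowSpan F x C T d β n) :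
    Ψ y (fun i => γ i) = 0 := by
  refine (Submodule.span_le
    (p := LinearMap.ker (Finsupp.lapply (fun i : Fin n => γ i) ∘ₗ Ψ))).2 ?_ hy
  rintro _ ⟨δ, hδ, b, hb, rfl⟩
  change Ψ (mon x δ n * b) (fun i => γ i) = 0
  rw [hΨ δ b hb, Finsupp.single_eq_of_ne']
  intro hδγ
  refine hβγ.not_gt ?_
  rwa [show colexSize d n γ = colexSize d n δ from
    congrArg (fun γ : Fin n → ℤ => toColex fun i => expSize d (γ i)) hδγ.symm]

namespace HeckeCliffordRel

variable (h : HeckeCliffordRel ξ n x C T)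
include h

section Step

variable {v g : A} {a₀ : F} {u : finAlg F C T k} {u₁ : finAlg F C T (k + 1)} (hk : k ≤ n)
  (hγ : v - mon x γ k * (u : A) ∈ lowSpan F x C T d γ k) (hvP : v ∈ prodSpan F x C T k)
  (hg : g - (x k : A) ^ d - a₀ • (u₁ : A) ∈ midSpan F x C T k d) {e : ℤ}
include hk hvP hg

theorem zpow_mul_mul_sub_sub_smul_mem_lowSpan
    (he : ∀ a : ℕ, 0 < a → a < d → expSize d (e + a) < expSize d (γ k)) :
    ↑(x k ^ e) * v * g - ↑(x k ^ (e + d)) * v - a₀ • (↑(x k ^ e) * v * u₁) ∈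
      lowSpan F x C T d γ (k + 1) :=
  zpow_mul_mul_sub_sub_smul_mem (W := prodSpan F x C T k)
    (fun _ hy => h.commute_x_of_mem_prodSpan hy)
    (fun _ hy _ hp => h.mul_poly_mem_prodSpan hk hy hp) (fun _ hy _ hb => mul_fin_mem_lowSpan hb hy)
    hg (fun a h0 h1 _ hy => zpow_mul_mem_lowSpan_of_lt h.x_commute (he a h0 h1) hy) hvP

include hγ

theorem zpow_mul_mul_sub_mem_lowSpan_of_nonneg (hd : 0 < d) (he : 0 ≤ e) (hek : γ k = e + d) :
    ↑(x k ^ e) * v * g - mon x γ (k + 1) * (u : A) ∈ lowSpan F x C T d γ (k + 1) := by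
  have hsub := h.zpow_mul_mul_sub_sub_smul_mem_lowSpan (γ := γ) (e := e) hk hvP hg
    fun a _ ha => by rw [hek]; exact expSize_add_lt_of_nonneg he ha
  have hlow : ↑(x k ^ e) * v ∈ lowSpan F x C T d γ (k + 1) :=
    zpow_mul_mem_lowSpan_of_lt h.x_commute
      (by rw [hek]; simpa using expSize_add_lt_of_nonneg he hd) hvP
  have hmain := zpow_mul_sub_mon_mul_mem_lowSpan hγ
  rw [hek] at hmain
  rw [sub_right_comm] at hsub
  refine (congrArg (· ∈ lowSpan F x C T d γ (k + 1)) ?_).mp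
    (add_mem (add_mem hsub (Submodule.smul_mem _ a₀ (mul_fin_mem_lowSpan u₁.2 hlow))) hmain)
  abel

theorem zpow_mul_mul_sub_mem_lowSpan_of_neg (hd : 0 < d) (he : e < 0) (hek : γ k = e) :
    ↑(x k ^ e) * v * g - mon x γ (k + 1) * (a₀ • ((u : A) * u₁)) ∈
      lowSpan F x C T d γ (k + 1) := by
  have hsub := h.zpow_mul_mul_sub_sub_smul_mem_lowSpan (γ := γ) (e := e) hk hvP hg
    fun a h0 ha => by rw [hek]; exact expSize_add_lt_of_neg he h0 ha.le
  have hlow : ↑(x k ^ (e + d)) * v ∈ lowSpan F x C T d γ (k + 1) :=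
    zpow_mul_mem_lowSpan_of_lt h.x_commute
      (by rw [hek]; exact expSize_add_lt_of_neg he hd le_rfl) hvP
  have hmain := Submodule.smul_mem _ a₀
    (mul_fin_mem_lowSpan u₁.2 (zpow_mul_sub_mon_mul_mem_lowSpan hγ))
  rw [hek, sub_mul, smul_sub, mul_assoc _ (u : A), ← mul_smul_comm a₀ (mon x γ (k + 1))] at hmain
  refine (congrArg (· ∈ lowSpan F x C T d γ (k + 1)) ?_).mp (add_mem (add_mem hsub hlow) hmain)
  abel

end Step

variable {f : A} {a₀ : F} (hd : 0 < d) (ha : IsUnit a₀)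
  (hexp : ∀ k < n, ∃ u : finAlg F C T (k + 1), IsUnit u ∧
    fSeq ξ C T f k - (x k : A) ^ d - a₀ • (u : A) ∈ midSpan F x C T k d)
include hd ha hexp

theorem exists_isUnit_vec_sub_mem_lowSpan (hk : k ≤ n) :
    ∃ u : finAlg F C T k, IsUnit u ∧ vec x (fSeq ξ C T f) α Z k - mon x (lead d α Z) k * (u : A) ∈
      lowSpan F x C T d (lead d α Z) k := by
  induction k with
  | zero => exact ⟨1, isUnit_one, by simp [vec, mon]⟩
  | succ k ih =>
    obtain ⟨u, hu, hv⟩ := ih (by omega)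
    let ι := Subalgebra.inclusion (finAlg_mono (F := F) (C := C) (T := T) k.le_succ)
    have hvP : vec x (fSeq ξ C T f) α Z k ∈ prodSpan F x C T k :=
      (Submodule.sub_mem_iff_left _ (Submodule.mul_mem_mul (mon_mem_polyAlg _ k) u.2)).1
        (lowSpan_le_prodSpan hv)
    rw [vec]
    obtain hkZ | hkZ := em' (k ∈ Z)
    · rw [if_neg hkZ, mul_one, ← lead_of_notMem (d := d) (α := α) hkZ]
      exact ⟨ι u, hu.map ι, zpow_mul_sub_mon_mul_mem_lowSpan hv⟩
    rw [if_pos hkZ]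
    obtain ⟨u₁, hu₁, hg⟩ := hexp k hk
    obtain h0 | h0 := le_or_gt 0 (α k)
    · exact ⟨ι u, hu.map ι, h.zpow_mul_mul_sub_mem_lowSpan_of_nonneg (by omega) hv hvP hg hd h0
        (lead_of_nonneg hkZ h0)⟩
    · refine ⟨a₀ • (ι u * u₁), ((hu.map ι).mul hu₁).smul ha.unit, ?_⟩
      exact h.zpow_mul_mul_sub_mem_lowSpan_of_neg (by omega) hv hvP hg hd h0 (lead_of_neg h0)

variable {Ψ : A →ₗ[F] (Fin n → ℤ) →₀ A}
  (hΨ : ∀ δ : ℕ → ℤ, ∀ b ∈ finAlg F C T n, Ψ (mon x δ n * b) = .single (fun i => δ i) b)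
include hΨ

theorem exists_isUnit_apply_vec_mul (hγ : colexSize d n (lead d α Z) ≤ colexSize d n γ) :
    ∃ u : finAlg F C T n, IsUnit u ∧ ∀ b : finAlg F C T n,
      Ψ (vec x (fSeq ξ C T f) α Z n * (b : A)) (fun i => γ i) =
        Finsupp.single (fun i : Fin n => lead d α Z i) ((u * b : finAlg F C T n) : A)
          (fun i => γ i) := by
  obtain ⟨u, hu, hv⟩ := h.exists_isUnit_vec_sub_mem_lowSpan hd ha hexp (α := α) (Z := Z) le_rfl
  refine ⟨u, hu, fun b => ?_⟩
  have hv0 := apply_eq_zero_of_mem_lowSpan hΨ hγ (mul_fin_mem_lowSpan b.2 hv)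
  rw [sub_mul, map_sub, Finsupp.sub_apply, sub_eq_zero, mul_assoc _ (u : A)] at hv0
  rw [hv0, ← hΨ _ _ (u * b).2]
  rfl

theorem eq_zero_of_sum_vec_mul_eq_zero {ι : Type*} {α : ι → ℕ → ℤ} {Z : ι → Finset ℕ}
    (hα : ∀ p, ∀ i < n, i ∉ Z p → 0 ≤ α p i ∧ α p i < d)
    (hinj : ∀ p r, (∀ i < n, α p i = α r i ∧ (i ∈ Z p ↔ i ∈ Z r)) → p = r)
    {c : ι →₀ finAlg F C T n}
    (hc : c.sum (fun p b => vec x (fSeq ξ C T f) (α p) (Z p) n * (b : A)) = 0) : c = 0 := by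
  by_contra hne
  obtain ⟨p, hp, hmax⟩ := c.support.exists_max_image
    (fun p => colexSize d n (lead d (α p) (Z p))) (Finsupp.support_nonempty_iff.2 hne)
  let γ : Fin n → ℤ := fun i => lead d (α p) (Z p) i
  have hsum := congrArg (fun a => Ψ a γ) hc
  simp only [Finsupp.sum, map_sum, map_zero, Finsupp.finsetSum_apply, Finsupp.zero_apply] at hsum
  rw [Finset.sum_eq_single_of_mem p hp fun r hr hrp => ?_] at hsum
  · obtain ⟨u, hu, hup⟩ := h.exists_isUnit_apply_vec_mul hd ha hexp hΨ (hmax p hp)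
    rw [hup, Finsupp.single_eq_same] at hsum
    exact Finsupp.mem_support_iff.1 hp (hu.mul_right_eq_zero.1 (Subtype.ext hsum))
  · obtain ⟨u, -, hur⟩ := h.exists_isUnit_apply_vec_mul hd ha hexp hΨ (hmax r hr)
    rw [hur, Finsupp.single_eq_of_ne']
    exact fun he => hrp (hinj r p fun i hi =>
      eq_and_mem_iff_of_lead_eq (hα r i hi) (hα p i hi) (congrFun he ⟨i, hi⟩))

theorem sum_vec_mul_injective {ι : Type*} {α : ι → ℕ → ℤ} {Z : ι → Finset ℕ}
    (hα : ∀ p, ∀ i < n, i ∉ Z p → 0 ≤ α p i ∧ α p i < d)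
    (hinj : ∀ p r, (∀ i < n, α p i = α r i ∧ (i ∈ Z p ↔ i ∈ Z r)) → p = r) :
    Function.Injective fun c : ι →₀ finAlg F C T n =>
      c.sum fun p b => vec x (fSeq ξ C T f) (α p) (Z p) n * (b : A) := by
  intro c c' hcc'
  refine sub_eq_zero.1 (h.eq_zero_of_sum_vec_mul_eq_zero hd ha hexp hΨ hα hinj ?_)
  rw [Finsupp.sum_sub_index fun p b b' => by rw [AddSubgroupClass.coe_sub, mul_sub]]
  exact sub_eq_zero.2 hcc'

end HeckeCliffordRel

end LeadingTerms

section Polynomial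

variable {F A : Type*} [CommRing F] [Ring A] [Algebra F A] {ξ : F} {n : ℕ} {x : ℕ → Aˣ}
  {C T : ℕ → A} {d : ℕ} {aa : ℕ → F}

theorem sum_sub_sub_smul_one_mem_midSpan (h1 : aa (d + 1) = 1) :
    ∑ i ∈ Finset.range (d + 1 + 1), aa i • (x 0 : A) ^ i - (x 0 : A) ^ (d + 1) - aa 0 • 1 ∈
      midSpan F x C T 0 (d + 1) := by
  rw [Finset.sum_range_succ, Finset.sum_range_succ', h1, one_smul, pow_zero, add_sub_cancel_right,
    add_sub_cancel_right]
  refine Submodule.sum_mem _ fun i hi => Submodule.smul_mem _ _ ?_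
  simpa using pow_mul_mul_mem_midSpan (F := F) (x := x) (C := C) (T := T) (k := 0)
    i.succ_pos (Nat.succ_lt_succ (Finset.mem_range.1 hi)) (one_mem _) (one_mem _)

theorem HeckeCliffordRel.exists_C_zero_mul_sum (h : HeckeCliffordRel ξ n x C T)
    (haa : ∀ i ≤ d, aa i = aa 0 * aa (d - i)) :
    ∃ p ∈ polyAlg F x 1, C 0 * ∑ i ∈ Finset.range (d + 1), aa i • (x 0 : A) ^ i =
      p * (∑ i ∈ Finset.range (d + 1), aa i • (x 0 : A) ^ i) * C 0 := by
  refine ⟨aa 0 • (↑(x 0)⁻¹ : A) ^ d, Subalgebra.smul_mem _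
    (pow_mem (x_inv_mem_polyAlg zero_lt_one) d) _, ?_⟩
  have inv_pow_mul_pow {i : ℕ} (hi : i ≤ d) :
      (↑(x 0)⁻¹ : A) ^ d * (x 0 : A) ^ (d - i) = (↑(x 0)⁻¹ : A) ^ i := by
    obtain ⟨j, rfl⟩ := Nat.exists_eq_add_of_le hi
    rw [Nat.add_sub_cancel_left, pow_add, mul_assoc, ← (Commute.refl _).units_inv_left.mul_pow,
      Units.inv_mul, one_pow, mul_one]
  conv_rhs => rw [← Finset.sum_range_reflect]
  rw [Finset.mul_sum, Finset.mul_sum, Finset.sum_mul]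
  refine Finset.sum_congr rfl fun i hi => ?_
  have hid : i ≤ d := Nat.lt_succ_iff.1 (Finset.mem_range.1 hi)
  rw [mul_smul_comm, ((h.C_x 0).pow_right i).eq, show d + 1 - 1 - i = d - i by omega,
    smul_mul_smul_comm, inv_pow_mul_pow hid, ← haa i hid, smul_mul_assoc]

theorem HeckeCliffordRel.prod_range_zpow_eq_mon (h : HeckeCliffordRel ξ n x C T) (γ : ℕ → ℤ)
    (k : ℕ) : ((List.range k).map fun i => (↑(x i ^ γ i) : A)).prod = mon x γ k := by
  induction k with
  | zero => rfl
  | succ k ih =>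
    have hc : Commute (mon x γ k) (↑(x k ^ γ k) : A) :=
      (h.x_commute_of_mem_polyAlg (mon_mem_polyAlg γ k)).symm.units_zpow_right (γ k)
    rw [List.range_succ, List.map_append, List.prod_append, ih, List.map_singleton,
      List.prod_singleton, mon, hc.eq]

theorem vec_eq_mon_mul_prod (φ : ℕ → A) (α : ℕ → ℤ) (Z : Finset ℕ) (k : ℕ) :
    vec x φ α Z k = mon x α k * (((List.range k).filter (· ∈ Z)).map φ).prod := by
  induction k with
  | zero => simp [vec, mon]
  | succ k ih =>
    rw [vec, ih, mon, List.range_succ, List.filter_append, List.map_append, List.prod_append]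
    by_cases hk : k ∈ Z <;> simp [hk, mul_assoc]

end Polynomial

/-! ### The algebra `H_n` -/

section NatIndexed

variable {F : Type} [Field F] {q : F} {n : ℕ}

/-- The units `X_i` of `H_n`, extended by `1` to all `i : ℕ`. -/
noncomputable def unitX (q : F) (n i : ℕ) : (H F q n)ˣ :=
  if h : i < n then ⟨X F q ⟨i, h⟩, Xinv F q ⟨i, h⟩, X_mul_Xinv _, Xinv_mul_X _⟩ else 1

/-- The elements `C_i` of `H_n`, extended by `0` to all `i : ℕ`. -/
noncomputable def natC (q : F) (n i : ℕ) : H F q n := if h : i < n then C F q ⟨i, h⟩ else 0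

/-- The elements `T_i` of `H_n`, extended by `0` to all `i : ℕ`. -/
noncomputable def natT (q : F) (n i : ℕ) : H F q n := if h : i < n - 1 then T F q ⟨i, h⟩ else 0

theorem unitX_val (i : Fin n) : (unitX q n i : H F q n) = X F q i := by
  simp [unitX]

theorem unitX_inv_val (i : Fin n) : (↑(unitX q n i)⁻¹ : H F q n) = Xinv F q i := by
  simp [unitX]

theorem natC_val (i : Fin n) : natC q n i = C F q i := by
  simp [natC]

theorem natT_val (i : Fin (n - 1)) : natT q n i = T F q i := by
  simp [natT]

theorem unitX_of_le {i : ℕ} (hi : n ≤ i) : unitX q n i = 1 := dif_neg (by omega)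

theorem natC_of_le {i : ℕ} (hi : n ≤ i) : natC q n i = 0 := dif_neg (by omega)

theorem natT_of_le {i : ℕ} (hi : n ≤ i + 1) : natT q n i = 0 := dif_neg (by omega)

theorem commute_unitX {a : H F q n} {i : ℕ}
    (ha : ∀ j : Fin n, (j : ℕ) = i → Commute a (X F q j)) : Commute a (unitX q n i) := by
  obtain hi | hi := lt_or_ge i n
  · lift i to Fin n using hi
    exact unitX_val (q := q) i ▸ ha i rfl
  · simp [unitX_of_le hi]

theorem commute_natC {a : H F q n} {i : ℕ}
    (ha : ∀ j : Fin n, (j : ℕ) = i → Commute a (C F q j)) : Commute a (natC q n i) := by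
  obtain hi | hi := lt_or_ge i n
  · lift i to Fin n using hi
    exact natC_val (q := q) i ▸ ha i rfl
  · simp [natC_of_le hi]

theorem commute_natT {a : H F q n} {i : ℕ}
    (ha : ∀ j : Fin (n - 1), (j : ℕ) = i → Commute a (T F q j)) : Commute a (natT q n i) := by
  obtain hi | hi := lt_or_ge i (n - 1)
  · lift i to Fin (n - 1) using hi
    exact natT_val (q := q) i ▸ ha i rfl
  · simp [natT_of_le (show n ≤ i + 1 by omega)]

theorem natC_mul_natC {i j : ℕ} (hij : i ≠ j) :
    natC q n i * natC q n j = -(natC q n j * natC q n i) := by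
  obtain hi | hi := lt_or_ge i n
  · obtain hj | hj := lt_or_ge j n
    · lift i to Fin n using hi
      lift j to Fin n using hj
      rw [natC_val, natC_val, C_mul_C fun e => hij (congrArg Fin.val e)]
    · simp [natC_of_le hj]
  · simp [natC_of_le hi]

theorem natC_semiconjBy_unitX (i : ℕ) :
    SemiconjBy (natC q n i) (unitX q n i) (↑(unitX q n i)⁻¹ : H F q n) := by
  obtain hi | hi := lt_or_ge i n
  · lift i to Fin n using hi
    rw [natC_val, unitX_val, unitX_inv_val]
    exact C_semiconjBy_X i
  · simp [natC_of_le hi]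

theorem natT_braid (i : ℕ) :
    natT q n i * natT q n (i + 1) * natT q n i =
      natT q n (i + 1) * natT q n i * natT q n (i + 1) := by
  obtain hi | hi := lt_or_ge (i + 1) (n - 1)
  · simpa only [← natT_val] using T_braid (q := q) (i := ⟨i, by omega⟩) (j := ⟨i + 1, hi⟩) rfl
  · simp [natT_of_le (show n ≤ i + 1 + 1 by omega)]

theorem natT_semiconjBy_natC (i : ℕ) :
    SemiconjBy (natT q n i) (natC q n i) (natC q n (i + 1)) := by
  obtain hlt | hle := lt_or_ge i (n - 1)
  · simpa only [← natT_val, ← natC_val, lo, hi] using T_semiconjBy_C (q := q) ⟨i, hlt⟩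
  · simp [natT_of_le (show n ≤ i + 1 by omega)]

theorem heckeCliffordRel (q : F) (n : ℕ) :
    HeckeCliffordRel (q - q⁻¹) n (unitX q n) (natC q n) (natT q n) where
  x_commute i j := commute_unitX fun j _ =>
    (commute_unitX fun i _ => X_commute_X j i).symm
  C_sq {i} hi := by
    lift i to Fin n using hi
    rw [natC_val, C_mul_self]
  C_anti := natC_mul_natC
  C_x := natC_semiconjBy_unitX
  C_commute_x hij := commute_unitX fun j hj =>
    (commute_natC fun i hi => (C_commute_X fun e => hij (by rw [← hi, ← hj, e])).symm).symm
  T_sq {i} hi := by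
    lift i to Fin (n - 1) using by omega
    rw [natT_val, T_mul_self]
  braid := natT_braid
  T_commute_T hij := commute_natT fun j hj =>
    (commute_natT fun i hi => (T_commute_T (by rwa [hi, hj])).symm).symm
  T_C := natT_semiconjBy_natC
  T_commute_C h0 h1 := commute_natC fun j hj => (commute_natT fun i hi => (T_commute_C
    (fun e => h0 (by rw [← hj, ← hi, e]; rfl)) fun e => h1 (by rw [← hj, ← hi, e]; rfl)).symm).symm
  T_commute_x h0 h1 := commute_unitX fun j hj => (commute_natT fun i hi => (T_commute_X
    (fun e => h0 (by rw [← hj, ← hi, e]; rfl)) fun e => h1 (by rw [← hj, ← hi, e]; rfl)).symm).symm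
  cross {i} hlt := by
    simpa only [← natT_val, ← natC_val, ← unitX_val, lo, hi] using
      T_cross (q := q) (⟨i, by omega⟩ : Fin (n - 1))

theorem finAlg_eq_Hfin : finAlg F (natC q n) (natT q n) n = Hfin F q n := by
  unfold finAlg Hfin
  congr 2
  · ext a
    constructor
    · rintro ⟨i, hi, rfl⟩
      lift i to Fin n using hi
      exact ⟨i, (natC_val i).symm⟩
    · rintro ⟨i, rfl⟩
      exact ⟨i, i.2, (natC_val i).symm⟩
  · ext a
    constructor
    · rintro ⟨i, hi, rfl⟩
      lift i to Fin (n - 1) using by omega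
      exact ⟨i, natT_val i⟩
    · rintro ⟨i, rfl⟩
      exact ⟨i, by omega, (natT_val i).symm⟩

theorem adjoin_range_mkAlgHom :
    Algebra.adjoin F (Set.range fun g => RingQuot.mkAlgHom F (Rel F q n) (FreeAlgebra.ι F g)) =
      ⊤ := by
  rw [Set.range_comp', ← AlgHom.map_adjoin, FreeAlgebra.adjoin_range_ι, Algebra.map_top,
    AlgHom.range_eq_top]
  exact RingQuot.mkAlgHom_surjective F _

theorem prodSpan_eq_top : prodSpan F (unitX q n) (natC q n) (natT q n) n = ⊤ := by
  refine eq_top_iff.2 fun a _ => ?_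
  rw [← mul_one a]
  refine mul_mem_of_mem_adjoin ?_ (adjoin_range_mkAlgHom (F := F) ▸ Algebra.mem_top)
    (poly_mem_prodSpan (one_mem _))
  rintro _ ⟨g, rfl⟩ y hy
  cases g with
  | X i =>
    have hX : X F q i ∈ polyAlg F (unitX q n) n := unitX_val (q := q) i ▸ x_mem_polyAlg i.2
    exact poly_mul_mem_prodSpan hX hy
  | Xinv i =>
    have hX : Xinv F q i ∈ polyAlg F (unitX q n) n :=
      unitX_inv_val (q := q) i ▸ x_inv_mem_polyAlg i.2
    exact poly_mul_mem_prodSpan hX hy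
  | C i =>
    have hC : C F q i ∈ finAlg F (natC q n) (natT q n) n := natC_val (q := q) i ▸ C_mem_finAlg i.2
    exact (heckeCliffordRel q n).fin_mul_mem_prodSpan le_rfl hC hy
  | T i =>
    have hT : T F q i ∈ finAlg F (natC q n) (natT q n) n :=
      natT_val (q := q) i ▸ T_mem_finAlg (by omega)
    exact (heckeCliffordRel q n).fin_mul_mem_prodSpan le_rfl hT hy

end NatIndexed

section CyclotomicIdeal

variable {F : Type} [Field F] {q : F} {n d : ℕ} {aa : ℕ → F}

/-- The elements `f_i` of `H_n`, extended to all `i : ℕ`. -/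
noncomputable abbrev natF (q : F) (n d : ℕ) (aa : ℕ → F) : ℕ → H F q n :=
  fSeq (q - q⁻¹) (natC q n) (natT q n) (felem F q n d aa)

theorem natF_eq_fseq {k : ℕ} (hk : k < n) : natF q n d aa k = fseq F q n d aa k := by
  induction k with
  | zero => rfl
  | succ k ih =>
    have hk' : k < n - 1 := by omega
    change twistT (q - q⁻¹) (natC q n) (natT q n) k * natF q n d aa k * natT q n k = _
    rw [ih (by omega), fseq, dif_pos hk', twistT]
    simp [natC, natT, hk, hk', lo, hi, show k < n by omega]

theorem felem_eq_sum (hn : 0 < n) : felem F q n d aa =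
    ∑ i ∈ Finset.range (d + 1), aa i • (unitX q n 0 : H F q n) ^ i := by
  simp [felem, hn, unitX]

theorem commute_felem {a : H F q n} (ha : Commute a (unitX q n 0)) :
    Commute a (felem F q n d aa) := by
  obtain rfl | hn := Nat.eq_zero_or_pos n
  · simp [felem]
  · rw [felem_eq_sum hn]
    exact Commute.sum_right _ _ _ fun i _ => (ha.pow_right i).smul_right _

theorem natC_commute_felem (j : ℕ) (hj : 0 < j) : Commute (natC q n j) (felem F q n d aa) :=
  commute_felem ((heckeCliffordRel q n).C_commute_x hj.ne')

theorem natT_commute_felem (j : ℕ) (hj : 0 < j) : Commute (natT q n j) (felem F q n d aa) :=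
  commute_felem ((heckeCliffordRel q n).T_commute_x hj.ne (by omega))

theorem felem_commute_unitX (i : ℕ) : Commute (felem F q n d aa) (unitX q n i) :=
  (commute_felem ((heckeCliffordRel q n).x_commute i 0)).symm

theorem GoodPoly.exists_natC_zero_mul_felem (hf : GoodPoly F d aa) :
    ∃ p ∈ polyAlg F (unitX q n) 1,
      natC q n 0 * felem F q n d aa = p * felem F q n d aa * natC q n 0 := by
  obtain rfl | hn := Nat.eq_zero_or_pos n
  · exact ⟨0, zero_mem _, by simp [felem]⟩
  · rw [felem_eq_sum hn]
    exact (heckeCliffordRel q n).exists_C_zero_mul_sum hf.2.2.1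

theorem GoodPoly.coeff_zero_ne_zero (hf : GoodPoly F d aa) : aa 0 ≠ 0 := fun h0 => by
  simpa [h0, hf.2.1] using hf.2.2.1 d le_rfl

theorem GoodPoly.exists_isUnit_natF_sub_mem_midSpan (hf : GoodPoly F d aa) (k : ℕ) (hk : k < n) :
    ∃ u : finAlg F (natC q n) (natT q n) (k + 1), IsUnit u ∧
      natF q n d aa k - (unitX q n k : H F q n) ^ d - aa 0 • (u : H F q n) ∈
        midSpan F (unitX q n) (natC q n) (natT q n) k d := by
  obtain ⟨d, rfl⟩ := Nat.exists_eq_add_of_le' hf.1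
  refine (heckeCliffordRel q n).exists_isUnit_fSeq_sub_mem_midSpan ?_ hk
  rw [felem_eq_sum (by omega)]
  exact sum_sub_sub_smul_one_mem_midSpan hf.2.1

theorem XZ_eq_zpow (i : Fin n) (a : ℤ) : XZ F q i a = ↑(unitX q n i ^ a) := by
  unfold XZ
  split_ifs with ha
  · lift a to ℕ using ha
    simp [unitX_val]
  · obtain ⟨b, rfl⟩ : ∃ b : ℕ, a = -b := ⟨(-a).toNat, by omega⟩
    rw [zpow_neg, zpow_natCast, ← inv_pow, Units.val_pow_eq_pow_val, unitX_inv_val]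
    simp

/-- The extension of an exponent by zero to `ℕ`. -/
def natExp (α : Fin n → ℤ) (i : ℕ) : ℤ := if h : i < n then α ⟨i, h⟩ else 0

theorem natExp_val (α : Fin n → ℤ) (i : Fin n) : natExp α i = α i := by
  simp [natExp]

theorem Xmon_eq_mon (α : Fin n → ℤ) : Xmon F q α = mon (unitX q n) (natExp α) n := by
  rw [← (heckeCliffordRel q n).prod_range_zpow_eq_mon, ← List.map_coe_finRange_eq_range,
    List.map_map, Xmon]
  congr 1
  refine List.map_congr_left fun i _ => ?_
  simp [XZ_eq_zpow, natExp_val]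

theorem coeffMap_mon_mul (δ : ℕ → ℤ) (b : H F q n)
    (hb : b ∈ finAlg F (natC q n) (natT q n) n) :
    coeffMap F q n (mon (unitX q n) δ n * b) = .single (fun i => δ i) b := by
  have hδ : mon (unitX q n) δ n = Xmon F q fun i : Fin n => δ i := by
    rw [Xmon_eq_mon]
    exact mon_congr fun i hi => by simp [natExp, hi]
  rw [hδ, coeffMap_Xmon_mul _ (finAlg_eq_Hfin (F := F) (q := q) ▸ hb)]

-- In `fZ` it is the list `Z.sort` that is coerced to `List ℕ`, through the list monad.
theorem fZ_eq_prod_sort (Z : Finset (Fin n)) : fZ F q n d aa Z =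
    ((Z.sort (· ≤ ·)).map fun z : Fin n => fseq F q n d aa (z : ℕ)).prod := by
  unfold fZ
  congr 1
  simp [← List.map_eq_flatMap, Function.comp_def]

theorem sort_eq_filter_finRange (Z : Finset (Fin n)) :
    Z.sort (· ≤ ·) = (List.finRange n).filter (· ∈ Z) := by
  have hZ : Z = ((List.finRange n).filter (· ∈ Z)).toFinset := by ext; simp
  conv_lhs => rw [hZ]
  exact (List.toFinset_sort _ ((List.nodup_finRange n).filter _)).2
    ((List.pairwise_le_finRange n).filter _)

theorem fZ_eq_prod_filter_range (Z : Finset (Fin n)) : fZ F q n d aa Z =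
    (((List.range n).filter (· ∈ Z.map Fin.valEmbedding)).map (natF q n d aa)).prod := by
  have hfilter : (List.finRange n).filter
        ((fun i : ℕ => decide (i ∈ Z.map Fin.valEmbedding)) ∘ Fin.val) =
      (List.finRange n).filter (· ∈ Z) :=
    List.filter_congr fun i _ => by simp [← Fin.ext_iff]
  rw [fZ_eq_prod_sort, sort_eq_filter_finRange, ← List.map_coe_finRange_eq_range, List.filter_map,
    List.map_map, hfilter]
  congr 1
  exact List.map_congr_left fun i _ => (natF_eq_fseq i.2).symm

theorem Xmon_mul_fZ (α : Fin n → ℤ) (Z : Finset (Fin n)) :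
    Xmon F q α * fZ F q n d aa Z =
      vec (unitX q n) (natF q n d aa) (natExp α) (Z.map Fin.valEmbedding) n := by
  rw [Xmon_eq_mon, fZ_eq_prod_filter_range, vec_eq_mon_mul_prod]

theorem mul_mem_Ifideal (u : H F q n) {a : H F q n} (ha : a ∈ Ifideal F q n d aa) :
    u * a ∈ Ifideal F q n d aa := by
  refine mul_mem_of_mem_span ?_ ha
  rintro _ ⟨v, w, rfl⟩
  exact Submodule.subset_span ⟨u * v, w, by simp only [mul_assoc]⟩

theorem mul_mem_Ifideal_right (u : H F q n) {a : H F q n} (ha : a ∈ Ifideal F q n d aa) :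
    a * u ∈ Ifideal F q n d aa := by
  refine mul_mem_of_mem_span_right ?_ ha
  rintro _ ⟨v, w, rfl⟩
  exact Submodule.subset_span ⟨v, w * u, by simp only [mul_assoc]⟩

theorem fseq_mem_Ifideal (k : ℕ) : fseq F q n d aa k ∈ Ifideal F q n d aa := by
  induction k with
  | zero => exact Submodule.subset_span ⟨1, 1, by simp [fseq]⟩
  | succ k ih =>
    rw [fseq]
    split_ifs with hk
    · exact mul_mem_Ifideal_right _ (mul_mem_Ifideal _ ih)
    · exact zero_mem _

theorem fZ_mem_Ifideal {Z : Finset (Fin n)} (hZ : Z ≠ ∅) :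
    fZ F q n d aa Z ∈ Ifideal F q n d aa := by
  rw [fZ_eq_prod_sort]
  rcases hs : Z.sort (· ≤ ·) with _ | ⟨z, l⟩
  · refine absurd ?_ hZ
    rw [← Finset.sort_toFinset (s := Z) (r := (· ≤ ·)), hs, List.toFinset_nil]
  · rw [List.map_cons, List.prod_cons]
    exact mul_mem_Ifideal_right _ (fseq_mem_Ifideal _)

theorem GoodPoly.Ifideal_le_vecSpan (hf : GoodPoly F d aa) : Ifideal F q n d aa ≤
    vecSpan F (unitX q n) (natC q n) (natT q n) (natF q n d aa) d True n := by
  refine Submodule.span_le.2 ?_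
  rintro _ ⟨u, v, rfl⟩
  obtain rfl | hn := Nat.eq_zero_or_pos n
  · simp [felem]
  have hmem : u * felem F q n d aa * v ∈
      fSpan (q - q⁻¹) (unitX q n) (natC q n) (natT q n) (felem F q n d aa) n n :=
    (heckeCliffordRel q n).mul_mul_mem_fSpan natC_commute_felem natT_commute_felem
      hf.exists_natC_zero_mul_felem felem_commute_unitX le_rfl hn
      (prodSpan_eq_top (F := F) ▸ Submodule.mem_top) (prodSpan_eq_top (F := F) ▸ Submodule.mem_top)
  exact (heckeCliffordRel q n).fSpan_le_vecSpan felem_commute_unitX natC_commute_felem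
    natT_commute_felem hf.1 hf.coeff_zero_ne_zero.isUnit hf.exists_isUnit_natF_sub_mem_midSpan
    hf.exists_natC_zero_mul_felem le_rfl hmem

/-- The map sending a family of coefficients in `H^fn_n` to the corresponding combination of the
elements `X^α f_Z`. -/
noncomputable def basisMap (q : F) (n d : ℕ) (aa : ℕ → F) :
    (PiIdxPlus n d →₀ ↥(Hfin F q n)) →ₗ[F] H F q n :=
  Finsupp.lsum F fun p =>
    LinearMap.mulLeft F (Xmon F q p.1.1 * fZ F q n d aa p.1.2) ∘ₗ (Hfin F q n).val.toLinearMap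

theorem basisMap_apply (c : PiIdxPlus n d →₀ ↥(Hfin F q n)) :
    basisMap q n d aa c =
      c.sum fun p b => Xmon F q p.1.1 * fZ F q n d aa p.1.2 * (b : H F q n) := rfl

theorem vecSpan_le_range_basisMap :
    vecSpan F (unitX q n) (natC q n) (natT q n) (natF q n d aa) d True n ≤
      LinearMap.range (basisMap q n d aa) := by
  refine Submodule.span_le.2 ?_
  rintro _ ⟨α, Z, hα, hZ, b, hb, rfl⟩
  obtain ⟨i, hi, hiZ⟩ := hZ trivial
  rw [finAlg_eq_Hfin] at hb
  let Z' : Finset (Fin n) := Finset.univ.filter fun i => (i : ℕ) ∈ Z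
  let p : PiIdxPlus n d := ⟨(fun i => α i, Z'), fun i hi => hα i i.2 (by simpa [Z'] using hi),
    Finset.ne_empty_of_mem (a := ⟨i, hi⟩) (by simpa [Z'] using hiZ)⟩
  refine ⟨Finsupp.single p ⟨b, hb⟩, ?_⟩
  rw [basisMap_apply, Finsupp.sum_single_index (by simp), Xmon_mul_fZ]
  congr 1
  refine vec_congr (fun i hi => by simp [p, natExp, hi]) fun i hi => ?_
  simp only [p, Z', Finset.mem_map, Finset.mem_filter, Finset.mem_univ, true_and,
    Fin.valEmbedding_apply]
  exact ⟨by rintro ⟨j, hj, rfl⟩; exact hj, fun hiZ => ⟨⟨i, hi⟩, hiZ, rfl⟩⟩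

theorem GoodPoly.basisMap_injective (hf : GoodPoly F d aa) :
    Function.Injective (basisMap q n d aa) := by
  have mem_map_val (Z : Finset (Fin n)) (i : Fin n) :
      (i : ℕ) ∈ Z.map Fin.valEmbedding ↔ i ∈ Z := by simp [← Fin.ext_iff]
  have hinj :=
    (heckeCliffordRel q n).sum_vec_mul_injective hf.1 hf.coeff_zero_ne_zero.isUnit
      hf.exists_isUnit_natF_sub_mem_midSpan coeffMap_mon_mul
      (α := fun p : PiIdxPlus n d => natExp p.1.1) (Z := fun p => p.1.2.map Fin.valEmbedding)
      (fun p i hi hiZ => by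
        lift i to Fin n using hi
        rw [mem_map_val] at hiZ
        exact (natExp_val p.1.1 i).symm ▸ p.2.1 i hiZ)
      (fun p r hpr => by
        refine Subtype.ext (Prod.ext (funext fun i => ?_) (Finset.ext fun i => ?_))
        · simpa [natExp_val] using (hpr i i.2).1
        · simpa only [mem_map_val] using (hpr i i.2).2)
  rw [finAlg_eq_Hfin] at hinj
  refine fun c c' hcc' => hinj ?_
  simpa only [basisMap_apply, Xmon_mul_fZ] using hcc'

end CyclotomicIdeal

theorem cyclotomic_ideal_basis_general
    {F : Type} [Field F] {q : F} (_hq : q ≠ 0) {n d : ℕ} {aa : ℕ → F} (hf : GoodPoly F d aa) :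
    (∀ (p : PiIdxPlus n d) (b : ↥(Hfin F q n)),
      Xmon F q p.1.1 * fZ F q n d aa p.1.2 * (b : H F q n) ∈ Ifideal F q n d aa) ∧
    ∀ h ∈ Ifideal F q n d aa,
      ∃! c : PiIdxPlus n d →₀ ↥(Hfin F q n),
        h = c.sum fun p b => Xmon F q p.1.1 * fZ F q n d aa p.1.2 * (b : H F q n) := by
  refine ⟨fun p b => mul_mem_Ifideal_right _ (mul_mem_Ifideal _ (fZ_mem_Ifideal p.2.2)),
    fun h hh => ?_⟩
  obtain ⟨c, rfl⟩ := vecSpan_le_range_basisMap (hf.Ifideal_le_vecSpan hh)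
  exact ⟨c, basisMap_apply c, fun c' hc' => hf.basisMap_injective hc'.symm⟩

/-- **Basis of the cyclotomic ideal** (Lemma `ke` of Brundan–Kleshchev): the two-sided
ideal `I_f` of `H_n` generated by `f` decomposes as
`I_f = ⊕_{(α,Z) ∈ Π_n^+} X^α f_Z H^fn_n`; i.e. `{X^α f_Z : (α,Z) ∈ Π_n^+}` is a
basis of `I_f` as a free right `H^fn_n`-module. -/
theorem cyclotomic_ideal_basis
    (F : Type) [Field F] [IsAlgClosed F] (h2 : (2 : F) ≠ 0)
    (q : F) (hq : GoodParam F q) (n : ℕ)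
    (d : ℕ) (aa : ℕ → F) (hf : GoodPoly F d aa) :
    (∀ (p : PiIdxPlus n d) (b : ↥(Hfin F q n)),
      Xmon F q p.1.1 * fZ F q n d aa p.1.2 * (b : H F q n) ∈ Ifideal F q n d aa) ∧
    ∀ h ∈ Ifideal F q n d aa,
      ∃! c : PiIdxPlus n d →₀ ↥(Hfin F q n),
        h = c.sum fun p b => Xmon F q p.1.1 * fZ F q n d aa p.1.2 * (b : H F q n) :=
  cyclotomic_ideal_basis_general hq.1 hf

end HC
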